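/- Let γ ∈ (1/2, 1), u ∈ (0,1), β ≥ 2. Consider the discursive voter model with temperature θ on the Simplified Norros–Reittu graph G_N, started from the initial law μ_u in which each vertex independently has opinion 1 with probability u. Then: (i) for θ ∈ (−∞, 1/γ], E^θ_{μ_u}(τ_cons | G_N) = Θ_P^{log N}(N); (ii) for θ ∈ (1/γ, 2], E^θ_{μ_u}(τ_cons | G_N) = Θ_P^{log N}(N^{2−γθ}). Here f = Θ_P^{log N}(g) means there exists C > 0 such that with probability tending to 1 over G_N, g·log^{−C} N ≤ f ≤ g·log^C N. -/

import Mathlib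

open scoped Classical
open Filter

noncomputable section

/-- Edge probability of the Simplified Norros–Reittu graph between (1-based) vertices
`i` and `j` of `[N]`: `1 - exp(-β N^(2γ-1) i^(-γ) j^(-γ))`. -/
def snrEdgeProb (β γ : ℝ) (N i j : ℕ) : ℝ :=
  1 - Real.exp (-(β * (N : ℝ) ^ (2 * γ - 1) * (i : ℝ) ^ (-γ) * (j : ℝ) ^ (-γ)))

/-- Probability weight of a given simple graph on `[N]` when each edge `{i,j}` (`i ≠ j`)
is present independently with probability `p i j` (indices 1-based). -/
def graphWeight (p : ℕ → ℕ → ℝ) (N : ℕ) (G : SimpleGraph (Fin N)) : ℝ :=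
  ∏ i : Fin N, ∏ j : Fin N,
    if i < j then
      (if G.Adj i j then p ((i : ℕ) + 1) ((j : ℕ) + 1)
       else 1 - p ((i : ℕ) + 1) ((j : ℕ) + 1))
    else 1

/-- Probability that the random graph with independent edge probabilities `p` satisfies the
property `A`. -/
def graphProb (p : ℕ → ℕ → ℝ) (N : ℕ) (A : SimpleGraph (Fin N) → Prop) : ℝ :=
  ∑ G : SimpleGraph (Fin N), if A G then graphWeight p N G else 0

/-- Probability that the Simplified Norros–Reittu graph `G_N` satisfies the property `A`. -/
def snrProb (β γ : ℝ) (N : ℕ) (A : SimpleGraph (Fin N) → Prop) : ℝ :=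
  graphProb (snrEdgeProb β γ N) N A

/-- Generator matrix `Q` of the discursive voter model with temperature `θ` on a graph `G`,
acting on the state space `{0,1}^N`:
`(ℒ f)(η) = Σ_η' Q η η' f(η')` where
`ℒ f(η) = Σ_i d(i)^θ Σ_{j∼i} (1/d(i)) (½ f(η^{j←i}) + ½ f(η^{i←j}) − f(η))`. -/
def voterQ {N : ℕ} (G : SimpleGraph (Fin N)) (θ : ℝ) :
    Matrix (Fin N → Bool) (Fin N → Bool) ℝ :=
  Matrix.of fun η η' =>
    ∑ i : Fin N, (G.degree i : ℝ) ^ θ *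
      ∑ j ∈ G.neighborFinset i, ((G.degree i : ℝ))⁻¹ *
        ((1 / 2) * (if Function.update η j (η i) = η' then 1 else 0)
          + (1 / 2) * (if Function.update η i (η j) = η' then 1 else 0)
          - (if η = η' then 1 else 0))

/-- The set of absorbing configurations: those constant on each connected component of `G`. -/
def consensusStates {N : ℕ} (G : SimpleGraph (Fin N)) : Set (Fin N → Bool) :=
  {η | ∀ i j : Fin N, G.Reachable i j → η i = η j}

/-- The initial law `μ_u` in which each vertex independently has opinion 1 with
probability `u`. -/
def muU {N : ℕ} (u : ℝ) (η : Fin N → Bool) : ℝ :=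
  ∏ i : Fin N, if η i then u else 1 - u

/-- `P_{μ_u}(η_t ∈ A)`: the probability that the discursive voter model with temperature `θ`
on `G`, started from `μ_u`, is in an absorbing (componentwise constant) state at time `t`;
the law at time `t` is obtained from `μ_u` via the semigroup `exp(tℒ)`. -/
def probConsensusAt {N : ℕ} (G : SimpleGraph (Fin N)) (θ u t : ℝ) : ℝ :=
  ∑ η : Fin N → Bool, ∑ η' : Fin N → Bool,
    muU u η * (NormedSpace.exp (t • voterQ G θ)) η η' *
      (if η' ∈ consensusStates G then 1 else 0)

/-- The expected consensus time `E^θ_{μ_u}(τ_cons | G)` of the discursive voter model with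
temperature `θ` on the realized graph `G`, from initial law `μ_u`:
`E_{μ_u}(τ_cons) = ∫_0^∞ (1 − P_{μ_u}(η_t ∈ A)) dt`. -/
def expectedConsensusTime {N : ℕ} (G : SimpleGraph (Fin N)) (θ u : ℝ) : ℝ :=
  ∫ t in Set.Ioi (0 : ℝ), (1 - probConsensusAt G θ u t)


section MatrixSemigroup

variable {n : Type*} [Fintype n] [DecidableEq n]

attribute [local instance] Matrix.linftyOpNormedRing Matrix.linftyOpNormedAlgebra

/-- expectation of `g` at time `t` for the semigroup generated by `Q`, started from `μ`. -/
def sgEx (Q : Matrix n n ℝ) (μ : n → ℝ) (t : ℝ) (g : n → ℝ) : ℝ :=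
  ∑ i, ∑ j, μ i * (NormedSpace.exp (t • Q)) i j * g j

lemma hasDerivAt_exp_entry (Q : Matrix n n ℝ) (t : ℝ) (i j : n) :
    HasDerivAt (fun s : ℝ => (NormedSpace.exp (s • Q)) i j)
      ((NormedSpace.exp (t • Q) * Q) i j) t := by
  have h := hasDerivAt_exp_smul_const (𝕂 := ℝ) (𝔸 := Matrix n n ℝ) Q t
  let φ : Matrix n n ℝ →ₗ[ℝ] ℝ :=
    { toFun := fun M => M i j, map_add' := fun _ _ => rfl, map_smul' := fun _ _ => rfl }
  exact (φ.toContinuousLinearMap.hasFDerivAt.comp_hasDerivAt t h)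

lemma hasDerivAt_sgEx (Q : Matrix n n ℝ) (μ : n → ℝ) (g : n → ℝ) (t : ℝ) :
    HasDerivAt (fun s => sgEx Q μ s g) (sgEx Q μ t (Q.mulVec g)) t := by
  have h : HasDerivAt (fun s => sgEx Q μ s g)
      (∑ i, ∑ j, μ i * (NormedSpace.exp (t • Q) * Q) i j * g j) t := by
    unfold sgEx
    refine HasDerivAt.fun_sum fun i _ => HasDerivAt.fun_sum fun j _ => ?_
    exact ((hasDerivAt_exp_entry Q t i j).const_mul _).mul_const _
  convert h using 1
  unfold sgEx
  refine Finset.sum_congr rfl fun i _ => ?_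
  simp only [Matrix.mul_apply, Matrix.mulVec, dotProduct, Finset.mul_sum, Finset.sum_mul]
  rw [Finset.sum_comm]
  refine Finset.sum_congr rfl fun j _ => Finset.sum_congr rfl fun k _ => ?_
  ring

lemma sgEx_zero (Q : Matrix n n ℝ) (μ : n → ℝ) (g : n → ℝ) :
    sgEx Q μ 0 g = ∑ i, μ i * g i := by
  unfold sgEx
  simp [NormedSpace.exp_zero, Matrix.one_apply]

lemma sgEx_linear_sum {ι : Type*} (s : Finset ι) (Q : Matrix n n ℝ) (μ : n → ℝ) (t : ℝ)
    (g : ι → n → ℝ) :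
    sgEx Q μ t (fun x => ∑ k ∈ s, g k x) = ∑ k ∈ s, sgEx Q μ t (g k) := by
  unfold sgEx
  simp only [Finset.mul_sum]
  rw [Finset.sum_comm (s := s)]
  exact Finset.sum_congr rfl fun i _ => Finset.sum_comm

lemma sgEx_smul (Q : Matrix n n ℝ) (μ : n → ℝ) (t c : ℝ) (g : n → ℝ) :
    sgEx Q μ t (fun x => c * g x) = c * sgEx Q μ t g := by
  unfold sgEx
  simp only [Finset.mul_sum]
  refine Finset.sum_congr rfl fun i _ => Finset.sum_congr rfl fun k _ => ?_
  ring

lemma sgEx_sub (Q : Matrix n n ℝ) (μ : n → ℝ) (t : ℝ) (g h : n → ℝ) :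
    sgEx Q μ t (fun x => g x - h x) = sgEx Q μ t g - sgEx Q μ t h := by
  unfold sgEx
  rw [← Finset.sum_sub_distrib]
  refine Finset.sum_congr rfl fun i _ => ?_
  rw [← Finset.sum_sub_distrib]
  refine Finset.sum_congr rfl fun k _ => ?_
  ring

lemma exp_nonneg_of_nonneg (M : Matrix n n ℝ) (hM : ∀ i j, 0 ≤ M i j) (i j : n) :
    0 ≤ (NormedSpace.exp M) i j := by
  have hpow : ∀ k : ℕ, ∀ i j, 0 ≤ (M ^ k) i j := by
    intro k
    induction k with
    | zero =>
      intro i j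
      rw [pow_zero, Matrix.one_apply]
      split_ifs <;> norm_num
    | succ k ih =>
      intro i j
      rw [pow_succ, Matrix.mul_apply]
      exact Finset.sum_nonneg fun l _ => mul_nonneg (ih i l) (hM l j)
  have hs := NormedSpace.exp_series_hasSum_exp' (𝕂 := ℝ) (𝔸 := Matrix n n ℝ) M
  let φ : Matrix n n ℝ →ₗ[ℝ] ℝ :=
    { toFun := fun M => M i j, map_add' := fun _ _ => rfl, map_smul' := fun _ _ => rfl }
  have h2 := hs.mapL φ.toContinuousLinearMap
  refine h2.nonneg fun k => ?_
  change 0 ≤ ((k.factorial : ℝ)⁻¹ • M ^ k) i j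
  rw [Matrix.smul_apply]
  exact smul_nonneg (by positivity) (hpow k i j)

lemma exp_generator_nonneg (Q : Matrix n n ℝ) (hQ : ∀ i j, i ≠ j → 0 ≤ Q i j) (t : ℝ)
    (ht : 0 ≤ t) (i j : n) : 0 ≤ (NormedSpace.exp (t • Q)) i j := by
  set c : ℝ := ∑ k, |Q k k| with hc
  have hcomm : Commute (t • (Q + c • (1 : Matrix n n ℝ))) ((-(t * c)) • (1 : Matrix n n ℝ)) := by
    apply Commute.smul_right
    exact Commute.one_right _
  have h1 : t • Q = t • (Q + c • (1 : Matrix n n ℝ)) + (-(t * c)) • (1 : Matrix n n ℝ) := by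
    rw [smul_add, smul_smul, add_assoc, ← add_smul]
    simp
  rw [h1, Matrix.exp_add_of_commute _ _ hcomm]
  have h2 : NormedSpace.exp ((-(t * c)) • (1 : Matrix n n ℝ))
      = Real.exp (-(t * c)) • (1 : Matrix n n ℝ) := by
    have := Matrix.exp_diagonal (𝔸 := ℝ) (m := n) (fun _ => -(t * c))
    rw [Matrix.smul_one_eq_diagonal, this, Matrix.smul_one_eq_diagonal]
    congr 1
    funext x
    rw [Pi.coe_exp, Real.exp_eq_exp_ℝ]
  rw [h2, Matrix.mul_smul, mul_one, Matrix.smul_apply]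
  refine smul_nonneg (Real.exp_pos _).le (exp_nonneg_of_nonneg _ ?_ i j)
  intro i j
  rw [Matrix.smul_apply]
  refine smul_nonneg ht ?_
  rw [Matrix.add_apply, Matrix.smul_apply, Matrix.one_apply]
  split_ifs with h
  · subst h
    have : |Q i i| ≤ c := by
      rw [hc]
      exact Finset.single_le_sum (f := fun k => |Q k k|) (fun k _ => abs_nonneg _)
        (Finset.mem_univ i)
    have := neg_abs_le (Q i i)
    simp only [smul_eq_mul, mul_one]
    linarith
  · simpa using hQ i j h

lemma sgEx_mono (Q : Matrix n n ℝ) (hQ : ∀ i j, i ≠ j → 0 ≤ Q i j) (μ : n → ℝ)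
    (hμ : ∀ i, 0 ≤ μ i) (t : ℝ) (ht : 0 ≤ t) (g h : n → ℝ) (hgh : ∀ x, g x ≤ h x) :
    sgEx Q μ t g ≤ sgEx Q μ t h := by
  unfold sgEx
  refine Finset.sum_le_sum fun i _ => Finset.sum_le_sum fun j _ => ?_
  exact mul_le_mul_of_nonneg_left (hgh j)
    (mul_nonneg (hμ i) (exp_generator_nonneg Q hQ t ht i j))

lemma sgEx_const (Q : Matrix n n ℝ) (hrow : ∀ i, ∑ j, Q i j = 0) (μ : n → ℝ)
    (hμ : ∑ i, μ i = 1) (t : ℝ) : sgEx Q μ t (fun _ => 1) = 1 := by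
  have hd : ∀ s, HasDerivAt (fun s => sgEx Q μ s (fun _ => 1)) 0 s := by
    intro s
    have := hasDerivAt_sgEx Q μ (fun _ => 1) s
    convert this using 1
    unfold sgEx
    simp [Matrix.mulVec, dotProduct, hrow]
  have := is_const_of_deriv_eq_zero (f := fun s => sgEx Q μ s (fun _ => 1))
    (fun s => (hd s).differentiableAt) (fun s => (hd s).deriv) t 0
  rw [this, sgEx_zero]
  simpa using hμ

end MatrixSemigroup

section Voter

variable {N : ℕ} (G : SimpleGraph (Fin N)) (θ u : ℝ)

/-- The rate attached to each oriented edge out of `i`. -/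
def rt (i : Fin N) : ℝ := (G.degree i : ℝ) ^ θ * ((G.degree i : ℝ))⁻¹

/-- The symmetrised edge conductance. -/
def cw (i j : Fin N) : ℝ := if G.Adj i j then (rt G θ i + rt G θ j) / 2 else 0

lemma rt_nonneg (i : Fin N) : 0 ≤ rt G θ i := by
  unfold rt
  positivity

lemma cw_nonneg (i j : Fin N) : 0 ≤ cw G θ i j := by
  unfold cw
  have := rt_nonneg G θ i
  have := rt_nonneg G θ j
  split_ifs <;> positivity

lemma cw_symm (i j : Fin N) : cw G θ i j = cw G θ j i := by
  unfold cw
  by_cases h : G.Adj i j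
  · rw [if_pos h, if_pos h.symm, add_comm]
  · rw [if_neg h, if_neg (fun h' => h h'.symm)]

/-- discordance indicator -/
def disc (x y : Fin N) (η : Fin N → Bool) : ℝ := if η x = η y then 0 else 1

lemma disc_self (x : Fin N) (η : Fin N → Bool) : disc x x η = 0 := by simp [disc]

lemma disc_comm (x y : Fin N) (η : Fin N → Bool) : disc x y η = disc y x η := by
  simp [disc, eq_comm]

lemma disc_nonneg (x y : Fin N) (η : Fin N → Bool) : 0 ≤ disc x y η := by
  unfold disc; split_ifs <;> norm_num

lemma disc_le_one (x y : Fin N) (η : Fin N → Bool) : disc x y η ≤ 1 := by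
  unfold disc; split_ifs <;> norm_num

lemma voterQ_mulVec (g : (Fin N → Bool) → ℝ) (η : Fin N → Bool) :
    (voterQ G θ).mulVec g η =
      ∑ i, ∑ j, cw G θ i j * (g (Function.update η i (η j)) - g η) := by
  have h1 : (voterQ G θ).mulVec g η = ∑ i, ∑ j ∈ G.neighborFinset i, rt G θ i *
      ((1 / 2) * g (Function.update η j (η i)) + (1 / 2) * g (Function.update η i (η j))
        - g η) := by
    unfold voterQ Matrix.mulVec dotProduct
    simp only [Matrix.of_apply, Finset.sum_mul]
    rw [Finset.sum_comm]
    refine Finset.sum_congr rfl fun i _ => ?_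
    simp only [Finset.mul_sum, Finset.sum_mul]
    rw [Finset.sum_comm]
    refine Finset.sum_congr rfl fun j _ => ?_
    have : ∀ η' : Fin N → Bool, (G.degree i : ℝ) ^ θ * (((G.degree i : ℝ))⁻¹ *
        ((1 / 2) * (if Function.update η j (η i) = η' then 1 else 0)
          + (1 / 2) * (if Function.update η i (η j) = η' then 1 else 0)
          - (if η = η' then 1 else 0))) * g η' =
        rt G θ i * (1 / 2) * (if Function.update η j (η i) = η' then g η' else 0)
        + rt G θ i * (1 / 2) * (if Function.update η i (η j) = η' then g η' else 0)
        - rt G θ i * (if η = η' then g η' else 0) := by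
      intro η'
      unfold rt
      split_ifs <;> ring
    simp only [this, Finset.sum_sub_distrib, Finset.sum_add_distrib, ← Finset.mul_sum,
      Finset.sum_ite_eq, Finset.mem_univ, if_true]
    ring
  rw [h1]
  have h2 : ∀ i, ∑ j ∈ G.neighborFinset i, rt G θ i *
      ((1 / 2) * g (Function.update η j (η i)) + (1 / 2) * g (Function.update η i (η j))
        - g η) = ∑ j, (if G.Adj i j then rt G θ i / 2 * (g (Function.update η j (η i)) - g η)
          else 0) + ∑ j, (if G.Adj i j then rt G θ i / 2 * (g (Function.update η i (η j)) - g η)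
          else 0) := by
    intro i
    rw [← Finset.sum_add_distrib, SimpleGraph.neighborFinset_eq_filter, Finset.sum_filter]
    refine Finset.sum_congr rfl fun j _ => ?_
    split_ifs <;> ring
  simp only [h2, Finset.sum_add_distrib]
  rw [Finset.sum_comm]
  rw [← Finset.sum_add_distrib]
  refine Finset.sum_congr rfl fun i _ => ?_
  rw [← Finset.sum_add_distrib]
  refine Finset.sum_congr rfl fun j _ => ?_
  unfold cw
  by_cases h : G.Adj i j
  · rw [if_pos h, if_pos h.symm, if_pos h]; ring
  · rw [if_neg h, if_neg (fun h' => h h'.symm), if_neg h]; ring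

lemma voterQ_offdiag (η η' : Fin N → Bool) (h : η ≠ η') : 0 ≤ voterQ G θ η η' := by
  unfold voterQ
  simp only [Matrix.of_apply]
  refine Finset.sum_nonneg fun i _ => mul_nonneg (by positivity)
    (Finset.sum_nonneg fun j _ => mul_nonneg (by positivity) ?_)
  rw [if_neg h]
  split_ifs <;> norm_num

lemma voterQ_row (η : Fin N → Bool) : ∑ η', voterQ G θ η η' = 0 := by
  have := voterQ_mulVec G θ (fun _ => 1) η
  simpa [Matrix.mulVec, dotProduct] using this

lemma voterQ_disc (x y : Fin N) (hxy : x ≠ y) (η : Fin N → Bool) :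
    (voterQ G θ).mulVec (disc x y) η =
      ∑ j, cw G θ x j * (disc j y η - disc x y η)
        + ∑ j, cw G θ y j * (disc x j η - disc x y η) := by
  rw [voterQ_mulVec]
  have h : ∀ i, ∑ j, cw G θ i j * (disc x y (Function.update η i (η j)) - disc x y η) =
      (if i = x then ∑ j, cw G θ x j * (disc j y η - disc x y η) else 0) +
      (if i = y then ∑ j, cw G θ y j * (disc x j η - disc x y η) else 0) := by
    intro i
    by_cases hx : i = x
    · subst hx
      rw [if_pos rfl, if_neg hxy, add_zero]
      refine Finset.sum_congr rfl fun j _ => ?_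
      simp [disc, hxy.symm]
    · rw [if_neg hx, zero_add]
      by_cases hy : i = y
      · subst hy
        rw [if_pos rfl]
        refine Finset.sum_congr rfl fun j _ => ?_
        simp [disc, hxy]
      · rw [if_neg hy]
        refine Finset.sum_eq_zero fun j _ => ?_
        have hx' : x ≠ i := fun h => hx h.symm
        have hy' : y ≠ i := fun h => hy h.symm
        simp [disc, hx', hy']
  simp only [h, Finset.sum_add_distrib, Finset.sum_ite_eq', Finset.mem_univ, if_true]

/-- two point discordance probability -/
def Dt (t : ℝ) (x y : Fin N) : ℝ := sgEx (voterQ G θ) (muU u) t (disc x y)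

/-- non-consensus probability -/
def nu (t : ℝ) : ℝ := 1 - probConsensusAt G θ u t

lemma muU_nonneg (hu : u ∈ Set.Ioo (0 : ℝ) 1) (η : Fin N → Bool) : 0 ≤ muU u η := by
  unfold muU
  refine Finset.prod_nonneg fun i _ => ?_
  split_ifs
  · exact hu.1.le
  · linarith [hu.2]

lemma muU_sum_prod (φ : Fin N → Bool → ℝ) :
    ∑ η : Fin N → Bool, muU u η * ∏ i, φ i (η i) =
      ∏ i, (u * φ i true + (1 - u) * φ i false) := by
  have : ∀ i, (u * φ i true + (1 - u) * φ i false) =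
      ∑ b : Bool, (if b then u else 1 - u) * φ i b := by
    intro i; simp
  simp only [this]
  rw [Finset.prod_univ_sum]
  simp only [Fintype.piFinset_univ]
  refine Finset.sum_congr rfl fun η _ => ?_
  unfold muU
  rw [← Finset.prod_mul_distrib]

lemma muU_sum : ∑ η : Fin N → Bool, muU u η = 1 := by
  have := muU_sum_prod (N := N) u (fun _ _ => 1)
  simpa using this

lemma Dt_zero (x y : Fin N) (hxy : x ≠ y) : Dt G θ u 0 x y = 2 * u * (1 - u) := by
  unfold Dt
  rw [sgEx_zero]
  have key : ∀ b c : Bool, ∑ η : Fin N → Bool, muU u η *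
      (if η x = b then (if η y = c then 1 else 0) else 0) =
      (if b then u else 1 - u) * (if c then u else 1 - u) := by
    intro b c
    have h := muU_sum_prod (N := N) u
      (fun i d => if i = x then (if d = b then 1 else 0) else
        if i = y then (if d = c then 1 else 0) else 1)
    have h1 : ∀ η : Fin N → Bool, (∏ i, (if i = x then (if η i = b then (1:ℝ) else 0) else
        if i = y then (if η i = c then 1 else 0) else 1)) =
        (if η x = b then (if η y = c then 1 else 0) else 0) := by
      intro η
      rw [← Finset.mul_prod_erase _ _ (Finset.mem_univ x),
        ← Finset.mul_prod_erase _ _ (Finset.mem_erase.2 ⟨hxy.symm, Finset.mem_univ y⟩)]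
      rw [Finset.prod_eq_one (s := (Finset.univ.erase x).erase y)]
      · simp only [if_true, if_neg hxy.symm, mul_one]
        split_ifs <;> simp
      · intro i hi
        simp only [Finset.mem_erase, Finset.mem_univ, and_true] at hi
        simp [hi.1, hi.2]
    simp only [h1] at h
    rw [h]
    rw [← Finset.mul_prod_erase _ _ (Finset.mem_univ x),
        ← Finset.mul_prod_erase _ _ (Finset.mem_erase.2 ⟨hxy.symm, Finset.mem_univ y⟩)]
    rw [Finset.prod_eq_one (s := (Finset.univ.erase x).erase y)]
    · cases b <;> cases c <;> simp [hxy.symm]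
    · intro i hi
      simp only [Finset.mem_erase, Finset.mem_univ, and_true] at hi
      simp [hi.1, hi.2]
  have h2 : ∀ η : Fin N → Bool, muU u η * disc x y η =
      muU u η * (if η x = true then (if η y = false then 1 else 0) else 0) +
      muU u η * (if η x = false then (if η y = true then 1 else 0) else 0) := by
    intro η
    unfold disc
    cases η x <;> cases η y <;> simp
  simp only [h2, Finset.sum_add_distrib, key]
  simp
  ring

lemma Dt_self (t : ℝ) (x : Fin N) : Dt G θ u t x x = 0 := by
  unfold Dt sgEx
  simp [disc_self]

lemma Dt_comm (t : ℝ) (x y : Fin N) : Dt G θ u t x y = Dt G θ u t y x := by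
  unfold Dt
  congr 1
  funext η
  exact disc_comm x y η

/-- pair generator -/
def pairGen (D : Fin N → Fin N → ℝ) (x y : Fin N) : ℝ :=
  ∑ j, cw G θ x j * (D j y - D x y) + ∑ j, cw G θ y j * (D x j - D x y)

lemma Dt_hasDerivAt (t : ℝ) (x y : Fin N) (hxy : x ≠ y) :
    HasDerivAt (fun s => Dt G θ u s x y) (pairGen G θ (Dt G θ u t) x y) t := by
  have h := hasDerivAt_sgEx (voterQ G θ) (muU u) (disc x y) t
  have h2 : (voterQ G θ).mulVec (disc x y) = fun η =>
      (∑ j, cw G θ x j * (disc j y η - disc x y η)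
        - (∑ j, -1 * (cw G θ y j * (disc x j η - disc x y η)))) := by
    funext η
    rw [voterQ_disc G θ x y hxy]
    simp [Finset.sum_neg_distrib]
  rw [h2, sgEx_sub, sgEx_linear_sum, sgEx_linear_sum] at h
  simp only [sgEx_smul, sgEx_sub] at h
  have h3 : pairGen G θ (Dt G θ u t) x y =
      ∑ k, cw G θ x k * (sgEx (voterQ G θ) (muU u) t (disc k y) -
        sgEx (voterQ G θ) (muU u) t (disc x y)) -
      ∑ k, -1 * (cw G θ y k * (sgEx (voterQ G θ) (muU u) t (disc x k) -
        sgEx (voterQ G θ) (muU u) t (disc x y))) := by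
    unfold pairGen Dt
    simp [Finset.sum_neg_distrib]
  rw [h3]
  exact h

lemma nu_eq (t : ℝ) :
    nu G θ u t = sgEx (voterQ G θ) (muU u) t
      (fun η => 1 - (if η ∈ consensusStates G then 1 else 0)) := by
  rw [sgEx_sub, sgEx_const _ (voterQ_row G θ) _ (muU_sum u)]
  rfl

lemma Dt_nonneg (hu : u ∈ Set.Ioo (0 : ℝ) 1) (t : ℝ) (ht : 0 ≤ t) (x y : Fin N) :
    0 ≤ Dt G θ u t x y := by
  have := sgEx_mono (voterQ G θ) (voterQ_offdiag G θ) (muU u) (muU_nonneg u hu) t ht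
    (fun _ => 0) (disc x y) (disc_nonneg x y)
  simpa [Dt, sgEx] using this

lemma Dt_le_one (hu : u ∈ Set.Ioo (0 : ℝ) 1) (t : ℝ) (ht : 0 ≤ t) (x y : Fin N) :
    Dt G θ u t x y ≤ 1 := by
  have := sgEx_mono (voterQ G θ) (voterQ_offdiag G θ) (muU u) (muU_nonneg u hu) t ht
    (disc x y) (fun _ => 1) (disc_le_one x y)
  rwa [sgEx_const _ (voterQ_row G θ) _ (muU_sum u)] at this

lemma nu_nonneg (hu : u ∈ Set.Ioo (0 : ℝ) 1) (t : ℝ) (ht : 0 ≤ t) : 0 ≤ nu G θ u t := by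
  rw [nu_eq]
  have := sgEx_mono (voterQ G θ) (voterQ_offdiag G θ) (muU u) (muU_nonneg u hu) t ht
    (fun _ => 0) (fun η => 1 - (if η ∈ consensusStates G then 1 else 0))
    (by intro η; split_ifs <;> norm_num)
  simpa [sgEx] using this

lemma nu_le_one (hu : u ∈ Set.Ioo (0 : ℝ) 1) (t : ℝ) (ht : 0 ≤ t) : nu G θ u t ≤ 1 := by
  rw [nu_eq]
  have := sgEx_mono (voterQ G θ) (voterQ_offdiag G θ) (muU u) (muU_nonneg u hu) t ht
    (fun η => 1 - (if η ∈ consensusStates G then 1 else 0)) (fun _ => 1)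
    (by intro η; split_ifs <;> norm_num)
  rwa [sgEx_const _ (voterQ_row G θ) _ (muU_sum u)] at this

lemma Dt_le_nu (hu : u ∈ Set.Ioo (0 : ℝ) 1) (t : ℝ) (ht : 0 ≤ t) (x y : Fin N)
    (hxy : G.Reachable x y) : Dt G θ u t x y ≤ nu G θ u t := by
  rw [nu_eq]
  refine sgEx_mono (voterQ G θ) (voterQ_offdiag G θ) (muU u) (muU_nonneg u hu) t ht _ _ ?_
  intro η
  unfold disc
  by_cases h : η ∈ consensusStates G
  · have := h x y hxy
    simp [h, this]
  · rw [if_neg h]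
    split_ifs <;> norm_num

lemma nu_le_sum (hu : u ∈ Set.Ioo (0 : ℝ) 1) (t : ℝ) (ht : 0 ≤ t) :
    nu G θ u t ≤ ∑ x, ∑ y, (if G.Reachable x y then Dt G θ u t x y else 0) := by
  have h1 : ∑ x, ∑ y, (if G.Reachable x y then Dt G θ u t x y else 0) =
      sgEx (voterQ G θ) (muU u) t (fun η => ∑ x, ∑ y,
        ((if G.Reachable x y then 1 else 0) * disc x y η)) := by
    rw [sgEx_linear_sum]
    refine Finset.sum_congr rfl fun x _ => ?_
    rw [sgEx_linear_sum]
    refine Finset.sum_congr rfl fun y _ => ?_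
    rw [sgEx_smul]
    unfold Dt
    split_ifs <;> simp
  rw [h1, nu_eq]
  refine sgEx_mono (voterQ G θ) (voterQ_offdiag G θ) (muU u) (muU_nonneg u hu) t ht _ _ ?_
  intro η
  have hnn : ∀ x y, (0:ℝ) ≤ (if G.Reachable x y then 1 else 0) * disc x y η := by
    intro x y
    have := disc_nonneg x y η
    split_ifs <;> simp [this]
  by_cases h : η ∈ consensusStates G
  · rw [if_pos h]
    simp only [sub_self]
    exact Finset.sum_nonneg fun x _ => Finset.sum_nonneg fun y _ => hnn x y
  · rw [if_neg h]
    unfold consensusStates at h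
    simp only [Set.mem_ofPred_eq, not_forall] at h
    obtain ⟨x, y, hr, hne⟩ := h
    have h3 : (1:ℝ) ≤ (if G.Reachable x y then 1 else 0) * disc x y η := by
      simp [hr, disc, hne]
    calc (1:ℝ) - 0 ≤ (if G.Reachable x y then 1 else 0) * disc x y η := by linarith
      _ ≤ ∑ y, (if G.Reachable x y then 1 else 0) * disc x y η :=
        Finset.single_le_sum (f := fun y => (if G.Reachable x y then (1:ℝ) else 0) * disc x y η)
          (fun y _ => hnn x y) (Finset.mem_univ y)
      _ ≤ _ := Finset.single_le_sum
          (f := fun x => ∑ y, (if G.Reachable x y then (1:ℝ) else 0) * disc x y η)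
          (fun x _ => Finset.sum_nonneg fun y _ => hnn x y) (Finset.mem_univ x)

lemma nu_continuous : Continuous (nu G θ u) := by
  have : nu G θ u = fun t => sgEx (voterQ G θ) (muU u) t
      (fun η => 1 - (if η ∈ consensusStates G then 1 else 0)) := funext (nu_eq G θ u)
  rw [this]
  exact continuous_iff_continuousAt.2 fun t => (hasDerivAt_sgEx _ _ _ t).continuousAt

lemma expectedConsensusTime_eq :
    expectedConsensusTime G θ u = ∫ t in Set.Ioi (0 : ℝ), nu G θ u t := rfl

end Voter

section Bounds

variable {N : ℕ} (G : SimpleGraph (Fin N)) (θ u : ℝ)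

/-- Dirichlet energy (each edge counted twice) -/
def en (f : Fin N → ℝ) : ℝ := ∑ x, ∑ z, cw G θ x z * (f x - f z) ^ 2

lemma sum_by_parts (f : Fin N → ℝ) :
    ∑ x, f x * ∑ z, cw G θ x z * (f z - f x) = -(1 / 2) * en G θ f := by
  unfold en
  have h1 : ∑ x, f x * ∑ z, cw G θ x z * (f z - f x) =
      ∑ x, ∑ z, cw G θ x z * (f x * (f z - f x)) := by
    refine Finset.sum_congr rfl fun x _ => ?_
    rw [Finset.mul_sum]
    exact Finset.sum_congr rfl fun z _ => by ring
  have h2 : ∑ x, ∑ z, cw G θ x z * (f x * (f z - f x)) =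
      ∑ x, ∑ z, cw G θ x z * (f z * (f x - f z)) := by
    rw [Finset.sum_comm]
    refine Finset.sum_congr rfl fun x _ => Finset.sum_congr rfl fun z _ => ?_
    rw [cw_symm]
  have h3 : ∑ x, ∑ z, cw G θ x z * (f x * (f z - f x)) +
      ∑ x, ∑ z, cw G θ x z * (f z * (f x - f z)) =
      -∑ x, ∑ z, cw G θ x z * (f x - f z) ^ 2 := by
    rw [← Finset.sum_add_distrib, ← Finset.sum_neg_distrib]
    refine Finset.sum_congr rfl fun x _ => ?_
    rw [← Finset.sum_add_distrib, ← Finset.sum_neg_distrib]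
    exact Finset.sum_congr rfl fun z _ => by ring
  rw [h1]
  linarith

lemma sum_gen_zero (f : Fin N → ℝ) :
    ∑ x, ∑ z, cw G θ x z * (f z - f x) = 0 := by
  have h2 : ∑ x, ∑ z, cw G θ x z * (f z - f x) =
      ∑ x, ∑ z, cw G θ x z * (f x - f z) := by
    rw [Finset.sum_comm]
    refine Finset.sum_congr rfl fun x _ => Finset.sum_congr rfl fun z _ => ?_
    rw [cw_symm]
  have h3 : ∑ x, ∑ z, cw G θ x z * (f z - f x) +
      ∑ x, ∑ z, cw G θ x z * (f x - f z) = 0 := by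
    rw [← Finset.sum_add_distrib]
    refine Finset.sum_eq_zero fun x _ => ?_
    rw [← Finset.sum_add_distrib]
    exact Finset.sum_eq_zero fun z _ => by ring
  linarith

/-- masked two point function -/
def Ps (t : ℝ) (x y : Fin N) : ℝ := if G.Reachable x y then Dt G θ u t x y else 0

lemma Ps_self (t : ℝ) (x : Fin N) : Ps G θ u t x x = 0 := by
  unfold Ps; rw [Dt_self]; simp

lemma Ps_comm (t : ℝ) (x y : Fin N) : Ps G θ u t x y = Ps G θ u t y x := by
  unfold Ps
  rw [Dt_comm]
  by_cases h : G.Reachable x y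
  · rw [if_pos h, if_pos h.symm]
  · rw [if_neg h, if_neg (fun h' => h h'.symm)]

lemma cw_mask (Φ : Fin N → Fin N → ℝ) (x z y : Fin N) :
    cw G θ x z * ((if G.Reachable z y then Φ z y else 0) -
      (if G.Reachable x y then Φ x y else 0)) =
    if G.Reachable x y then cw G θ x z * (Φ z y - Φ x y) else 0 := by
  by_cases ha : G.Adj x z
  · by_cases h : G.Reachable x y
    · rw [if_pos h, if_pos h, if_pos (ha.symm.reachable.trans h)]
    · rw [if_neg h, if_neg h, if_neg (fun h' => h (ha.reachable.trans h'))]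
      simp
  · simp [cw, ha]

lemma pairGen_Ps (t : ℝ) (x y : Fin N) :
    pairGen G θ (Ps G θ u t) x y =
      if G.Reachable x y then pairGen G θ (Dt G θ u t) x y else 0 := by
  unfold pairGen
  have h1 : ∀ j, cw G θ x j * (Ps G θ u t j y - Ps G θ u t x y) =
      if G.Reachable x y then cw G θ x j * (Dt G θ u t j y - Dt G θ u t x y) else 0 :=
    fun j => cw_mask G θ (Dt G θ u t) x j y
  have h2 : ∀ j, cw G θ y j * (Ps G θ u t x j - Ps G θ u t x y) =
      if G.Reachable x y then cw G θ y j * (Dt G θ u t x j - Dt G θ u t x y) else 0 := by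
    intro j
    have := cw_mask G θ (Dt G θ u t) y j x
    rw [Ps_comm G θ u t x j, Ps_comm G θ u t x y, Dt_comm G θ u t x j, Dt_comm G θ u t x y]
    unfold Ps
    rw [this]
    by_cases h : G.Reachable x y
    · rw [if_pos h, if_pos h.symm]
    · rw [if_neg h, if_neg (fun h' => h h'.symm)]
  simp only [h1, h2]
  split_ifs <;> simp

lemma Ps_hasDerivAt (t : ℝ) (x y : Fin N) (hxy : x ≠ y) :
    HasDerivAt (fun s => Ps G θ u s x y) (pairGen G θ (Ps G θ u t) x y) t := by
  rw [pairGen_Ps]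
  unfold Ps
  by_cases h : G.Reachable x y
  · simp only [if_pos h]
    exact Dt_hasDerivAt G θ u t x y hxy
  · simp only [if_neg h]
    exact hasDerivAt_const t 0

lemma sum_Ps_pairGen (P : Fin N → Fin N → ℝ) (hc : ∀ x y, P x y = P y x) :
    ∑ x, ∑ y, P x y * pairGen G θ P x y = - ∑ y, en G θ (fun x => P x y) := by
  unfold pairGen
  simp only [mul_add, Finset.sum_add_distrib]
  have h1 : ∑ x, ∑ y, P x y * ∑ j, cw G θ x j * (P j y - P x y) =
      ∑ y, (-(1/2) * en G θ (fun x => P x y)) := by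
    rw [Finset.sum_comm]
    exact Finset.sum_congr rfl fun y _ => sum_by_parts G θ (fun x => P x y)
  have h2 : ∑ x, ∑ y, P x y * ∑ j, cw G θ y j * (P x j - P x y) =
      ∑ y, (-(1/2) * en G θ (fun x => P x y)) := by
    refine Finset.sum_congr rfl fun x _ => ?_
    rw [← sum_by_parts G θ (fun z => P z x)]
    refine Finset.sum_congr rfl fun y _ => ?_
    rw [hc x y]
    congr 1
    refine Finset.sum_congr rfl fun j _ => ?_
    rw [hc x j]
  rw [h1, h2, ← Finset.mul_sum]
  ring

lemma E2_hasDerivAt (t : ℝ) :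
    HasDerivAt (fun s => ∑ x, ∑ y, Ps G θ u s x y ^ 2)
      (-2 * ∑ y, en G θ (fun x => Ps G θ u t x y)) t := by
  have h : HasDerivAt (fun s => ∑ x, ∑ y, Ps G θ u s x y ^ 2)
      (∑ x, ∑ y, 2 * (Ps G θ u t x y * pairGen G θ (Ps G θ u t) x y)) t := by
    refine HasDerivAt.fun_sum fun x _ => HasDerivAt.fun_sum fun y _ => ?_
    by_cases hxy : x = y
    · subst hxy
      simp only [Ps_self]
      simpa using hasDerivAt_const t (0:ℝ)
    · have := (Ps_hasDerivAt G θ u t x y hxy).fun_pow 2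
      have e : 2 * (Ps G θ u t x y * pairGen G θ (Ps G θ u t) x y) =
          ((2 : ℕ) : ℝ) * Ps G θ u t x y ^ (2 - 1) * pairGen G θ (Ps G θ u t) x y := by
        norm_num
        ring
      rw [e]
      exact this
  convert h using 1
  simp only [← Finset.mul_sum]
  rw [sum_Ps_pairGen G θ _ (Ps_comm G θ u t)]
  ring

lemma E2_decay (hu : u ∈ Set.Ioo (0 : ℝ) 1) (T : ℝ) (hT : 0 < T)
    (hFI : ∀ P : Fin N → Fin N → ℝ, (∀ x, P x x = 0) → (∀ x y, P x y = P y x) →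
      (∀ x y, ¬ G.Reachable x y → P x y = 0) →
      ∑ x, ∑ y, P x y ^ 2 ≤ T * ∑ y, en G θ (fun x => P x y)) (t : ℝ) (ht : 0 ≤ t) :
    ∑ x, ∑ y, Ps G θ u t x y ^ 2 ≤ (N : ℝ) ^ 2 * Real.exp (-(2 / T) * t) := by
  set F : ℝ → ℝ := fun s => (∑ x, ∑ y, Ps G θ u s x y ^ 2) * Real.exp ((2 / T) * s) with hF
  have hd : ∀ s, HasDerivAt F
      ((-2 * ∑ y, en G θ (fun x => Ps G θ u s x y)) * Real.exp ((2 / T) * s) +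
        (∑ x, ∑ y, Ps G θ u s x y ^ 2) * (Real.exp ((2 / T) * s) * (2 / T))) s := by
    intro s
    have he : HasDerivAt (fun s => Real.exp ((2 / T) * s)) (Real.exp ((2 / T) * s) * (2 / T)) s := by
      have := ((hasDerivAt_id s).const_mul (2 / T)).exp
      simpa using this
    exact (E2_hasDerivAt G θ u s).mul he
  have hanti : Antitone F := by
    apply antitone_of_deriv_nonpos (fun s => (hd s).differentiableAt)
    intro s
    rw [(hd s).deriv]
    have h1 := hFI (Ps G θ u s) (Ps_self G θ u s) (Ps_comm G θ u s)
      (by intro x y h; simp [Ps, h])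
    have h2 : (2 / T) * (∑ x, ∑ y, Ps G θ u s x y ^ 2) ≤
        2 * ∑ y, en G θ (fun x => Ps G θ u s x y) := by
      calc _ ≤ (2 / T) * (T * ∑ y, en G θ (fun x => Ps G θ u s x y)) :=
            mul_le_mul_of_nonneg_left h1 (by positivity)
        _ = _ := by field_simp
    have h3 := Real.exp_pos ((2 / T) * s)
    nlinarith
  have h0 : F t ≤ F 0 := hanti ht
  have hF0 : F 0 ≤ (N : ℝ) ^ 2 := by
    simp only [hF, mul_zero, Real.exp_zero, mul_one]
    calc ∑ x, ∑ y, Ps G θ u 0 x y ^ 2 ≤ ∑ x : Fin N, ∑ y : Fin N, (1:ℝ) := by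
          refine Finset.sum_le_sum fun x _ => Finset.sum_le_sum fun y _ => ?_
          unfold Ps
          have h1 := Dt_nonneg G θ u hu 0 le_rfl x y
          have h2 := Dt_le_one G θ u hu 0 le_rfl x y
          split_ifs
          · nlinarith
          · norm_num
      _ = _ := by simp; ring
  have : ∑ x, ∑ y, Ps G θ u t x y ^ 2 = F t * Real.exp (-(2 / T) * t) := by
    simp only [hF]
    rw [mul_assoc, ← Real.exp_add]
    simp
  rw [this]
  exact mul_le_mul_of_nonneg_right (h0.trans hF0) (Real.exp_pos _).le

lemma nu_decay (hu : u ∈ Set.Ioo (0 : ℝ) 1) (T : ℝ) (hT : 0 < T)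
    (hFI : ∀ P : Fin N → Fin N → ℝ, (∀ x, P x x = 0) → (∀ x y, P x y = P y x) →
      (∀ x y, ¬ G.Reachable x y → P x y = 0) →
      ∑ x, ∑ y, P x y ^ 2 ≤ T * ∑ y, en G θ (fun x => P x y)) (t : ℝ) (ht : 0 ≤ t) :
    nu G θ u t ≤ (N : ℝ) ^ 2 * Real.exp (-(1 / T) * t) := by
  have h1 := nu_le_sum G θ u hu t ht
  have h2 := E2_decay G θ u hu T hT hFI t ht
  have h3 : (∑ x, ∑ y, Ps G θ u t x y) ^ 2 ≤ (N : ℝ) ^ 2 * ∑ x, ∑ y, Ps G θ u t x y ^ 2 := by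
    have := sq_sum_le_card_mul_sum_sq (s := (Finset.univ : Finset (Fin N × Fin N)))
      (f := fun p => Ps G θ u t p.1 p.2)
    rw [Fintype.sum_prod_type, Fintype.sum_prod_type] at this
    simpa [sq] using this
  have h4 : (∑ x, ∑ y, Ps G θ u t x y) ^ 2 ≤ ((N : ℝ) ^ 2 * Real.exp (-(1 / T) * t)) ^ 2 := by
    refine h3.trans ?_
    calc _ ≤ (N : ℝ) ^ 2 * ((N : ℝ) ^ 2 * Real.exp (-(2 / T) * t)) :=
          mul_le_mul_of_nonneg_left h2 (by positivity)
      _ = _ := by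
        have : Real.exp (-(2 / T) * t) = Real.exp (-(1 / T) * t) ^ 2 := by
          rw [← Real.exp_nat_mul]
          congr 1
          push_cast
          ring
        rw [this]
        ring
  exact h1.trans (abs_le_of_sq_le_sq' h4 (by positivity)).2

lemma upper_bound (hu : u ∈ Set.Ioo (0 : ℝ) 1) (T : ℝ) (hT : 0 < T) (hN : 1 ≤ N)
    (hFI : ∀ P : Fin N → Fin N → ℝ, (∀ x, P x x = 0) → (∀ x y, P x y = P y x) →
      (∀ x y, ¬ G.Reachable x y → P x y = 0) →
      ∑ x, ∑ y, P x y ^ 2 ≤ T * ∑ y, en G θ (fun x => P x y)) :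
    MeasureTheory.IntegrableOn (nu G θ u) (Set.Ioi 0) ∧
    expectedConsensusTime G θ u ≤ T * (2 * Real.log N + 1) := by
  have hdec := nu_decay G θ u hu T hT hFI
  have hT' : 0 < 1 / T := by positivity
  have hint0 : MeasureTheory.IntegrableOn (fun t : ℝ => (N : ℝ) ^ 2 * Real.exp (-(1 / T) * t))
      (Set.Ioi 0) := (exp_neg_integrableOn_Ioi 0 hT').const_mul _
  have hintg : MeasureTheory.IntegrableOn (nu G θ u) (Set.Ioi 0) := by
    refine MeasureTheory.Integrable.mono' hint0
      (nu_continuous G θ u).aestronglyMeasurable ?_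
    refine (MeasureTheory.ae_restrict_mem measurableSet_Ioi).mono fun t ht => ?_
    have ht' : (0:ℝ) ≤ t := le_of_lt ht
    rw [Real.norm_of_nonneg (nu_nonneg G θ u hu t ht')]
    exact hdec t ht'
  refine ⟨hintg, ?_⟩
  rw [expectedConsensusTime_eq]
  set t0 : ℝ := 2 * T * Real.log N with ht0
  have hlog : 0 ≤ Real.log N := Real.log_nonneg (by exact_mod_cast hN)
  have ht0' : 0 ≤ t0 := by positivity
  rw [← Set.Ioc_union_Ioi_eq_Ioi ht0', MeasureTheory.setIntegral_union
    (Set.Ioc_disjoint_Ioi le_rfl) measurableSet_Ioi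
    (hintg.mono_set Set.Ioc_subset_Ioi_self) (hintg.mono_set (Set.Ioi_subset_Ioi ht0'))]
  have h1 : ∫ t in Set.Ioc 0 t0, nu G θ u t ≤ t0 := by
    calc ∫ t in Set.Ioc 0 t0, nu G θ u t ≤ ∫ t in Set.Ioc 0 t0, (1:ℝ) := by
          refine MeasureTheory.setIntegral_mono_on (hintg.mono_set Set.Ioc_subset_Ioi_self)
            (by simp) measurableSet_Ioc fun t ht => nu_le_one G θ u hu t ht.1.le
      _ = t0 := by simp [ht0']
  have h2 : ∫ t in Set.Ioi t0, nu G θ u t ≤ T := by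
    calc ∫ t in Set.Ioi t0, nu G θ u t
        ≤ ∫ t in Set.Ioi t0, (N : ℝ) ^ 2 * Real.exp (-(1 / T) * t) := by
          refine MeasureTheory.setIntegral_mono_on (hintg.mono_set (Set.Ioi_subset_Ioi ht0'))
            (hint0.mono_set (Set.Ioi_subset_Ioi ht0')) measurableSet_Ioi
            fun t ht => hdec t (ht0'.trans (le_of_lt ht))
      _ = (N : ℝ) ^ 2 * (T * Real.exp (-(1 / T) * t0)) := by
          rw [MeasureTheory.integral_const_mul, integral_exp_mul_Ioi (by linarith)]
          congr 1
          field_simp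
      _ = T := by
          have hN0 : (N : ℝ) ≠ 0 := by positivity
          have : Real.exp (-(1 / T) * t0) = ((N : ℝ) ^ 2)⁻¹ := by
            rw [ht0]
            have : -(1 / T) * (2 * T * Real.log N) = -(2 * Real.log N) := by field_simp
            rw [this, Real.exp_neg, show (2 : ℝ) * Real.log N = Real.log N + Real.log N by ring,
              Real.exp_add, Real.exp_log (by positivity)]
            ring
          rw [this]
          field_simp
  have : T * (2 * Real.log N + 1) = t0 + T := by rw [ht0]; ring
  linarith

lemma cw_total : ∑ x, ∑ z, cw G θ x z = ∑ x, (G.degree x : ℝ) * rt G θ x := by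
  have h1 : ∑ x, ∑ z, cw G θ x z = ∑ x, ∑ z, (if G.Adj x z then rt G θ x / 2 else 0)
      + ∑ x, ∑ z, (if G.Adj x z then rt G θ z / 2 else 0) := by
    rw [← Finset.sum_add_distrib]
    refine Finset.sum_congr rfl fun x _ => ?_
    rw [← Finset.sum_add_distrib]
    refine Finset.sum_congr rfl fun z _ => ?_
    unfold cw
    split_ifs <;> ring
  have h2 : ∑ x, ∑ z, (if G.Adj x z then rt G θ z / 2 else 0) =
      ∑ x, ∑ z, (if G.Adj x z then rt G θ x / 2 else 0) := by
    rw [Finset.sum_comm]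
    refine Finset.sum_congr rfl fun x _ => Finset.sum_congr rfl fun z _ => ?_
    rw [SimpleGraph.adj_comm]
  rw [h1, h2, ← Finset.sum_add_distrib]
  refine Finset.sum_congr rfl fun x _ => ?_
  rw [← Finset.sum_filter, ← SimpleGraph.neighborFinset_eq_filter]
  simp only [Finset.sum_const, SimpleGraph.card_neighborFinset_eq_degree, nsmul_eq_mul]
  ring

/-- number of ordered reachable pairs -/
def reachPairs : ℝ := ∑ x, ∑ y, (if G.Reachable x y then (1:ℝ) else 0)

lemma F_hasDerivAt (t : ℝ) :
    HasDerivAt (fun s => ∑ x, ∑ y, Ps G θ u s x y)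
      (-∑ x, 2 * ∑ j, cw G θ x j * Ps G θ u t j x) t := by
  have h : HasDerivAt (fun s => ∑ x, ∑ y, Ps G θ u s x y)
      (∑ x, ∑ y, (pairGen G θ (Ps G θ u t) x y -
        if x = y then pairGen G θ (Ps G θ u t) x y else 0)) t := by
    refine HasDerivAt.fun_sum fun x _ => HasDerivAt.fun_sum fun y _ => ?_
    by_cases hxy : x = y
    · subst hxy
      simp only [Ps_self]
      simpa using hasDerivAt_const t (0:ℝ)
    · simpa [hxy] using Ps_hasDerivAt G θ u t x y hxy
  convert h using 1
  simp only [Finset.sum_sub_distrib, Finset.sum_ite_eq, Finset.mem_univ, if_true]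
  have h1 : ∑ x, ∑ y, pairGen G θ (Ps G θ u t) x y = 0 := by
    unfold pairGen
    simp only [Finset.sum_add_distrib]
    have e1 : ∑ x, ∑ y, ∑ j, cw G θ x j * (Ps G θ u t j y - Ps G θ u t x y) = 0 := by
      rw [Finset.sum_comm]
      exact Finset.sum_eq_zero fun y _ => sum_gen_zero G θ (fun x => Ps G θ u t x y)
    have e2 : ∑ x, ∑ y, ∑ j, cw G θ y j * (Ps G θ u t x j - Ps G θ u t x y) = 0 :=
      Finset.sum_eq_zero fun x _ => sum_gen_zero G θ (fun y => Ps G θ u t x y)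
    rw [e1, e2, add_zero]
  rw [h1, zero_sub]
  congr 1
  refine Finset.sum_congr rfl fun x _ => ?_
  unfold pairGen
  simp only [Ps_self, sub_zero]
  rw [two_mul]
  congr 1
  refine Finset.sum_congr rfl fun j _ => ?_
  rw [Ps_comm]

lemma lower_bound (hu : u ∈ Set.Ioo (0 : ℝ) 1)
    (hintg : MeasureTheory.IntegrableOn (nu G θ u) (Set.Ioi 0))
    (S : ℝ) (hS : 0 < S) (hdeg : ∑ x, (G.degree x : ℝ) * rt G θ x ≤ S)
    (hR : 2 * (N : ℝ) ≤ reachPairs G) (hN : 1 ≤ N) :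
    (u * (1 - u)) ^ 2 * reachPairs G / (8 * S) ≤ expectedConsensusTime G θ u := by
  set R := reachPairs G with hRdef
  have hNpos : (0:ℝ) < N := by exact_mod_cast hN
  have hRpos : 0 < R := by linarith
  have hu1 : 0 < u * (1 - u) := mul_pos hu.1 (by linarith [hu.2])
  set F : ℝ → ℝ := fun s => ∑ x, ∑ y, Ps G θ u s x y with hF
  have hPs : ∀ t, 0 ≤ t → ∀ x y, 0 ≤ Ps G θ u t x y ∧ Ps G θ u t x y ≤ 1 := by
    intro t ht x y
    unfold Ps
    split_ifs
    · exact ⟨Dt_nonneg G θ u hu t ht x y, Dt_le_one G θ u hu t ht x y⟩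
    · norm_num
  have hmono : MonotoneOn (fun t => F t + 2 * S * t) (Set.Ici 0) := by
    have hd : ∀ t, HasDerivAt (fun t => F t + 2 * S * t)
        ((-∑ x, 2 * ∑ j, cw G θ x j * Ps G θ u t j x) + 2 * S) t := by
      intro t
      have h2 : HasDerivAt (fun t : ℝ => 2 * S * t) (2 * S) t := by
        simpa using (hasDerivAt_id t).const_mul (2 * S)
      exact (F_hasDerivAt G θ u t).add h2
    refine monotoneOn_of_deriv_nonneg (convex_Ici 0)
      (fun t _ => (hd t).continuousAt.continuousWithinAt)
      (fun t _ => (hd t).differentiableAt.differentiableWithinAt) ?_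
    intro t ht
    rw [interior_Ici] at ht
    rw [(hd t).deriv]
    have : ∑ x, 2 * ∑ j, cw G θ x j * Ps G θ u t j x ≤ 2 * S := by
      rw [← Finset.mul_sum]
      refine mul_le_mul_of_nonneg_left ?_ (by norm_num)
      refine le_trans ?_ hdeg
      rw [← cw_total]
      refine Finset.sum_le_sum fun x _ => Finset.sum_le_sum fun j _ => ?_
      exact mul_le_of_le_one_right (cw_nonneg G θ x j) (hPs t (le_of_lt ht) j x).2
    linarith
  have hF0 : F 0 = 2 * (u * (1 - u)) * (R - N) := by
    simp only [hF, hRdef, reachPairs]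
    have : ∀ x y, Ps G θ u 0 x y = 2 * (u * (1 - u)) * ((if G.Reachable x y then (1:ℝ) else 0)
        - if x = y then 1 else 0) := by
      intro x y
      unfold Ps
      by_cases hxy : x = y
      · subst hxy
        simp [Dt_self]
      · rw [Dt_zero G θ u x y hxy, if_neg hxy]
        split_ifs <;> ring
    simp only [this, ← Finset.mul_sum, Finset.sum_sub_distrib]
    simp
  have hnuF : ∀ t, 0 ≤ t → F t ≤ R * nu G θ u t := by
    intro t ht
    simp only [hF, hRdef, reachPairs, Finset.sum_mul]
    refine Finset.sum_le_sum fun x _ => Finset.sum_le_sum fun y _ => ?_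
    unfold Ps
    split_ifs with h
    · rw [one_mul]; exact Dt_le_nu G θ u hu t ht x y h
    · simp
  set s : ℝ := u * (1 - u) * R / (4 * S) with hs
  have hspos : 0 < s := by positivity
  have hnu : ∀ t ∈ Set.Ioc 0 s, u * (1 - u) / 2 ≤ nu G θ u t := by
    intro t ht
    have h1 := hmono (Set.mem_Ici.2 le_rfl) (Set.mem_Ici.2 ht.1.le) ht.1.le
    simp only [mul_zero, add_zero] at h1
    have h2 := hnuF t ht.1.le
    have h3 : 2 * S * t ≤ u * (1 - u) * R / 2 := by
      calc 2 * S * t ≤ 2 * S * s := mul_le_mul_of_nonneg_left ht.2 (by positivity)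
        _ = _ := by rw [hs]; field_simp; ring
    have h4 : u * (1 - u) * R ≤ F 0 := by
      rw [hF0]
      nlinarith
    have h5 : R * (u * (1 - u) / 2) ≤ R * nu G θ u t := by nlinarith
    exact le_of_mul_le_mul_left h5 hRpos
  rw [expectedConsensusTime_eq]
  calc (u * (1 - u)) ^ 2 * R / (8 * S) = ∫ t in Set.Ioc 0 s, u * (1 - u) / 2 := by
        rw [MeasureTheory.setIntegral_const]
        simp only [Real.volume_real_Ioc_of_le hspos.le, smul_eq_mul, sub_zero]
        rw [hs]; field_simp; ring
    _ ≤ ∫ t in Set.Ioc 0 s, nu G θ u t := by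
        refine MeasureTheory.setIntegral_mono_on (by simp)
          (hintg.mono_set Set.Ioc_subset_Ioi_self) measurableSet_Ioc hnu
    _ ≤ _ := by
        refine MeasureTheory.setIntegral_mono_set hintg ?_
          (Filter.Eventually.of_forall Set.Ioc_subset_Ioi_self)
        refine (MeasureTheory.ae_restrict_mem measurableSet_Ioi).mono fun t ht => ?_
        exact nu_nonneg G θ u hu t (le_of_lt ht)

end Bounds

section Cheeger

variable {N : ℕ} (G : SimpleGraph (Fin N))

/-- unweighted squared gradient along a (possible) edge -/
def gr (f : Fin N → ℝ) (x z : Fin N) : ℝ := if G.Adj x z then (f x - f z) ^ 2 else 0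

lemma gr_nonneg (f : Fin N → ℝ) (x z : Fin N) : 0 ≤ gr G f x z := by
  unfold gr; split_ifs <;> positivity

/-- expansion of the set `A` -/
def Expands (A : Finset (Fin N)) : Prop :=
  ∀ S ⊆ A, 2 * S.card ≤ A.card →
    (S.card : ℝ) ≤ ∑ x ∈ S, ∑ y ∈ A \ S, (if G.Adj x y then (1:ℝ) else 0)

lemma cheeger_L1 (A : Finset (Fin N)) (hA : Expands G A) :
    ∀ (k : ℕ) (v : Fin N → ℝ), (∀ x, 0 ≤ v x) → (A.filter (fun x => v x ≠ 0)).card = k →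
      2 * k ≤ A.card →
      ∑ x ∈ A, v x ≤ ∑ x ∈ A, ∑ y ∈ A, (if G.Adj x y then |v x - v y| else 0) := by
  intro k
  induction k using Nat.strong_induction_on with
  | _ k ih =>
  intro v hv hk hcard
  set S := A.filter (fun x => v x ≠ 0) with hS
  have hSA : S ⊆ A := Finset.filter_subset _ _
  rcases S.eq_empty_or_nonempty with hemp | hne
  · have : ∑ x ∈ A, v x = 0 := by
      refine Finset.sum_eq_zero fun x hx => ?_
      by_contra h
      have : x ∈ S := Finset.mem_filter.2 ⟨hx, h⟩
      rw [hemp] at this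
      simp at this
    rw [this]
    refine Finset.sum_nonneg fun x _ => Finset.sum_nonneg fun y _ => ?_
    split_ifs <;> positivity
  · obtain ⟨x0, hx0, hmin⟩ := Finset.exists_min_image S v hne
    set δ := v x0 with hδ
    have hδpos : 0 < δ := lt_of_le_of_ne (hv x0) (Ne.symm (Finset.mem_filter.1 hx0).2)
    set I : Fin N → ℝ := fun x => if x ∈ S then 1 else 0 with hI
    set v' : Fin N → ℝ := fun x => if x ∈ S then v x - δ else 0 with hv'
    have hv'0 : ∀ x, 0 ≤ v' x := by
      intro x
      simp only [hv']
      split_ifs with h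
      · linarith [hmin x h]
      · exact le_rfl
    have hsub : A.filter (fun x => v' x ≠ 0) ⊂ S := by
      refine Finset.ssubset_iff_subset_ne.2 ⟨?_, ?_⟩
      · intro x hx
        by_contra h
        have := (Finset.mem_filter.1 hx).2
        simp [hv', h] at this
      · intro h
        rw [← h] at hx0
        have h2 := (Finset.mem_filter.1 hx0).2
        apply h2
        simp only [hv']
        split_ifs <;> simp [hδ]
    have hlt := Finset.card_lt_card hsub
    rw [hk] at hlt
    have h1 := ih _ hlt v' hv'0 rfl (by omega)
    have h2 : (S.card : ℝ) ≤ ∑ x ∈ A, ∑ y ∈ A, (if G.Adj x y then |I x - I y| else 0) := by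
      refine (hA S hSA (by rw [hk]; exact hcard)).trans ?_
      calc _ = ∑ x ∈ S, ∑ y ∈ A \ S, (if G.Adj x y then |I x - I y| else 0) := by
            refine Finset.sum_congr rfl fun x hx => Finset.sum_congr rfl fun y hy => ?_
            have hy' := (Finset.mem_sdiff.1 hy).2
            simp [hI, hx, hy']
        _ ≤ ∑ x ∈ S, ∑ y ∈ A, (if G.Adj x y then |I x - I y| else 0) := by
            refine Finset.sum_le_sum fun x hx =>
              Finset.sum_le_sum_of_subset_of_nonneg Finset.sdiff_subset fun y _ _ => ?_
            split_ifs <;> positivity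
        _ ≤ _ := by
            refine Finset.sum_le_sum_of_subset_of_nonneg hSA fun x _ _ =>
              Finset.sum_nonneg fun y _ => ?_
            split_ifs <;> positivity
    have hvx : ∀ x ∈ A, v x = v' x + δ * I x := by
      intro x hx
      simp only [hv', hI]
      split_ifs with h
      · ring
      · have : ¬ (v x ≠ 0) := fun h' => h (Finset.mem_filter.2 ⟨hx, h'⟩)
        push Not at this
        rw [this]; ring
    have habs : ∀ x ∈ A, ∀ y ∈ A, |v' x - v' y| + δ * |I x - I y| ≤ |v x - v y| := by
      intro x hx y hy
      rw [hvx x hx, hvx y hy]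
      have hx' := hv'0 x
      have hy' := hv'0 y
      by_cases h1 : x ∈ S <;> by_cases h2 : y ∈ S
      · simp [hI, h1, h2]
      · have : v' y = 0 := by simp [hv', h2]
        simp only [hI, h1, h2, this]
        simp only [if_true, if_false, sub_zero, mul_one, mul_zero, abs_one, add_zero]
        rw [abs_of_nonneg hx', abs_of_nonneg (by linarith)]
      · have : v' x = 0 := by simp [hv', h1]
        simp only [hI, h1, h2, this]
        simp only [if_true, if_false, zero_sub, mul_one, mul_zero, abs_neg, abs_one, add_zero]
        rw [abs_of_nonneg hy', abs_of_nonneg (by linarith)]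
      · simp [hI, h1, h2]
    calc ∑ x ∈ A, v x = ∑ x ∈ A, v' x + δ * S.card := by
          rw [Finset.sum_congr rfl hvx, Finset.sum_add_distrib, ← Finset.mul_sum]
          congr 2
          simp only [hI]
          rw [Finset.sum_ite_mem, Finset.inter_eq_right.2 hSA]
          simp
      _ ≤ (∑ x ∈ A, ∑ y ∈ A, (if G.Adj x y then |v' x - v' y| else 0))
          + δ * ∑ x ∈ A, ∑ y ∈ A, (if G.Adj x y then |I x - I y| else 0) :=
          add_le_add h1 (mul_le_mul_of_nonneg_left h2 hδpos.le)
      _ ≤ _ := by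
          rw [Finset.mul_sum, ← Finset.sum_add_distrib]
          refine Finset.sum_le_sum fun x hx => ?_
          rw [Finset.mul_sum, ← Finset.sum_add_distrib]
          refine Finset.sum_le_sum fun y hy => ?_
          split_ifs
          · exact habs x hx y hy
          · simp

lemma sum_adj_le_degree (A : Finset (Fin N)) (x : Fin N) :
    ∑ y ∈ A, (if G.Adj x y then (1:ℝ) else 0) ≤ G.degree x := by
  calc _ ≤ ∑ y, (if G.Adj x y then (1:ℝ) else 0) := by
        refine Finset.sum_le_sum_of_subset_of_nonneg (Finset.subset_univ _) fun y _ _ => ?_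
        split_ifs <;> norm_num
    _ = G.degree x := by
        rw [← Finset.sum_filter, ← SimpleGraph.neighborFinset_eq_filter]
        simp

lemma cheeger_L2 (A : Finset (Fin N)) (hA : Expands G A) (K : ℝ) (hK : 0 < K)
    (hdeg : ∀ x ∈ A, (G.degree x : ℝ) ≤ K) (g : Fin N → ℝ) (hg : ∀ x, 0 ≤ g x)
    (hcard : 2 * (A.filter (fun x => g x ≠ 0)).card ≤ A.card) :
    ∑ x ∈ A, g x ^ 2 ≤ 4 * K * ∑ x ∈ A, ∑ y ∈ A, gr G g x y := by
  have h1 := cheeger_L1 G A hA _ (fun x => g x ^ 2) (fun x => by positivity) rfl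
    (by simpa using hcard)
  have h2 : ∑ x ∈ A, ∑ y ∈ A, (if G.Adj x y then |g x ^ 2 - g y ^ 2| else 0) ≤
      ∑ x ∈ A, ∑ y ∈ A, (2 * K * gr G g x y + (1 / (4 * K)) *
        ((if G.Adj x y then 1 else 0) * g x ^ 2) + (1 / (4 * K)) *
        ((if G.Adj y x then 1 else 0) * g y ^ 2)) := by
    refine Finset.sum_le_sum fun x _ => Finset.sum_le_sum fun y _ => ?_
    unfold gr
    by_cases h : G.Adj x y
    · simp only [if_pos h, if_pos h.symm, one_mul]
      have e1 : |g x ^ 2 - g y ^ 2| = |g x - g y| * (g x + g y) := by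
        rw [show g x ^ 2 - g y ^ 2 = (g x - g y) * (g x + g y) by ring, abs_mul,
          abs_of_nonneg (add_nonneg (hg x) (hg y))]
      rw [e1, ← sq_abs (g x - g y)]
      set a := |g x - g y|
      have e2 : a * (g x + g y) ≤ 2 * K * a ^ 2 + (1 / (8 * K)) * (g x + g y) ^ 2 := by
        have : 0 ≤ (4 * K * a - (g x + g y)) ^ 2 / (8 * K) := by positivity
        have e3 : (4 * K * a - (g x + g y)) ^ 2 / (8 * K) =
          2 * K * a ^ 2 + (1 / (8 * K)) * (g x + g y) ^ 2 - a * (g x + g y) := by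
          field_simp; ring
        linarith
      have e4 : (1 / (8 * K)) * (g x + g y) ^ 2 ≤ (1 / (4 * K)) * g x ^ 2 + (1 / (4 * K)) * g y ^ 2 := by
        have : (1 / (4 * K)) * g x ^ 2 + (1 / (4 * K)) * g y ^ 2 - (1 / (8 * K)) * (g x + g y) ^ 2 =
          (1 / (8 * K)) * (g x - g y) ^ 2 := by field_simp; ring
        have : 0 ≤ (1 / (8 * K)) * (g x - g y) ^ 2 := by positivity
        linarith
      linarith
    · have h' : ¬ G.Adj y x := fun h' => h h'.symm
      simp [h, h']
  have h3 : ∑ x ∈ A, ∑ y ∈ A, (if G.Adj x y then (1:ℝ) else 0) * g x ^ 2 ≤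
      K * ∑ x ∈ A, g x ^ 2 := by
    rw [Finset.mul_sum]
    refine Finset.sum_le_sum fun x hx => ?_
    rw [← Finset.sum_mul]
    exact mul_le_mul_of_nonneg_right ((sum_adj_le_degree G A x).trans (hdeg x hx)) (by positivity)
  have h4 : ∑ x ∈ A, ∑ y ∈ A, (if G.Adj y x then (1:ℝ) else 0) * g y ^ 2 ≤
      K * ∑ x ∈ A, g x ^ 2 := by
    rw [Finset.sum_comm]
    exact h3
  simp only [Finset.sum_add_distrib, ← Finset.mul_sum] at h2
  have h5 : (1 / (4 * K)) * (∑ x ∈ A, ∑ y ∈ A, (if G.Adj x y then (1:ℝ) else 0) * g x ^ 2) ≤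
      1 / 4 * ∑ x ∈ A, g x ^ 2 := by
    calc _ ≤ (1 / (4 * K)) * (K * ∑ x ∈ A, g x ^ 2) :=
          mul_le_mul_of_nonneg_left h3 (by positivity)
      _ = _ := by field_simp
  have h6 : (1 / (4 * K)) * (∑ x ∈ A, ∑ y ∈ A, (if G.Adj y x then (1:ℝ) else 0) * g y ^ 2) ≤
      1 / 4 * ∑ x ∈ A, g x ^ 2 := by
    calc _ ≤ (1 / (4 * K)) * (K * ∑ x ∈ A, g x ^ 2) :=
          mul_le_mul_of_nonneg_left h4 (by positivity)
      _ = _ := by field_simp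
  linarith

lemma exists_median (A : Finset (Fin N)) (hne : A.Nonempty) (f : Fin N → ℝ) :
    ∃ m : ℝ, 2 * (A.filter (fun x => f x < m)).card ≤ A.card ∧
      2 * (A.filter (fun x => m < f x)).card ≤ A.card := by
  set Q := A.filter (fun a => 2 * (A.filter (fun x => f x < f a)).card ≤ A.card) with hQ
  have hQne : Q.Nonempty := by
    obtain ⟨a, ha, hmin⟩ := Finset.exists_min_image A f hne
    refine ⟨a, Finset.mem_filter.2 ⟨ha, ?_⟩⟩
    rw [Finset.filter_false_of_mem]
    · simp
    · intro x hx
      exact not_lt.2 (hmin x hx)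
  obtain ⟨a, ha, hmax⟩ := Finset.exists_max_image Q f hQne
  refine ⟨f a, (Finset.mem_filter.1 ha).2, ?_⟩
  by_contra hcon
  push Not at hcon
  set R := A.filter (fun x => f a < f x) with hR
  have hRne : R.Nonempty := by
    rw [← Finset.card_pos]; omega
  obtain ⟨b, hb, hbmin⟩ := Finset.exists_min_image R f hRne
  have hbA := (Finset.mem_filter.1 hb).1
  have hbQ : b ∈ Q := by
    refine Finset.mem_filter.2 ⟨hbA, ?_⟩
    have hsub : A.filter (fun x => f x < f b) ⊆ A \ R := by
      intro x hx
      have hx' := Finset.mem_filter.1 hx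
      refine Finset.mem_sdiff.2 ⟨hx'.1, fun h => ?_⟩
      exact absurd (hbmin x h) (not_le.2 hx'.2)
    have h1 := Finset.card_le_card hsub
    have hRA : R ⊆ A := Finset.filter_subset _ _
    have h3 := Finset.card_le_card hRA
    have h2 : (A \ R).card = A.card - R.card := Finset.card_sdiff_of_subset hRA
    omega
  exact absurd (hmax b hbQ) (not_le.2 (Finset.mem_filter.1 hb).2)

lemma cheeger (A : Finset (Fin N)) (hne : A.Nonempty) (hA : Expands G A) (K : ℝ) (hK : 0 < K)
    (hdeg : ∀ x ∈ A, (G.degree x : ℝ) ≤ K) (f : Fin N → ℝ) :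
    ∃ m : ℝ, ∑ x ∈ A, (f x - m) ^ 2 ≤ 8 * K * ∑ x ∈ A, ∑ y ∈ A, gr G f x y := by
  obtain ⟨m, hm1, hm2⟩ := exists_median A hne f
  refine ⟨m, ?_⟩
  have hp := cheeger_L2 G A hA K hK hdeg (fun x => max (f x - m) 0) (fun x => le_max_right _ _)
    (by
      refine le_trans (Nat.mul_le_mul_left 2 (Finset.card_le_card ?_)) hm2
      intro x hx
      have hx' := Finset.mem_filter.1 hx
      refine Finset.mem_filter.2 ⟨hx'.1, ?_⟩
      by_contra h
      exact hx'.2 (max_eq_right (by linarith)))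
  have hq := cheeger_L2 G A hA K hK hdeg (fun x => max (m - f x) 0) (fun x => le_max_right _ _)
    (by
      refine le_trans (Nat.mul_le_mul_left 2 (Finset.card_le_card ?_)) hm1
      intro x hx
      have hx' := Finset.mem_filter.1 hx
      refine Finset.mem_filter.2 ⟨hx'.1, ?_⟩
      by_contra h
      exact hx'.2 (max_eq_right (by linarith)))
  have hgr1 : ∀ x y, gr G (fun x => max (f x - m) 0) x y ≤ gr G f x y := by
    intro x y
    unfold gr
    split_ifs
    · apply sq_le_sq.2
      refine (abs_max_sub_max_le_abs _ _ _).trans (le_of_eq ?_)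
      congr 1; ring
    · exact le_rfl
  have hgr2 : ∀ x y, gr G (fun x => max (m - f x) 0) x y ≤ gr G f x y := by
    intro x y
    unfold gr
    split_ifs
    · apply sq_le_sq.2
      refine (abs_max_sub_max_le_abs _ _ _).trans (le_of_eq ?_)
      rw [abs_sub_comm]
      congr 1; ring
    · exact le_rfl
  have h1 : ∑ x ∈ A, (f x - m) ^ 2 = ∑ x ∈ A, max (f x - m) 0 ^ 2 + ∑ x ∈ A, max (m - f x) 0 ^ 2 := by
    rw [← Finset.sum_add_distrib]
    refine Finset.sum_congr rfl fun x _ => ?_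
    rcases le_total (f x) m with h | h
    · rw [max_eq_right (by linarith), max_eq_left (by linarith)]; ring
    · rw [max_eq_left (by linarith), max_eq_right (by linarith)]; ring
  have h2 : ∑ x ∈ A, ∑ y ∈ A, gr G (fun x => max (f x - m) 0) x y ≤
      ∑ x ∈ A, ∑ y ∈ A, gr G f x y :=
    Finset.sum_le_sum fun x _ => Finset.sum_le_sum fun y _ => hgr1 x y
  have h3 : ∑ x ∈ A, ∑ y ∈ A, gr G (fun x => max (m - f x) 0) x y ≤
      ∑ x ∈ A, ∑ y ∈ A, gr G f x y :=
    Finset.sum_le_sum fun x _ => Finset.sum_le_sum fun y _ => hgr2 x y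
  rw [h1]
  nlinarith

/-- connectivity of a finite vertex set, via cuts -/
def CutConn (S : Finset (Fin N)) : Prop :=
  ∀ T ⊆ S, T.Nonempty → T ≠ S → ∃ x ∈ T, ∃ y ∈ S \ T, G.Adj x y

lemma cutConn_osc (S : Finset (Fin N)) (hS : CutConn G S) (f : Fin N → ℝ) (x y : Fin N)
    (hx : x ∈ S) (hy : y ∈ S) :
    (f x - f y) ^ 2 ≤ (S.card : ℝ) ^ 2 * ∑ a ∈ S, ∑ b ∈ S, gr G f a b := by
  set E := ∑ a ∈ S, ∑ b ∈ S, gr G f a b with hE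
  have hE0 : 0 ≤ E := Finset.sum_nonneg fun a _ => Finset.sum_nonneg fun b _ => gr_nonneg G f a b
  set δ := Real.sqrt E with hδ
  have hδ0 : 0 ≤ δ := Real.sqrt_nonneg _
  have hedge : ∀ a ∈ S, ∀ b ∈ S, G.Adj a b → |f a - f b| ≤ δ := by
    intro a ha b hb hab
    apply Real.abs_le_sqrt
    have h1 : gr G f a b ≤ ∑ b ∈ S, gr G f a b :=
      Finset.single_le_sum (f := fun b => gr G f a b) (fun b _ => gr_nonneg G f a b) hb
    have h2 : ∑ b ∈ S, gr G f a b ≤ E :=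
      Finset.single_le_sum (f := fun a => ∑ b ∈ S, gr G f a b)
        (fun a _ => Finset.sum_nonneg fun b _ => gr_nonneg G f a b) ha
    have h3 : gr G f a b = (f a - f b) ^ 2 := by simp [gr, hab]
    linarith
  have hgrow : ∀ j : ℕ, S.filter (fun z => |f x - f z| ≤ j * δ) = S ∨
      j + 1 ≤ (S.filter (fun z => |f x - f z| ≤ j * δ)).card := by
    intro j
    induction j with
    | zero =>
      right
      rw [zero_add, Nat.one_le_iff_ne_zero, ← Nat.pos_iff_ne_zero, Finset.card_pos]
      exact ⟨x, Finset.mem_filter.2 ⟨hx, by simp⟩⟩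
    | succ j ih =>
      have hsub : S.filter (fun z => |f x - f z| ≤ j * δ) ⊆
          S.filter (fun z => |f x - f z| ≤ (j + 1 : ℕ) * δ) := by
        intro z hz
        have hz' := Finset.mem_filter.1 hz
        refine Finset.mem_filter.2 ⟨hz'.1, hz'.2.trans ?_⟩
        push_cast
        nlinarith
      by_cases hfull : S.filter (fun z => |f x - f z| ≤ j * δ) = S
      · left
        refine Finset.Subset.antisymm (Finset.filter_subset _ _) ?_
        rw [hfull] at hsub
        exact hsub
      · right
        have hcard := ih.resolve_left hfull
        obtain ⟨a, ha, b, hb, hab⟩ := hS _ (Finset.filter_subset _ _)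
          ⟨x, Finset.mem_filter.2 ⟨hx, by simpa using mul_nonneg (Nat.cast_nonneg j) hδ0⟩⟩ hfull
        have ha' := Finset.mem_filter.1 ha
        have hb' := Finset.mem_sdiff.1 hb
        have hss : S.filter (fun z => |f x - f z| ≤ j * δ) ⊂
            S.filter (fun z => |f x - f z| ≤ (j + 1 : ℕ) * δ) := by
          refine Finset.ssubset_iff_subset_ne.2 ⟨hsub, fun h => hb'.2 ?_⟩
          rw [h]
          refine Finset.mem_filter.2 ⟨hb'.1, ?_⟩
          have h1 := hedge a ha'.1 b hb'.1 hab
          have h2 := abs_sub_le (f x) (f a) (f b)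
          push_cast
          linarith [ha'.2]
        have := Finset.card_lt_card hss
        omega
  have hall : |f x - f y| ≤ S.card * δ := by
    rcases hgrow S.card with h | h
    · rw [← h] at hy
      exact (Finset.mem_filter.1 hy).2
    · exact absurd (Finset.card_le_card (Finset.filter_subset (fun z => |f x - f z| ≤ S.card * δ) S))
        (by omega)
  calc (f x - f y) ^ 2 = |f x - f y| ^ 2 := (sq_abs _).symm
    _ ≤ (S.card * δ) ^ 2 := by
        apply pow_le_pow_left₀ (abs_nonneg _) hall
    _ = _ := by rw [mul_pow, hδ, Real.sq_sqrt hE0]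

end Cheeger

section GoodGraph

variable {N : ℕ} (G : SimpleGraph (Fin N)) (θ : ℝ)

/-- adjacency indicator -/
def ad (x y : Fin N) : ℝ := if G.Adj x y then 1 else 0

lemma ad_nonneg (x y : Fin N) : 0 ≤ ad G x y := by unfold ad; split_ifs <;> norm_num

lemma ad_symm (x y : Fin N) : ad G x y = ad G y x := by unfold ad; simp only [G.adj_comm]

lemma sum_ad_le (A : Finset (Fin N)) (x : Fin N) : ∑ y ∈ A, ad G x y ≤ G.degree x :=
  sum_adj_le_degree G A x

lemma gr_eq (f : Fin N → ℝ) (x y : Fin N) : gr G f x y = ad G x y * (f x - f y) ^ 2 := by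
  unfold gr ad; split_ifs <;> simp

lemma gr_symm (f : Fin N → ℝ) (x y : Fin N) : gr G f x y = gr G f y x := by
  rw [gr_eq, gr_eq, ad_symm]; ring

/-- local energy -/
def eng (f : Fin N → ℝ) (x : Fin N) : ℝ := ∑ z, cw G θ x z * (f x - f z) ^ 2

lemma eng_nonneg (f : Fin N → ℝ) (x : Fin N) : 0 ≤ eng G θ f x :=
  Finset.sum_nonneg fun z _ => mul_nonneg (cw_nonneg G θ x z) (sq_nonneg _)

lemma sum_eng_le (f : Fin N → ℝ) (S : Finset (Fin N)) : ∑ x ∈ S, eng G θ f x ≤ en G θ f :=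
  Finset.sum_le_sum_of_subset_of_nonneg (Finset.subset_univ S) fun x _ _ => eng_nonneg G θ f x

lemma en_nonneg (f : Fin N → ℝ) : 0 ≤ en G θ f :=
  Finset.sum_nonneg fun x _ => eng_nonneg G θ f x

/-- deterministic good-graph structure -/
structure Good (H A : Finset (Fin N)) (P : Fin N → Finset (Fin N)) (K W : ℝ) : Prop where
  K1 : 1 ≤ K
  W1 : 1 ≤ W
  Ane : A.Nonempty
  disj : Disjoint H A
  deg : ∀ x ∉ H, (G.degree x : ℝ) ≤ K
  hub : ∀ h ∈ H, (G.degree h : ℝ) ≤ K * ∑ a ∈ A, ad G h a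
  hub1 : ∀ h ∈ H, 1 ≤ ∑ a ∈ A, ad G h a
  expands : Expands G A
  pmem : ∀ x ∉ H ∪ A, x ∈ P x
  pout : ∀ x ∉ H ∪ A, ∀ y ∈ P x, y ∉ H ∪ A
  peq : ∀ x ∉ H ∪ A, ∀ y ∈ P x, P y = P x
  pcard : ∀ x ∉ H ∪ A, ((P x).card : ℝ) ≤ K
  pcut : ∀ x ∉ H ∪ A, CutConn G (P x)
  patt : ∀ x ∉ H ∪ A, (∃ b ∈ P x, ∃ q ∈ H ∪ A, G.Adj b q) ∨
    (∀ b ∈ P x, ∀ y, G.Adj b y → y ∈ P x)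
  hw : ∀ x z, x ∉ H → G.Adj x z → 1 ≤ W * cw G θ x z

variable {G θ} {H A : Finset (Fin N)} {P : Fin N → Finset (Fin N)} {K W : ℝ}

/-- vertices attached to the core -/
def attU (G : SimpleGraph (Fin N)) (H A : Finset (Fin N)) (P : Fin N → Finset (Fin N)) :
    Finset (Fin N) :=
  Finset.univ.filter fun x => x ∉ H ∪ A ∧ ∃ b ∈ P x, ∃ q ∈ H ∪ A, G.Adj b q

lemma Good.gr_le (hg : Good G θ H A P K W) (f : Fin N → ℝ) (x : Fin N) (hx : x ∉ H)
    (S : Finset (Fin N)) : ∑ z ∈ S, gr G f x z ≤ W * eng G θ f x := by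
  have h1 : ∑ z ∈ S, gr G f x z ≤ ∑ z, gr G f x z :=
    Finset.sum_le_sum_of_subset_of_nonneg (Finset.subset_univ S) fun z _ _ => gr_nonneg G f x z
  refine h1.trans ?_
  unfold eng
  rw [Finset.mul_sum]
  refine Finset.sum_le_sum fun z _ => ?_
  have hW := hg.W1
  unfold gr
  split_ifs with h
  · have := hg.hw x z hx h
    have h2 : 0 ≤ (f x - f z) ^ 2 := sq_nonneg _
    nlinarith
  · have := cw_nonneg G θ x z
    positivity

lemma Good.gr_le2 (hg : Good G θ H A P K W) (f : Fin N → ℝ) (T S : Finset (Fin N))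
    (hT : ∀ x ∈ T, x ∉ H) : ∑ x ∈ T, ∑ z ∈ S, gr G f x z ≤ W * en G θ f := by
  have hW := hg.W1
  calc ∑ x ∈ T, ∑ z ∈ S, gr G f x z ≤ ∑ x ∈ T, W * eng G θ f x :=
        Finset.sum_le_sum fun x hx => hg.gr_le f x (hT x hx) S
    _ = W * ∑ x ∈ T, eng G θ f x := by rw [Finset.mul_sum]
    _ ≤ _ := mul_le_mul_of_nonneg_left (sum_eng_le G θ f T) (by linarith)

lemma Good.core (hg : Good G θ H A P K W) (f : Fin N → ℝ) :
    ∃ m, ∑ x ∈ H ∪ A, (f x - m) ^ 2 ≤ 26 * K ^ 3 * W * en G θ f ∧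
      ∑ x ∈ H ∪ A, (G.degree x : ℝ) * (f x - m) ^ 2 ≤ 26 * K ^ 3 * W * en G θ f := by
  have hK := hg.K1
  have hW := hg.W1
  have hE := en_nonneg G θ f
  have hAH : ∀ x ∈ A, x ∉ H := fun x hx hx' => Finset.disjoint_left.1 hg.disj hx' hx
  obtain ⟨m, hm⟩ := cheeger G A hg.Ane hg.expands K (by linarith)
    (fun x hx => hg.deg x (hAH x hx)) f
  refine ⟨m, ?_⟩
  set E := en G θ f with hEdef
  have hWE : 0 ≤ W * E := by positivity
  have hA1 : ∑ x ∈ A, (f x - m) ^ 2 ≤ 8 * K * (W * E) :=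
    hm.trans (mul_le_mul_of_nonneg_left (hg.gr_le2 f A A hAH) (by linarith))
  have hA2 : ∑ x ∈ A, (G.degree x : ℝ) * (f x - m) ^ 2 ≤ K * (8 * K * (W * E)) := by
    calc _ ≤ ∑ x ∈ A, K * (f x - m) ^ 2 := Finset.sum_le_sum fun x hx =>
          mul_le_mul_of_nonneg_right (hg.deg x (hAH x hx)) (sq_nonneg _)
      _ = K * ∑ x ∈ A, (f x - m) ^ 2 := by rw [Finset.mul_sum]
      _ ≤ _ := mul_le_mul_of_nonneg_left hA1 (by linarith)
  have hH2 : ∑ h ∈ H, (G.degree h : ℝ) * (f h - m) ^ 2 ≤ 18 * K ^ 3 * (W * E) := by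
    have s1 : ∑ h ∈ H, (G.degree h : ℝ) * (f h - m) ^ 2 ≤
        ∑ h ∈ H, ∑ a ∈ A, (2 * K * gr G f a h + 2 * K * (ad G a h * (f a - m) ^ 2)) := by
      refine Finset.sum_le_sum fun h hh => ?_
      calc (G.degree h : ℝ) * (f h - m) ^ 2 ≤ (K * ∑ a ∈ A, ad G h a) * (f h - m) ^ 2 :=
            mul_le_mul_of_nonneg_right (hg.hub h hh) (sq_nonneg _)
        _ = ∑ a ∈ A, K * (ad G h a * (f h - m) ^ 2) := by
            rw [mul_assoc, Finset.sum_mul, Finset.mul_sum]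
        _ ≤ _ := by
            refine Finset.sum_le_sum fun a _ => ?_
            rw [gr_eq, ad_symm G a h]
            have h0 := ad_nonneg G h a
            have h1 : (f h - m) ^ 2 ≤ 2 * (f a - f h) ^ 2 + 2 * (f a - m) ^ 2 := by
              nlinarith [sq_nonneg ((f a - f h) + (f a - m))]
            have h2 : 0 ≤ K * ad G h a := by positivity
            nlinarith
    have s2 : ∑ h ∈ H, ∑ a ∈ A, gr G f a h ≤ W * E := by
      rw [Finset.sum_comm]; exact hg.gr_le2 f A H hAH
    have s3 : ∑ h ∈ H, ∑ a ∈ A, ad G a h * (f a - m) ^ 2 ≤ K * (8 * K * (W * E)) := by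
      rw [Finset.sum_comm]
      refine le_trans (Finset.sum_le_sum fun a _ => ?_) hA2
      rw [← Finset.sum_mul]
      exact mul_le_mul_of_nonneg_right (sum_ad_le G H a) (sq_nonneg _)
    simp only [Finset.sum_add_distrib, ← Finset.mul_sum] at s1
    have t1 := mul_le_mul_of_nonneg_left s2 (show 0 ≤ 2 * K by linarith)
    have t2 := mul_le_mul_of_nonneg_left s3 (show 0 ≤ 2 * K by linarith)
    have t3 : K * (W * E) ≤ K ^ 3 * (W * E) :=
      mul_le_mul_of_nonneg_right (le_self_pow₀ hK (by norm_num)) hWE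
    nlinarith
  have hH1 : ∑ h ∈ H, (f h - m) ^ 2 ≤ 18 * K ^ 3 * (W * E) := by
    refine le_trans (Finset.sum_le_sum fun h hh => ?_) hH2
    have h1 := (hg.hub1 h hh).trans (sum_ad_le G A h)
    nlinarith [sq_nonneg (f h - m)]
  have t3 : K * (W * E) ≤ K ^ 3 * (W * E) :=
      mul_le_mul_of_nonneg_right (le_self_pow₀ hK (by norm_num)) hWE
  have t4 : K ^ 2 * (W * E) ≤ K ^ 3 * (W * E) :=
      mul_le_mul_of_nonneg_right (pow_le_pow_right₀ hK (by norm_num)) hWE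
  constructor
  · rw [Finset.sum_union hg.disj]; nlinarith
  · rw [Finset.sum_union hg.disj]; nlinarith

lemma Good.poincare (hg : Good G θ H A P K W) (f : Fin N → ℝ) :
    ∃ m, ∑ x ∈ (H ∪ A) ∪ attU G H A P, (f x - m) ^ 2 ≤ 110 * K ^ 4 * W * en G θ f := by
  have hK := hg.K1
  have hW := hg.W1
  obtain ⟨m, hm1, hm2⟩ := hg.core f
  refine ⟨m, ?_⟩
  have hE := en_nonneg G θ f
  set E := en G θ f with hEdef
  have hWE : 0 ≤ W * E := by positivity
  set B : Finset (Fin N) := Finset.univ.filter fun x => x ∉ H ∪ A with hB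
  have hBm : ∀ x, x ∈ B ↔ x ∉ H ∪ A := fun x => by simp [hB]
  set φ : Fin N → ℝ := fun y => 3 * (K ^ 2 + 1) * ∑ z, gr G f y z +
    3 * ∑ q ∈ H ∪ A, ad G y q * (f q - m) ^ 2 with hφ
  have hφ0 : ∀ y, 0 ≤ φ y := fun y => by
    have h1 : 0 ≤ ∑ z, gr G f y z := Finset.sum_nonneg fun z _ => gr_nonneg G f y z
    have h2 : 0 ≤ ∑ q ∈ H ∪ A, ad G y q * (f q - m) ^ 2 :=
      Finset.sum_nonneg fun q _ => mul_nonneg (ad_nonneg G y q) (sq_nonneg _)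
    simp only [hφ]; positivity
  have key : ∀ x ∈ attU G H A P, (f x - m) ^ 2 ≤ ∑ y ∈ P x, φ y := by
    intro x hx
    obtain ⟨hxc, b, hb, q, hq, hbq⟩ := (Finset.mem_filter.1 hx).2
    have o1 := cutConn_osc G (P x) (hg.pcut x hxc) f x b (hg.pmem x hxc) hb
    have c1 : ((P x).card : ℝ) ^ 2 ≤ K ^ 2 := by
      have := hg.pcard x hxc
      gcongr
    have g1 : ∑ a ∈ P x, ∑ b ∈ P x, gr G f a b ≤ ∑ a ∈ P x, ∑ z, gr G f a z :=
      Finset.sum_le_sum fun a _ => Finset.sum_le_sum_of_subset_of_nonneg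
        (Finset.subset_univ _) fun z _ _ => gr_nonneg G f a z
    have g0 : 0 ≤ ∑ a ∈ P x, ∑ b ∈ P x, gr G f a b :=
      Finset.sum_nonneg fun a _ => Finset.sum_nonneg fun z _ => gr_nonneg G f a z
    have o2 : (f x - f b) ^ 2 ≤ K ^ 2 * ∑ a ∈ P x, ∑ z, gr G f a z :=
      o1.trans (mul_le_mul c1 g1 g0 (by positivity))
    have o3 : (f b - f q) ^ 2 ≤ ∑ a ∈ P x, ∑ z, gr G f a z := by
      have e1 : (f b - f q) ^ 2 = gr G f b q := by simp [gr, hbq]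
      rw [e1]
      refine le_trans ?_ (Finset.single_le_sum (f := fun a => ∑ z, gr G f a z)
        (fun a _ => Finset.sum_nonneg fun z _ => gr_nonneg G f a z) hb)
      exact Finset.single_le_sum (f := fun z => gr G f b z)
        (fun z _ => gr_nonneg G f b z) (Finset.mem_univ q)
    have o4 : (f q - m) ^ 2 ≤ ∑ a ∈ P x, ∑ q ∈ H ∪ A, ad G a q * (f q - m) ^ 2 := by
      have e1 : (f q - m) ^ 2 = ad G b q * (f q - m) ^ 2 := by simp [ad, hbq]
      rw [e1]
      refine le_trans ?_ (Finset.single_le_sum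
        (f := fun a => ∑ q ∈ H ∪ A, ad G a q * (f q - m) ^ 2)
        (fun a _ => Finset.sum_nonneg fun z _ => mul_nonneg (ad_nonneg G a z) (sq_nonneg _)) hb)
      exact Finset.single_le_sum (f := fun z => ad G b z * (f z - m) ^ 2)
        (fun z _ => mul_nonneg (ad_nonneg G b z) (sq_nonneg _)) hq
    have t : (f x - m) ^ 2 ≤ 3 * (f x - f b) ^ 2 + 3 * (f b - f q) ^ 2 + 3 * (f q - m) ^ 2 := by
      nlinarith [sq_nonneg ((f x - f b) - (f b - f q)), sq_nonneg ((f x - f b) - (f q - m)),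
        sq_nonneg ((f b - f q) - (f q - m))]
    simp only [hφ, Finset.sum_add_distrib, ← Finset.mul_sum]
    linarith
  have hsum : ∑ x ∈ attU G H A P, (f x - m) ^ 2 ≤ K * ∑ y ∈ B, φ y := by
    calc ∑ x ∈ attU G H A P, (f x - m) ^ 2 ≤ ∑ x ∈ attU G H A P, ∑ y ∈ P x, φ y :=
          Finset.sum_le_sum key
      _ ≤ ∑ x ∈ B, ∑ y ∈ P x, φ y := by
          refine Finset.sum_le_sum_of_subset_of_nonneg ?_ fun x _ _ =>
            Finset.sum_nonneg fun y _ => hφ0 y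
          intro x hx
          exact (hBm x).2 (Finset.mem_filter.1 hx).2.1
      _ = ∑ x ∈ B, ∑ y ∈ B, if y ∈ P x then φ y else 0 := by
          refine Finset.sum_congr rfl fun x hx => ?_
          rw [← Finset.sum_filter]
          refine Finset.sum_congr ?_ fun _ _ => rfl
          ext y
          simp only [Finset.mem_filter]
          exact ⟨fun h => ⟨(hBm y).2 (hg.pout x ((hBm x).1 hx) y h), h⟩, fun h => h.2⟩
      _ = ∑ y ∈ B, ∑ x ∈ B, if y ∈ P x then φ y else 0 := Finset.sum_comm
      _ ≤ ∑ y ∈ B, K * φ y := by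
          refine Finset.sum_le_sum fun y hy => ?_
          rw [← Finset.sum_filter, Finset.sum_const, nsmul_eq_mul]
          refine mul_le_mul_of_nonneg_right ?_ (hφ0 y)
          refine le_trans ?_ (hg.pcard y ((hBm y).1 hy))
          norm_cast
          refine Finset.card_le_card fun x hx => ?_
          have hx' := Finset.mem_filter.1 hx
          have hxc := (hBm x).1 hx'.1
          rw [hg.peq x hxc y hx'.2]
          exact hg.pmem x hxc
      _ = _ := by rw [Finset.mul_sum]
  have hBH : ∀ x ∈ B, x ∉ H := fun x hx h => (hBm x).1 hx (Finset.mem_union_left _ h)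
  have hφs : ∑ y ∈ B, φ y ≤ 3 * (K ^ 2 + 1) * (W * E) + 3 * (26 * K ^ 3 * W * E) := by
    simp only [hφ, Finset.sum_add_distrib, ← Finset.mul_sum]
    have a1 : ∑ y ∈ B, ∑ z, gr G f y z ≤ W * E := hg.gr_le2 f B Finset.univ hBH
    have a2 : ∑ y ∈ B, ∑ q ∈ H ∪ A, ad G y q * (f q - m) ^ 2 ≤ 26 * K ^ 3 * W * E := by
      rw [Finset.sum_comm]
      refine le_trans (Finset.sum_le_sum fun q _ => ?_) hm2
      rw [← Finset.sum_mul]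
      refine mul_le_mul_of_nonneg_right ?_ (sq_nonneg _)
      simp only [fun y => ad_symm G y q]
      exact sum_ad_le G B q
    have := mul_le_mul_of_nonneg_left a1 (show 0 ≤ 3 * (K ^ 2 + 1) by positivity)
    linarith
  have hdisj : Disjoint (H ∪ A) (attU G H A P) := by
    rw [Finset.disjoint_left]
    intro x hx hx'
    exact (Finset.mem_filter.1 hx').2.1 hx
  rw [Finset.sum_union hdisj]
  have q1 : K * ∑ y ∈ B, φ y ≤ K * (3 * (K ^ 2 + 1) * (W * E) + 3 * (26 * K ^ 3 * W * E)) :=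
    mul_le_mul_of_nonneg_left hφs (by linarith)
  have t1 : K * (W * E) ≤ K ^ 4 * (W * E) :=
      mul_le_mul_of_nonneg_right (le_self_pow₀ hK (by norm_num)) hWE
  have t3 : K ^ 3 * (W * E) ≤ K ^ 4 * (W * E) :=
      mul_le_mul_of_nonneg_right (pow_le_pow_right₀ hK (by norm_num)) hWE
  nlinarith

/-- the giant set -/
def UU (G : SimpleGraph (Fin N)) (H A : Finset (Fin N)) (P : Fin N → Finset (Fin N)) :
    Finset (Fin N) := (H ∪ A) ∪ attU G H A P

lemma Good.not_mem_UU (hg : Good G θ H A P K W) (y : Fin N) (hy : y ∉ UU G H A P) :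
    y ∉ H ∪ A ∧ ∀ x, G.Reachable y x → x ∈ P y := by
  have h1 : y ∉ H ∪ A := fun h => hy (Finset.mem_union_left _ h)
  refine ⟨h1, ?_⟩
  have h2 : ∀ b ∈ P y, ∀ z, G.Adj b z → z ∈ P y := by
    rcases hg.patt y h1 with h | h
    · exact absurd (Finset.mem_union_right _
        (Finset.mem_filter.2 ⟨Finset.mem_univ y, h1, h⟩)) hy
    · exact h
  rintro x ⟨w⟩
  have : ∀ (a b : Fin N) (w : G.Walk a b), a ∈ P y → b ∈ P y := by
    intro a b w
    induction w with
    | nil => exact fun h => h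
    | cons h _ ih => exact fun ha => ih (h2 _ ha _ h)
  exact this y x w (hg.pmem y h1)

lemma Good.mem_UU (hg : Good G θ H A P K W) (x y : Fin N) (hy : y ∈ UU G H A P)
    (hr : G.Reachable y x) : x ∈ UU G H A P := by
  by_contra hx
  obtain ⟨h1, h2⟩ := hg.not_mem_UU x hx
  have h3 := h2 y hr.symm
  rcases Finset.mem_union.1 hy with h | h
  · exact hg.pout x h1 y h3 h
  · have := (Finset.mem_filter.1 h).2.2
    rw [hg.peq x h1 y h3] at this
    exact hx (Finset.mem_union_right _ (Finset.mem_filter.2 ⟨Finset.mem_univ x, h1, this⟩))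

lemma Good.row_out (hg : Good G θ H A P K W) (y : Fin N) (hy : y ∉ UU G H A P)
    (f : Fin N → ℝ) (hf : ∀ x, ¬ G.Reachable x y → f x = 0) (hfy : f y = 0) :
    ∑ x, f x ^ 2 ≤ 110 * K ^ 4 * W * en G θ f := by
  have hK := hg.K1
  have hW := hg.W1
  have hE := en_nonneg G θ f
  obtain ⟨h1, h2⟩ := hg.not_mem_UU y hy
  have e1 : ∑ x, f x ^ 2 = ∑ x ∈ P y, f x ^ 2 := by
    symm
    refine Finset.sum_subset (Finset.subset_univ _) fun x _ hx => ?_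
    rw [hf x fun h => hx (h2 x h.symm)]; norm_num
  rw [e1]
  have hPH : ∀ x ∈ P y, x ∉ H := fun x hx h => hg.pout y h1 x hx (Finset.mem_union_left _ h)
  have hc := hg.pcard y h1
  have hgr := hg.gr_le2 f (P y) (P y) hPH
  have g0 : 0 ≤ ∑ a ∈ P y, ∑ b ∈ P y, gr G f a b :=
      Finset.sum_nonneg fun a _ => Finset.sum_nonneg fun z _ => gr_nonneg G f a z
  have h3 : ∀ x ∈ P y, f x ^ 2 ≤ K ^ 2 * (W * en G θ f) := by
    intro x hx
    have := cutConn_osc G (P y) (hg.pcut y h1) f x y hx (hg.pmem y h1)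
    rw [hfy, sub_zero] at this
    refine this.trans (mul_le_mul ?_ hgr g0 (by positivity))
    gcongr
  have h4 := Finset.sum_le_card_nsmul _ _ _ h3
  rw [nsmul_eq_mul] at h4
  have hWE : 0 ≤ W * en G θ f := by positivity
  have h5 : ((P y).card : ℝ) * (K ^ 2 * (W * en G θ f)) ≤ K * (K ^ 2 * (W * en G θ f)) :=
    mul_le_mul_of_nonneg_right hc (by positivity)
  have t3 : K ^ 3 * (W * en G θ f) ≤ K ^ 4 * (W * en G θ f) :=
      mul_le_mul_of_nonneg_right (pow_le_pow_right₀ hK (by norm_num)) hWE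
  have t4 : 0 ≤ K ^ 4 * (W * en G θ f) := by positivity
  nlinarith

/-- splitting of the double sum into rows -/
lemma Good.assemble (hg : Good G θ H A P K W) (T : ℝ) (hT : 110 * K ^ 4 * W ≤ T)
    (Q : Fin N → Fin N → ℝ) (h0 : ∀ x, Q x x = 0)
    (hr : ∀ x y, ¬ G.Reachable x y → Q x y = 0)
    (hin : ∑ y ∈ UU G H A P, ∑ x ∈ UU G H A P, Q x y ^ 2 ≤
      T * ∑ y ∈ UU G H A P, en G θ (fun x => Q x y)) :
    ∑ y, ∑ x, Q x y ^ 2 ≤ T * ∑ y, en G θ (fun x => Q x y) := by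
  rw [← Finset.sum_compl_add_sum (UU G H A P) (fun y => ∑ x, Q x y ^ 2),
    ← Finset.sum_compl_add_sum (UU G H A P) (fun y => en G θ (fun x => Q x y)), mul_add]
  refine add_le_add ?_ (le_trans (le_of_eq ?_) hin)
  · rw [Finset.mul_sum]
    refine Finset.sum_le_sum fun y hy => ?_
    have := hg.row_out y (Finset.mem_compl.1 hy) (fun x => Q x y) (fun x h => hr x y h) (h0 y)
    exact this.trans (mul_le_mul_of_nonneg_right hT (en_nonneg G θ _))
  · refine Finset.sum_congr rfl fun y hy => ?_
    symm
    refine Finset.sum_subset (Finset.subset_univ _) fun x _ hx => ?_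
    rw [hr x y fun h => hx (hg.mem_UU x y hy h.symm)]; norm_num

lemma Good.FI1 (hg : Good G θ H A P K W) (hN : 1 ≤ N)
    (Q : Fin N → Fin N → ℝ) (h0 : ∀ x, Q x x = 0)
    (hr : ∀ x y, ¬ G.Reachable x y → Q x y = 0) :
    ∑ x, ∑ y, Q x y ^ 2 ≤ (4 * N * (110 * K ^ 4 * W)) * ∑ y, en G θ (fun x => Q x y) := by
  have hK := hg.K1
  have hW := hg.W1
  have hN' : (1:ℝ) ≤ N := by exact_mod_cast hN
  set Λ := 110 * K ^ 4 * W with hΛ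
  have hΛ0 : 0 < Λ := by positivity
  rw [Finset.sum_comm]
  refine hg.assemble (4 * N * Λ) (by nlinarith) Q h0 hr ?_
  rw [Finset.mul_sum]
  refine Finset.sum_le_sum fun y hy => ?_
  obtain ⟨m, hm⟩ := hg.poincare (fun x => Q x y)
  have hE := en_nonneg G θ (fun x => Q x y)
  set E := en G θ (fun x => Q x y)
  change ∑ x ∈ UU G H A P, (Q x y - m) ^ 2 ≤ Λ * E at hm
  have h1 : m ^ 2 ≤ Λ * E := by
    refine le_trans ?_ hm
    have := Finset.single_le_sum (f := fun x => (Q x y - m) ^ 2) (fun x _ => sq_nonneg _) hy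
    simp only [h0 y] at this
    linarith
  have h2 : ∑ x ∈ UU G H A P, Q x y ^ 2 ≤ ∑ x ∈ UU G H A P, (2 * (Q x y - m) ^ 2 + 2 * m ^ 2) :=
    Finset.sum_le_sum fun x _ => by nlinarith [sq_nonneg (Q x y - 2 * m)]
  rw [Finset.sum_add_distrib, ← Finset.mul_sum, Finset.sum_const, nsmul_eq_mul] at h2
  have h3 : ((UU G H A P).card : ℝ) ≤ N := by
    have := Finset.card_le_univ (UU G H A P)
    rw [Fintype.card_fin] at this
    exact_mod_cast this
  have h4 : ((UU G H A P).card : ℝ) * (2 * m ^ 2) ≤ N * (2 * (Λ * E)) :=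
    mul_le_mul h3 (by linarith) (by positivity) (by positivity)
  have h5 : Λ * E ≤ N * (Λ * E) := by nlinarith [mul_nonneg hΛ0.le hE]
  linarith

set_option maxHeartbeats 800000 in
lemma Good.FI2 (hg : Good G θ H A P K W) (hN : 1 ≤ N) (hθ : θ ≤ 2)
    (v : Fin N) (hv : v ∈ H)
    (Q : Fin N → Fin N → ℝ) (h0 : ∀ x, Q x x = 0) (hs : ∀ x y, Q x y = Q y x)
    (hr : ∀ x y, ¬ G.Reachable x y → Q x y = 0) :
    ∑ x, ∑ y, Q x y ^ 2 ≤ (158 * (110 * K ^ 4 * W) * N ^ 2 / (G.degree v : ℝ) ^ θ) *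
      ∑ y, en G θ (fun x => Q x y) := by
  have hK := hg.K1
  have hW := hg.W1
  have hN' : (1:ℝ) ≤ N := by exact_mod_cast hN
  set Λ := 110 * K ^ 4 * W with hΛ
  have hΛ1 : 1 ≤ Λ := by
    have : 1 ≤ K ^ 4 := one_le_pow₀ hK
    nlinarith
  have hΛ0 : 0 < Λ := by linarith
  have hd1 : 1 ≤ (G.degree v : ℝ) := (hg.hub1 v hv).trans (sum_ad_le G A v)
  have hdN : (G.degree v : ℝ) ≤ N := by
    have := (G.degree_lt_card_verts v).le
    rw [Fintype.card_fin] at this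
    exact_mod_cast this
  set Γ := G.neighborFinset v with hΓ
  have hΓc : (Γ.card : ℝ) = G.degree v := by rw [hΓ, SimpleGraph.card_neighborFinset_eq_degree]
  set d : ℝ := (G.degree v : ℝ) with hd
  have hd0 : 0 < d := by linarith
  set r := rt G θ v with hrr
  have hr0 : r = d ^ θ * d⁻¹ := rfl
  have hdθ : 0 < d ^ θ := Real.rpow_pos_of_pos hd0 _
  have hrpos : 0 < r := by rw [hr0]; positivity
  have hdr : d * r = d ^ θ := by rw [hr0]; field_simp
  have hdθ2 : d ^ θ ≤ d ^ 2 := by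
    rw [← Real.rpow_two]; exact Real.rpow_le_rpow_of_exponent_le hd1 hθ
  have hdN2 : d ^ 2 ≤ (N:ℝ) ^ 2 := by gcongr
  set U := UU G H A P with hU
  have hvU : v ∈ U := Finset.mem_union_left _ (Finset.mem_union_left _ hv)
  have hΓU : Γ ⊆ U := by
    intro x hx
    rw [hΓ, SimpleGraph.mem_neighborFinset] at hx
    exact hg.mem_UU x v hvU hx.reachable
  set T := 158 * Λ * N ^ 2 / d ^ θ with hT
  have hTΛ : Λ ≤ T := by
    rw [hT, le_div_iff₀ hdθ]
    have : Λ * d ^ θ ≤ Λ * N ^ 2 := mul_le_mul_of_nonneg_left (hdθ2.trans hdN2) hΛ0.le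
    nlinarith [mul_nonneg hΛ0.le (sq_nonneg (N:ℝ))]
  rw [Finset.sum_comm]
  refine hg.assemble T hTΛ Q h0 hr ?_
  set E : Fin N → ℝ := fun y => en G θ (fun x => Q x y) with hE
  have hE0 : ∀ y, 0 ≤ E y := fun y => en_nonneg G θ _
  set D := ∑ y ∈ U, E y with hD
  have hD0 : 0 ≤ D := Finset.sum_nonneg fun y _ => hE0 y
  have hDΓ : ∑ y ∈ Γ, E y ≤ D := Finset.sum_le_sum_of_subset_of_nonneg hΓU fun y _ _ => hE0 y
  have row : ∀ y, ∑ x ∈ U, Q x y ^ 2 ≤ 6 * N * Λ / d * E y + 4 * N / d * ∑ x ∈ Γ, Q x y ^ 2 := by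
    intro y
    obtain ⟨m, hm⟩ := hg.poincare (fun x => Q x y)
    change ∑ x ∈ U, (Q x y - m) ^ 2 ≤ Λ * E y at hm
    have h2 : ∑ x ∈ U, Q x y ^ 2 ≤ ∑ x ∈ U, (2 * (Q x y - m) ^ 2 + 2 * m ^ 2) :=
      Finset.sum_le_sum fun x _ => by nlinarith [sq_nonneg (Q x y - 2 * m)]
    rw [Finset.sum_add_distrib, ← Finset.mul_sum, Finset.sum_const, nsmul_eq_mul] at h2
    have h3 : (U.card : ℝ) ≤ N := by
      have := Finset.card_le_univ U
      rw [Fintype.card_fin] at this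
      exact_mod_cast this
    have h4 : (U.card : ℝ) * (2 * m ^ 2) ≤ N * (2 * m ^ 2) :=
      mul_le_mul_of_nonneg_right h3 (by positivity)
    have h5 : ∑ x ∈ Γ, m ^ 2 ≤ ∑ x ∈ Γ, (2 * Q x y ^ 2 + 2 * (Q x y - m) ^ 2) :=
      Finset.sum_le_sum fun x _ => by nlinarith [sq_nonneg (2 * Q x y - m)]
    rw [Finset.sum_add_distrib, ← Finset.mul_sum, ← Finset.mul_sum, Finset.sum_const,
      nsmul_eq_mul, hΓc] at h5
    have h6 : ∑ x ∈ Γ, (Q x y - m) ^ 2 ≤ ∑ x ∈ U, (Q x y - m) ^ 2 :=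
      Finset.sum_le_sum_of_subset_of_nonneg hΓU fun _ _ _ => sq_nonneg _
    have h7 : m ^ 2 ≤ (2 * ∑ x ∈ Γ, Q x y ^ 2 + 2 * (Λ * E y)) / d := by
      rw [le_div_iff₀ hd0]; linarith
    have h8 : N * (2 * m ^ 2) ≤ N * (2 * ((2 * ∑ x ∈ Γ, Q x y ^ 2 + 2 * (Λ * E y)) / d)) := by
      gcongr
    have h9 : N * (2 * ((2 * ∑ x ∈ Γ, Q x y ^ 2 + 2 * (Λ * E y)) / d)) =
      4 * N / d * ∑ x ∈ Γ, Q x y ^ 2 + 4 * N * Λ / d * E y := by field_simp; ring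
    have h10 : Λ * E y ≤ N * Λ / d * E y := by
      refine mul_le_mul_of_nonneg_right ?_ (hE0 y)
      rw [le_div_iff₀ hd0]; nlinarith
    have h11 : 6 * N * Λ / d * E y = 4 * N * Λ / d * E y + 2 * (N * Λ / d * E y) := by
      field_simp; ring
    linarith
  have edge : ∀ y, ∑ x ∈ Γ, (Q x y - Q v y) ^ 2 ≤ 2 / r * E y := by
    intro y
    have h1 : ∑ x ∈ Γ, (r / 2) * (Q x y - Q v y) ^ 2 ≤ E y := by
      calc _ ≤ ∑ x ∈ Γ, cw G θ v x * (Q v y - Q x y) ^ 2 := by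
            refine Finset.sum_le_sum fun x hx => ?_
            rw [hΓ, SimpleGraph.mem_neighborFinset] at hx
            have : cw G θ v x = (r + rt G θ x) / 2 := by simp [cw, hx, hrr]
            rw [this]
            have h2 := rt_nonneg G θ x
            have h3 := sq_nonneg (Q v y - Q x y)
            have h4 : (Q x y - Q v y) ^ 2 = (Q v y - Q x y) ^ 2 := by ring
            rw [h4]
            nlinarith
        _ ≤ eng G θ (fun x => Q x y) v :=
            Finset.sum_le_sum_of_subset_of_nonneg (Finset.subset_univ _) fun x _ _ =>
              mul_nonneg (cw_nonneg G θ v x) (sq_nonneg _)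
        _ ≤ E y := by
            have := sum_eng_le G θ (fun x => Q x y) {v}
            simpa using this
    rw [← Finset.mul_sum] at h1
    have h2 : 2 / r * E y = E y / (r / 2) := by field_simp
    rw [h2, le_div_iff₀ (by positivity)]
    linarith
  have ΓΓ : ∑ y ∈ Γ, ∑ x ∈ Γ, Q x y ^ 2 ≤ 8 * d / r * D := by
    have h1 : ∀ y ∈ Γ, ∑ x ∈ Γ, Q x y ^ 2 ≤ 8 * d / r * E y := by
      intro y hy
      have h2 : ∑ x ∈ Γ, Q x y ^ 2 ≤ ∑ x ∈ Γ, (2 * (Q x y - Q v y) ^ 2 + 2 * Q v y ^ 2) :=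
        Finset.sum_le_sum fun x _ => by nlinarith [sq_nonneg (Q x y - 2 * Q v y)]
      rw [Finset.sum_add_distrib, ← Finset.mul_sum, Finset.sum_const, nsmul_eq_mul, hΓc] at h2
      have h3 : Q v y ^ 2 ≤ 2 / r * E y := by
        refine le_trans ?_ (edge y)
        have := Finset.single_le_sum (f := fun x => (Q x y - Q v y) ^ 2)
          (fun x _ => sq_nonneg _) hy
        simp only [h0 y] at this
        linarith
      have h4 := edge y
      have h5 : 8 * d / r * E y = 4 * d * (2 / r * E y) := by field_simp; ring
      have h6 : 0 ≤ 2 / r * E y := by have := hE0 y; positivity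
      rw [h5]
      set e := 2 / r * E y
      have h7 : d * (2 * Q v y ^ 2) ≤ d * (2 * e) :=
        mul_le_mul_of_nonneg_left (by linarith) hd0.le
      have h8 : e ≤ d * e := le_mul_of_one_le_left h6 hd1
      linarith
    calc _ ≤ ∑ y ∈ Γ, 8 * d / r * E y := Finset.sum_le_sum h1
      _ = 8 * d / r * ∑ y ∈ Γ, E y := by rw [Finset.mul_sum]
      _ ≤ _ := mul_le_mul_of_nonneg_left hDΓ (by positivity)
  have ΓU : ∑ y ∈ Γ, ∑ x ∈ U, Q x y ^ 2 ≤ 6 * N * Λ / d * D + 4 * N / d * (8 * d / r * D) := by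
    calc _ ≤ ∑ y ∈ Γ, (6 * N * Λ / d * E y + 4 * N / d * ∑ x ∈ Γ, Q x y ^ 2) :=
          Finset.sum_le_sum fun y _ => row y
      _ = 6 * N * Λ / d * ∑ y ∈ Γ, E y + 4 * N / d * ∑ y ∈ Γ, ∑ x ∈ Γ, Q x y ^ 2 := by
          rw [Finset.sum_add_distrib, Finset.mul_sum, Finset.mul_sum]
      _ ≤ _ := by gcongr
  have UΓ : ∑ y ∈ U, ∑ x ∈ Γ, Q x y ^ 2 ≤ 6 * N * Λ / d * D + 4 * N / d * (8 * d / r * D) := by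
    rw [Finset.sum_comm]
    simp only [fun x y => hs x y] at ΓU ⊢
    refine le_trans (le_of_eq ?_) ΓU
    exact Finset.sum_congr rfl fun x _ => Finset.sum_congr rfl fun y _ => by rw [hs]
  calc ∑ y ∈ U, ∑ x ∈ U, Q x y ^ 2
      ≤ ∑ y ∈ U, (6 * N * Λ / d * E y + 4 * N / d * ∑ x ∈ Γ, Q x y ^ 2) :=
        Finset.sum_le_sum fun y _ => row y
    _ = 6 * N * Λ / d * D + 4 * N / d * ∑ y ∈ U, ∑ x ∈ Γ, Q x y ^ 2 := by
        rw [Finset.sum_add_distrib, ← Finset.mul_sum, ← Finset.mul_sum]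
    _ ≤ 6 * N * Λ / d * D + 4 * N / d * (6 * N * Λ / d * D + 4 * N / d * (8 * d / r * D)) := by
        gcongr
    _ = (6 * N * d * Λ / d ^ 2 + 24 * N ^ 2 * Λ / d ^ 2 + 128 * N ^ 2 / (d * r)) * D := by
        field_simp; ring
    _ ≤ T * D := by
        refine mul_le_mul_of_nonneg_right ?_ hD0
        rw [hdr]
        have a1 : 6 * N * d * Λ / d ^ 2 ≤ 6 * N ^ 2 * Λ / d ^ θ := by
          refine div_le_div₀ (by positivity) ?_ hdθ hdθ2
          have : N * d ≤ (N:ℝ) ^ 2 := by nlinarith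
          nlinarith
        have a2 : 24 * N ^ 2 * Λ / d ^ 2 ≤ 24 * N ^ 2 * Λ / d ^ θ :=
          div_le_div₀ (by positivity) le_rfl hdθ hdθ2
        have a3 : 128 * (N:ℝ) ^ 2 / d ^ θ ≤ 128 * N ^ 2 * Λ / d ^ θ := by
          refine div_le_div_of_nonneg_right ?_ hdθ.le
          nlinarith [sq_nonneg (N:ℝ)]
        have a4 : T = 6 * N ^ 2 * Λ / d ^ θ + 24 * N ^ 2 * Λ / d ^ θ + 128 * N ^ 2 * Λ / d ^ θ := by
          rw [hT]; ring
        linarith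

/-- the expanding core is contained in one component -/
lemma expands_reach (G : SimpleGraph (Fin N)) (A : Finset (Fin N)) (hA : Expands G A)
    (x y : Fin N) (hx : x ∈ A) (hy : y ∈ A) : G.Reachable x y := by
  by_contra hcon
  -- one of the two sides is at most half
  have main : ∀ S ⊆ A, S.Nonempty → 2 * S.card ≤ A.card →
      (∀ a ∈ S, ∀ b ∈ A \ S, ¬ G.Adj a b) → False := by
    intro S hS hne hc hno
    have h1 := hA S hS hc
    have h2 : ∑ x ∈ S, ∑ y ∈ A \ S, (if G.Adj x y then (1:ℝ) else 0) = 0 :=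
      Finset.sum_eq_zero fun a ha => Finset.sum_eq_zero fun b hb => by simp [hno a ha b hb]
    rw [h2] at h1
    have h3 : 0 < S.card := hne.card_pos
    have : (0:ℝ) < S.card := by exact_mod_cast h3
    linarith
  set S := A.filter fun z => G.Reachable x z with hSdef
  have hS : S ⊆ A := Finset.filter_subset _ _
  have hno : ∀ a ∈ S, ∀ b ∈ A \ S, ¬ G.Adj a b := by
    intro a ha b hb hab
    have h1 := (Finset.mem_filter.1 ha).2
    refine (Finset.mem_sdiff.1 hb).2 (Finset.mem_filter.2 ⟨(Finset.mem_sdiff.1 hb).1, ?_⟩)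
    exact h1.trans hab.reachable
  have hxS : x ∈ S := Finset.mem_filter.2 ⟨hx, SimpleGraph.Reachable.refl x⟩
  have hyS : y ∈ A \ S := Finset.mem_sdiff.2 ⟨hy, fun h => hcon (Finset.mem_filter.1 h).2⟩
  by_cases hc : 2 * S.card ≤ A.card
  · exact main S hS ⟨x, hxS⟩ hc hno
  · refine main (A \ S) Finset.sdiff_subset ⟨y, hyS⟩ ?_ ?_
    · have h2 : (A \ S).card = A.card - S.card := Finset.card_sdiff_of_subset hS
      have := Finset.card_le_card hS
      omega
    · intro a ha b hb hab
      rw [Finset.sdiff_sdiff_eq_self hS] at hb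
      exact hno b hb a ha hab.symm

lemma Good.reachPairs (hg : Good G θ H A P K W) : ((A.card : ℝ)) ^ 2 ≤ reachPairs G := by
  unfold _root_.reachPairs
  have h1 : ∑ x ∈ A, ∑ y ∈ A, (if G.Reachable x y then (1:ℝ) else 0) = (A.card : ℝ) ^ 2 := by
    have : ∀ x ∈ A, ∑ y ∈ A, (if G.Reachable x y then (1:ℝ) else 0) = A.card := by
      intro x hx
      rw [Finset.sum_congr rfl fun y hy => if_pos (expands_reach G A hg.expands x y hx hy)]
      simp
    rw [Finset.sum_congr rfl this, Finset.sum_const, nsmul_eq_mul, sq]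
  rw [← h1]
  have h0 : ∀ x y, 0 ≤ (if G.Reachable x y then (1:ℝ) else 0) := fun x y => by
    split_ifs <;> norm_num
  calc _ ≤ ∑ x ∈ A, ∑ y, (if G.Reachable x y then (1:ℝ) else 0) :=
        Finset.sum_le_sum fun x _ => Finset.sum_le_sum_of_subset_of_nonneg
          (Finset.subset_univ _) fun y _ _ => h0 x y
    _ ≤ _ := Finset.sum_le_sum_of_subset_of_nonneg
          (Finset.subset_univ _) fun x _ _ => Finset.sum_nonneg fun y _ => h0 x y

end GoodGraph

section Partition

variable {N : ℕ} (G : SimpleGraph (Fin N))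

lemma CutConn.sub {G : SimpleGraph (Fin N)} {S : Finset (Fin N)} (hS : CutConn G S)
    (T : Finset (Fin N)) (hT : ∀ x ∈ T, x ∈ S → ∀ y ∈ S, G.Adj x y → y ∈ T)
    (a : Fin N) (haT : a ∈ T) (haS : a ∈ S) : S ⊆ T := by
  by_contra hcon
  obtain ⟨x, hx, y, hy, hxy⟩ := hS (S ∩ T) Finset.inter_subset_left
    ⟨a, Finset.mem_inter.2 ⟨haS, haT⟩⟩ (fun h => hcon (Finset.inter_eq_left.1 h))
  rw [Finset.mem_inter] at hx
  rw [Finset.mem_sdiff, Finset.mem_inter] at hy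
  exact hy.2 ⟨hy.1, hT x hx.2 hx.1 y hy.1 hxy⟩

lemma cutConn_of {G : SimpleGraph (Fin N)} {S : Finset (Fin N)}
    (h : ∀ T : Finset (Fin N), (∀ x ∈ T, x ∈ S → ∀ y ∈ S, G.Adj x y → y ∈ T) →
      ∀ a ∈ T, a ∈ S → S ⊆ T) : CutConn G S := by
  intro T hTS hne hTne
  by_contra hcon
  push Not at hcon
  obtain ⟨a, ha⟩ := hne
  refine hTne (Finset.Subset.antisymm hTS (h T ?_ a ha (hTS ha)))
  intro x hx _ y hy hxy
  by_contra hyT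
  exact hcon x hx y (Finset.mem_sdiff.2 ⟨hy, hyT⟩) hxy

lemma phase1 (Δ k : ℕ) (B : Finset (Fin N)) :
    (∀ x ∈ B, G.degree x ≤ Δ) → ∃ P : Fin N → Finset (Fin N), ∀ x ∈ B,
      x ∈ P x ∧ P x ⊆ B ∧ (∀ y ∈ P x, P y = P x) ∧ CutConn G (P x) ∧
      (P x).card ≤ 1 + Δ * k ∧
      (∀ y ∈ B, G.Adj x y → (P x).card < k → (P y).card < k → P y = P x) := by
  induction B using Finset.induction_on with
  | empty => intro _; exact ⟨fun _ => ∅, by simp⟩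
  | insert v B hv ih =>
    intro hdeg
    obtain ⟨P, hP⟩ := ih fun x hx => hdeg x (Finset.mem_insert_of_mem hx)
    set F := B.filter fun y => (P y).card < k ∧ ∃ z ∈ P y, G.Adj v z with hF
    have hFm : ∀ y, y ∈ F ↔ y ∈ B ∧ (P y).card < k ∧ ∃ z ∈ P y, G.Adj v z := fun y => by
      simp [hF]
    have hFP : ∀ y ∈ F, P y ⊆ F := by
      intro y hy z hz
      obtain ⟨h1, h2, h3⟩ := (hFm y).1 hy
      rw [hFm, (hP y h1).2.2.1 z hz]
      exact ⟨(hP y h1).2.1 hz, h2, h3⟩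
    set S := insert v F with hS
    have hSB : S ⊆ insert v B := Finset.insert_subset_insert v (Finset.filter_subset _ _)
    have hScard : S.card ≤ 1 + Δ * k := by
      have h1 : F ⊆ ((G.neighborFinset v).filter fun z => z ∈ B ∧ (P z).card < k).biUnion P := by
        intro y hy
        obtain ⟨h1, h2, z, hz, hvz⟩ := (hFm y).1 hy
        refine Finset.mem_biUnion.2 ⟨z, Finset.mem_filter.2 ⟨?_, ?_, ?_⟩, ?_⟩
        · rw [SimpleGraph.mem_neighborFinset]; exact hvz
        · exact (hP y h1).2.1 hz
        · rw [(hP y h1).2.2.1 z hz]; exact h2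
        · rw [(hP y h1).2.2.1 z hz]; exact (hP y h1).1
      have h2 : F.card ≤ ((G.neighborFinset v).filter fun z => z ∈ B ∧ (P z).card < k).card * k :=
        (Finset.card_le_card h1).trans (Finset.card_biUnion_le_card_mul _ _ _ fun z hz =>
          (Finset.mem_filter.1 hz).2.2.le)
      have h3 : ((G.neighborFinset v).filter fun z => z ∈ B ∧ (P z).card < k).card ≤ Δ := by
        refine (Finset.card_le_card (Finset.filter_subset _ _)).trans ?_
        rw [SimpleGraph.card_neighborFinset_eq_degree]
        exact hdeg v (Finset.mem_insert_self _ _)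
      have h4 := Nat.mul_le_mul_right k h3
      have h5 : S.card ≤ F.card + 1 := Finset.card_insert_le v F
      omega
    have hScut : CutConn G S := by
      refine cutConn_of fun T hT a haT haS => ?_
      have hvS : v ∈ S := Finset.mem_insert_self _ _
      have hvT : v ∈ T := by
        rcases Finset.mem_insert.1 haS with rfl | haF
        · exact haT
        · obtain ⟨h1, h2, z, hz, hvz⟩ := (hFm a).1 haF
          have hPT : P a ⊆ T := (hP a h1).2.2.2.1.sub T
            (fun x hx hxa y hy hxy => hT x hx (Finset.mem_insert_of_mem (hFP a haF hxa)) y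
              (Finset.mem_insert_of_mem (hFP a haF hy)) hxy) a haT (hP a h1).1
          exact hT z (hPT hz) (Finset.mem_insert_of_mem (hFP a haF hz)) v hvS hvz.symm
      intro y hy
      rcases Finset.mem_insert.1 hy with rfl | haF
      · exact hvT
      · obtain ⟨h1, h2, z, hz, hvz⟩ := (hFm y).1 haF
        have hzT : z ∈ T := hT v hvT hvS z (Finset.mem_insert_of_mem (hFP y haF hz)) hvz
        exact (hP y h1).2.2.2.1.sub T
            (fun x hx hxa y' hy' hxy => hT x hx (Finset.mem_insert_of_mem (hFP y haF hxa)) y'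
              (Finset.mem_insert_of_mem (hFP y haF hy')) hxy) z hzT hz (hP y h1).1
    refine ⟨fun y => if y ∈ S then S else P y, fun x hx => ?_⟩
    by_cases hxS : x ∈ S
    · simp only [if_pos hxS]
      refine ⟨hxS, hSB, fun y hy => if_pos hy, hScut, hScard, ?_⟩
      intro y hy hxy hSk
      split_ifs with hyS
      · intro _; rfl
      · intro hyk
        exfalso
        have hyB : y ∈ B := by
          rcases Finset.mem_insert.1 hy with rfl | h
          · exact absurd (Finset.mem_insert_self _ _) hyS
          · exact h
        rcases Finset.mem_insert.1 hxS with rfl | hxF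
        · exact hyS (Finset.mem_insert_of_mem ((hFm y).2 ⟨hyB, hyk, y, (hP y hyB).1, hxy⟩))
        · obtain ⟨h1, h2, z, hz, hvz⟩ := (hFm x).1 hxF
          have := (hP x h1).2.2.2.2.2 y hyB hxy h2 hyk
          refine hyS (Finset.mem_insert_of_mem (hFP x hxF ?_))
          rw [← this]; exact (hP y hyB).1
    · have hxB : x ∈ B := by
        rcases Finset.mem_insert.1 hx with rfl | h
        · exact absurd (Finset.mem_insert_self _ _) hxS
        · exact h
      simp only [if_neg hxS]
      have hxP : ∀ y ∈ P x, y ∉ S := by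
        intro y hy hyS
        have hyB := (hP x hxB).2.1 hy
        rcases Finset.mem_insert.1 hyS with rfl | hyF
        · exact hv hyB
        · refine hxS (Finset.mem_insert_of_mem (hFP y hyF ?_))
          rw [(hP x hxB).2.2.1 y hy]; exact (hP x hxB).1
      refine ⟨(hP x hxB).1, (hP x hxB).2.1.trans (Finset.subset_insert _ _), ?_,
        (hP x hxB).2.2.2.1, (hP x hxB).2.2.2.2.1, ?_⟩
      · intro y hy
        rw [if_neg (hxP y hy)]; exact (hP x hxB).2.2.1 y hy
      · intro y hy hxy hxk
        split_ifs with hyS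
        · intro _
          exfalso
          rcases Finset.mem_insert.1 hyS with rfl | hyF
          · exact hxS (Finset.mem_insert_of_mem
              ((hFm x).2 ⟨hxB, hxk, x, (hP x hxB).1, hxy.symm⟩))
          · obtain ⟨h1, h2, z, hz, hvz⟩ := (hFm y).1 hyF
            have := (hP x hxB).2.2.2.2.2 y h1 hxy hxk h2
            refine hxS (Finset.mem_insert_of_mem (hFP y hyF ?_))
            rw [this]; exact (hP x hxB).1
        · intro hyk
          have hyB : y ∈ B := by
            rcases Finset.mem_insert.1 hy with rfl | h
            · exact absurd (Finset.mem_insert_self _ _) hyS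
            · exact h
          exact (hP x hxB).2.2.2.2.2 y hyB hxy hxk hyk

/-- specification of a good partition of `B` -/
def PartSpec (B : Finset (Fin N)) (Δ k : ℕ) (P : Fin N → Finset (Fin N)) : Prop :=
  ∀ x ∈ B, x ∈ P x ∧ P x ⊆ B ∧ (∀ y ∈ P x, P y = P x) ∧ CutConn G (P x) ∧
      (P x).card ≤ (1 + Δ * k) + (1 + Δ * k) * (Δ * k) ∧
      (k ≤ (P x).card ∨ ∀ b ∈ P x, ∀ y ∈ B, G.Adj b y → y ∈ P x)

lemma exists_partition (Δ k : ℕ) (B : Finset (Fin N)) (hdeg : ∀ x ∈ B, G.degree x ≤ Δ) :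
    ∃ P, PartSpec G B Δ k P := by
  obtain ⟨P, hP⟩ := phase1 G Δ k B hdeg
  have hc0 : ∃ c0 : Finset (Fin N) → Finset (Fin N), ∀ S,
      (k ≤ S.card ∧ c0 S = S) ∨
      (S.card < k ∧ ∃ s ∈ B, k ≤ (P s).card ∧ (∃ z ∈ S, G.Adj z s) ∧ c0 S = P s) ∨
      (S.card < k ∧ (∀ s ∈ B, k ≤ (P s).card → ∀ z ∈ S, ¬ G.Adj z s) ∧ c0 S = S) := by
    have : ∀ S : Finset (Fin N), ∃ S', (k ≤ S.card ∧ S' = S) ∨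
      (S.card < k ∧ ∃ s ∈ B, k ≤ (P s).card ∧ (∃ z ∈ S, G.Adj z s) ∧ S' = P s) ∨
      (S.card < k ∧ (∀ s ∈ B, k ≤ (P s).card → ∀ z ∈ S, ¬ G.Adj z s) ∧ S' = S) := by
      intro S
      by_cases h1 : k ≤ S.card
      · exact ⟨S, Or.inl ⟨h1, rfl⟩⟩
      · by_cases h2 : ∃ s ∈ B, k ≤ (P s).card ∧ ∃ z ∈ S, G.Adj z s
        · obtain ⟨s, hs, hk, hz⟩ := h2
          exact ⟨P s, Or.inr (Or.inl ⟨by omega, s, hs, hk, hz, rfl⟩)⟩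
        · push Not at h2
          exact ⟨S, Or.inr (Or.inr ⟨by omega, h2, rfl⟩)⟩
    choose c0 h using this
    exact ⟨c0, h⟩
  obtain ⟨c0, hc0⟩ := hc0
  set Q : Fin N → Finset (Fin N) := fun x => B.filter fun y => c0 (P y) = c0 (P x) with hQ
  have hQm : ∀ x y, y ∈ Q x ↔ y ∈ B ∧ c0 (P y) = c0 (P x) := fun x y => by simp [hQ]
  have hbig : ∀ s ∈ B, k ≤ (P s).card → c0 (P s) = P s := by
    intro s _ hk
    rcases hc0 (P s) with h | h | h
    · exact h.2
    · omega
    · omega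
  refine ⟨Q, fun x hx => ⟨(hQm x x).2 ⟨hx, rfl⟩, Finset.filter_subset _ _, ?_, ?_⟩⟩
  · intro y hy
    have := ((hQm x y).1 hy).2
    simp only [hQ, this]
  -- the big case
  have big : ∀ s ∈ B, k ≤ (P s).card → c0 (P x) = P s →
      CutConn G (Q x) ∧ (Q x).card ≤ (1 + Δ * k) + (1 + Δ * k) * (Δ * k) ∧
      (k ≤ (Q x).card ∨ ∀ b ∈ Q x, ∀ y ∈ B, G.Adj b y → y ∈ Q x) := by
    intro s hs hk hcx
    have hSQ : P s ⊆ Q x := by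
      intro y hy
      rw [hQm, (hP s hs).2.2.1 y hy, hcx]
      exact ⟨(hP s hs).2.1 hy, hbig s hs hk⟩
    have hQc : ∀ y ∈ Q x, y ∈ P s ∨ (P y ⊆ Q x ∧ (P y).card < k ∧
        ∃ z ∈ P y, ∃ s' ∈ P s, G.Adj z s') := by
      intro y hy
      obtain ⟨hyB, hyc⟩ := (hQm x y).1 hy
      rw [hcx] at hyc
      have hsub : P y ⊆ Q x := by
        intro z hz
        rw [hQm, (hP y hyB).2.2.1 z hz, hyc, hcx]
        exact ⟨(hP y hyB).2.1 hz, rfl⟩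
      rcases hc0 (P y) with h | ⟨h, t, ht, htk, ⟨z, hz, hzt⟩, hh⟩ | h
      · left; rw [← hyc, h.2]; exact (hP y hyB).1
      · right
        refine ⟨hsub, h, z, hz, t, ?_, hzt⟩
        rw [← hyc, hh]; exact (hP t ht).1
      · left; rw [← hyc, h.2.2]; exact (hP y hyB).1
    refine ⟨?_, ?_, Or.inl (hk.trans (Finset.card_le_card hSQ))⟩
    · refine cutConn_of fun T hT a haT haQ => ?_
      have hsub : ∀ y ∈ B, P y ⊆ Q x → ∀ b ∈ T, b ∈ P y → P y ⊆ T := by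
        intro y hyB hyQ b hbT hby
        exact (hP y hyB).2.2.2.1.sub T
          (fun u hu huy w hw huw => hT u hu (hyQ huy) w (hyQ hw) huw) b hbT hby
      have hST : P s ⊆ T := by
        rcases hQc a haQ with h | ⟨h1, _, z, hz, s', hs', hadj⟩
        · exact hsub s hs hSQ a haT h
        · have haB := ((hQm x a).1 haQ).1
          have h2 := hsub a haB h1 a haT (hP a haB).1
          have h3 := hT z (h2 hz) (h1 hz) s' (hSQ hs') hadj
          exact hsub s hs hSQ s' h3 hs'
      intro y hy
      rcases hQc y hy with h | ⟨h1, _, z, hz, s', hs', hadj⟩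
      · exact hST h
      · have hyB := ((hQm x y).1 hy).1
        have h3 := hT s' (hST hs') (hSQ hs') z (h1 hz) hadj.symm
        exact hsub y hyB h1 z h3 hz (hP y hyB).1
    · have hsub : Q x ⊆ P s ∪ (P s).biUnion fun s' =>
          ((G.neighborFinset s').filter fun z => z ∈ B ∧ (P z).card < k).biUnion P := by
        intro y hy
        have hyB := ((hQm x y).1 hy).1
        rcases hQc y hy with h | ⟨h1, h2, z, hz, s', hs', hadj⟩
        · exact Finset.mem_union_left _ h
        · refine Finset.mem_union_right _ (Finset.mem_biUnion.2 ⟨s', hs', ?_⟩)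
          refine Finset.mem_biUnion.2 ⟨z, Finset.mem_filter.2 ⟨?_, ?_, ?_⟩, ?_⟩
          · rw [SimpleGraph.mem_neighborFinset]; exact hadj.symm
          · exact (hP y hyB).2.1 hz
          · rw [(hP y hyB).2.2.1 z hz]; exact h2
          · rw [(hP y hyB).2.2.1 z hz]; exact (hP y hyB).1
      refine (Finset.card_le_card hsub).trans ((Finset.card_union_le _ _).trans ?_)
      have h5 := (hP s hs).2.2.2.2.1
      refine add_le_add h5 ?_
      refine (Finset.card_biUnion_le_card_mul _ _ (Δ * k) fun s' hs' => ?_).trans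
        (Nat.mul_le_mul_right _ h5)
      refine (Finset.card_biUnion_le_card_mul _ _ k fun z hz =>
        (Finset.mem_filter.1 hz).2.2.le).trans (Nat.mul_le_mul_right _ ?_)
      refine (Finset.card_le_card (Finset.filter_subset _ _)).trans ?_
      rw [SimpleGraph.card_neighborFinset_eq_degree]
      exact hdeg s' ((hP s hs).2.1 hs')
  rcases hc0 (P x) with h | ⟨h, s, hs, hsk, _, hh⟩ | ⟨h, hno, hh⟩
  · exact big x hx h.1 h.2
  · exact big s hs hsk hh
  · have hQP : Q x = P x := by
      ext y
      constructor
      · intro hy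
        obtain ⟨hyB, hyc⟩ := (hQm x y).1 hy
        rw [hh] at hyc
        rcases hc0 (P y) with h' | ⟨h', t, ht, htk, _, hh'⟩ | h'
        · rw [← hyc, h'.2]; exact (hP y hyB).1
        · rw [hyc] at hh'; rw [hh'] at h; omega
        · rw [← hyc, h'.2.2]; exact (hP y hyB).1
      · intro hy
        rw [hQm, (hP x hx).2.2.1 y hy]
        exact ⟨(hP x hx).2.1 hy, rfl⟩
    rw [hQP]
    refine ⟨(hP x hx).2.2.2.1, (hP x hx).2.2.2.2.1.trans (Nat.le_add_right _ _), Or.inr ?_⟩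
    intro b hb y hy hby
    have hbB := (hP x hx).2.1 hb
    have hbx := (hP x hx).2.2.1 b hb
    have hyk : (P y).card < k := by
      by_contra hcon
      exact hno y hy (by omega) b hb hby
    have := (hP b hbB).2.2.2.2.2 y hy hby (by rw [hbx]; exact h) hyk
    rw [← hbx, ← this]; exact (hP y hy).1

/-- graph restricted to the edges inside `B` -/
def restr (B : Finset (Fin N)) : SimpleGraph (Fin N) where
  Adj x y := G.Adj x y ∧ x ∈ B ∧ y ∈ B
  symm := ⟨fun _ _ h => ⟨h.1.symm, h.2.2, h.2.1⟩⟩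
  loopless := ⟨fun x h => G.loopless.irrefl x h.1⟩

/-- chosen partition, depending only on the graph inside `B` -/
def part (B : Finset (Fin N)) (Δ k : ℕ) : Fin N → Finset (Fin N) :=
  if h : ∃ P, PartSpec (restr G B) B Δ k P then h.choose else fun _ => ∅

lemma part_spec (Δ k : ℕ) (B : Finset (Fin N)) (hdeg : ∀ x ∈ B, G.degree x ≤ Δ) :
    PartSpec G B Δ k (part G B Δ k) := by
  have h : ∃ P, PartSpec (restr G B) B Δ k P := by
    refine exists_partition _ Δ k B fun x hx => (le_trans ?_ (hdeg x hx))
    refine Finset.card_le_card fun y hy => ?_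
    rw [SimpleGraph.mem_neighborFinset] at hy ⊢
    exact hy.1
  have h1 : part G B Δ k = h.choose := dif_pos h
  have h2 := h.choose_spec
  rw [← h1] at h2
  intro x hx
  obtain ⟨a1, a2, a3, a4, a5, a6⟩ := h2 x hx
  refine ⟨a1, a2, a3, ?_, a5, ?_⟩
  · intro T hT hne hTne
    obtain ⟨p, hp, q, hq, hpq⟩ := a4 T hT hne hTne
    exact ⟨p, hp, q, hq, hpq.1⟩
  · rcases a6 with h | h
    · exact Or.inl h
    · exact Or.inr fun b hb y hy hby => h b hb y hy ⟨hby, a2 hb, hy⟩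

lemma part_congr (G' : SimpleGraph (Fin N)) (Δ k : ℕ) (B : Finset (Fin N))
    (h : ∀ x ∈ B, ∀ y ∈ B, (G.Adj x y ↔ G'.Adj x y)) : part G B Δ k = part G' B Δ k := by
  have : restr G B = restr G' B := by
    ext x y
    exact ⟨fun hh => ⟨(h x hh.2.1 y hh.2.2).1 hh.1, hh.2⟩,
      fun hh => ⟨(h x hh.2.1 y hh.2.2).2 hh.1, hh.2⟩⟩
  unfold part
  rw [this]

end Partition

section GraphProb

/-- index set of possible edges -/
abbrev EIdx (N : ℕ) := {e : Fin N × Fin N // e.1 < e.2}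

/-- graph from edge indicators -/
def gOf {N : ℕ} (ω : EIdx N → Bool) : SimpleGraph (Fin N) where
  Adj x y := (∃ h : x < y, ω ⟨(x, y), h⟩ = true) ∨ (∃ h : y < x, ω ⟨(y, x), h⟩ = true)
  symm := ⟨fun _ _ h => h.symm⟩
  loopless := ⟨fun x h => by
    rcases h with ⟨h, _⟩ | ⟨h, _⟩ <;> exact lt_irrefl _ h⟩

lemma gOf_adj {N : ℕ} (ω : EIdx N → Bool) (x y : Fin N) (h : x < y) :
    (gOf ω).Adj x y ↔ ω ⟨(x, y), h⟩ = true := by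
  constructor
  · rintro (⟨_, h1⟩ | ⟨h', _⟩)
    · exact h1
    · exact absurd h (not_lt.2 h'.le)
  · exact fun h1 => Or.inl ⟨h, h1⟩

/-- the graph / edge indicator equivalence -/
def gEquiv (N : ℕ) : (EIdx N → Bool) ≃ SimpleGraph (Fin N) where
  toFun := gOf
  invFun G := fun e => decide (G.Adj e.1.1 e.1.2)
  left_inv ω := by
    funext e
    have := gOf_adj ω e.1.1 e.1.2 e.2
    simp [this]
  right_inv G := by
    ext x y
    rcases lt_trichotomy x y with h | h | h
    · rw [gOf_adj _ x y h]; simp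
    · subst h; simp
    · rw [SimpleGraph.adj_comm, gOf_adj _ y x h, SimpleGraph.adj_comm]; simp

variable {N : ℕ} (p : ℕ → ℕ → ℝ)

/-- expectation over the random graph -/
def gE (F : SimpleGraph (Fin N) → ℝ) : ℝ := ∑ G, F G * graphWeight p N G

/-- edge probability on vertices -/
def qe (x y : Fin N) : ℝ := p ((x : ℕ) + 1) ((y : ℕ) + 1)

lemma graphWeight_gOf (ω : EIdx N → Bool) :
    graphWeight p N (gOf ω) =
      ∏ e : EIdx N, (if ω e then qe p e.1.1 e.1.2 else 1 - qe p e.1.1 e.1.2) := by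
  unfold graphWeight
  rw [← Finset.prod_product', Finset.univ_product_univ]
  rw [← Finset.prod_filter_mul_prod_filter_not Finset.univ (fun e : Fin N × Fin N => e.1 < e.2)]
  rw [Finset.prod_eq_one (s := Finset.univ.filter (fun e : Fin N × Fin N => ¬ e.1 < e.2)), mul_one]
  · rw [Finset.prod_subtype (p := fun e : Fin N × Fin N => e.1 < e.2) _ (by simp)]
    refine Finset.prod_congr rfl fun e _ => ?_
    have := gOf_adj ω e.1.1 e.1.2 e.2
    rw [if_pos e.2]
    simp only [this, qe]
  · intro e he
    rw [if_neg (Finset.mem_filter.1 he).2]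

lemma gE_eq (F : SimpleGraph (Fin N) → ℝ) :
    gE p F = ∑ ω : EIdx N → Bool, F (gOf ω) *
      ∏ e : EIdx N, (if ω e then qe p e.1.1 e.1.2 else 1 - qe p e.1.1 e.1.2) := by
  unfold gE
  rw [← Equiv.sum_comp (gEquiv N)]
  refine Finset.sum_congr rfl fun ω _ => ?_
  have : gEquiv N ω = gOf ω := rfl
  rw [this, graphWeight_gOf]

lemma gE_one : gE p (fun _ : SimpleGraph (Fin N) => 1) = 1 := by
  rw [gE_eq]
  simp only [one_mul]
  have h := Finset.prod_univ_sum (fun _ : EIdx N => (Finset.univ : Finset Bool))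
    (fun e b => if b then qe p e.1.1 e.1.2 else 1 - qe p e.1.1 e.1.2)
  rw [Fintype.piFinset_univ] at h
  rw [← h]
  refine Finset.prod_eq_one fun e _ => ?_
  simp

lemma gE_edge_aux {ι : Type*} [Fintype ι] [DecidableEq ι] (e0 : ι) (q : ι → ℝ) (F : (ι → Bool) → ℝ)
    (hF : ∀ ω b, F (Function.update ω e0 b) = F ω) (c : ℝ) :
    ∑ ω : ι → Bool, (F ω * (if ω e0 then c else 1)) * ∏ e, (if ω e then q e else 1 - q e) =
    (1 + (c - 1) * q e0) * ∑ ω : ι → Bool, F ω * ∏ e, (if ω e then q e else 1 - q e) := by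
  have hw : ∀ ω : ι → Bool, ∏ e, (if ω e then q e else 1 - q e) =
      (if ω e0 then q e0 else 1 - q e0) *
        ∏ e ∈ Finset.univ.erase e0, (if ω e then q e else 1 - q e) := fun ω =>
    (Finset.mul_prod_erase _ _ (Finset.mem_univ e0)).symm
  have hup : ∀ (ω : ι → Bool) (b : Bool), ∏ e ∈ Finset.univ.erase e0,
      (if (Function.update ω e0 b) e then q e else 1 - q e) =
      ∏ e ∈ Finset.univ.erase e0, (if ω e then q e else 1 - q e) := by
    intro ω b
    refine Finset.prod_congr rfl fun e he => ?_
    rw [Function.update_of_ne (Finset.ne_of_mem_erase he)]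
  -- flip the edge
  have hflip : ∀ Φ : (ι → Bool) → ℝ,
      ∑ ω : ι → Bool, Φ (Function.update ω e0 (!(ω e0))) = ∑ ω, Φ ω := by
    intro Φ
    refine Function.Bijective.sum_comp (Function.Involutive.bijective ?_) Φ
    intro ω
    simp
  have hgen : ∀ c : ℝ, 2 * ∑ ω : ι → Bool,
      (F ω * (if ω e0 then c else 1)) * ∏ e, (if ω e then q e else 1 - q e) =
      (1 + (c - 1) * q e0) * ∑ ω : ι → Bool,
        F ω * ∏ e ∈ Finset.univ.erase e0, (if ω e then q e else 1 - q e) := by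
    intro c
    rw [two_mul]
    nth_rewrite 1 [← hflip]
    rw [← Finset.sum_add_distrib, Finset.mul_sum]
    refine Finset.sum_congr rfl fun ω _ => ?_
    rw [hw, hw, hup, hF, Function.update_self]
    cases ω e0 <;> simp <;> ring
  have h1 := hgen c
  have h2 := hgen 1
  simp only [ite_self, mul_one, sub_self, zero_mul, add_zero, one_mul] at h2
  rw [← h2] at h1
  linarith

/-- adding one independent edge factor -/
lemma gE_edge (hp : ∀ i j, p i j = p j i) (a b : Fin N) (hab : a ≠ b)
    (F : SimpleGraph (Fin N) → ℝ)
    (hF : ∀ G G' : SimpleGraph (Fin N), (∀ x y, s(x, y) ≠ s(a, b) → (G.Adj x y ↔ G'.Adj x y)) →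
      F G = F G') (c : ℝ) :
    gE p (fun G => F G * (if G.Adj a b then c else 1)) = (1 + (c - 1) * qe p a b) * gE p F := by
  have main : ∀ a b : Fin N, ∀ h : a < b,
      (∀ G G' : SimpleGraph (Fin N), (∀ x y, s(x, y) ≠ s(a, b) → (G.Adj x y ↔ G'.Adj x y)) →
      F G = F G') →
      gE p (fun G => F G * (if G.Adj a b then c else 1)) =
        (1 + (c - 1) * qe p a b) * gE p F := by
    intro a b h hF
    rw [gE_eq, gE_eq]
    have hsum : ∀ ω : EIdx N → Bool, (if (gOf ω).Adj a b then c else 1) =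
        (if ω ⟨(a, b), h⟩ then c else 1) := by
      intro ω
      have := gOf_adj ω a b h
      by_cases h1 : (gOf ω).Adj a b
      · rw [if_pos h1, if_pos (this.1 h1)]
      · rw [if_neg h1, if_neg (fun h2 => h1 (this.2 h2))]
    have haux := gE_edge_aux (⟨(a, b), h⟩ : EIdx N) (fun e => qe p e.1.1 e.1.2)
      (fun ω => F (gOf ω))
    refine Eq.trans (Finset.sum_congr rfl fun ω _ => by rw [hsum ω]) (haux ?_ c)
    intro ω β
    apply hF
    have key : ∀ x y : Fin N, x < y → s(x, y) ≠ s(a, b) →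
        ((gOf (Function.update ω ⟨(a, b), h⟩ β)).Adj x y ↔ (gOf ω).Adj x y) := by
      intro x y hxy hne
      rw [gOf_adj _ x y hxy, gOf_adj _ x y hxy, Function.update_of_ne]
      intro he
      apply hne
      have h1 := congrArg Subtype.val he
      simp only [Prod.mk.injEq] at h1
      rw [h1.1, h1.2]
    intro x y hne
    rcases lt_trichotomy x y with hxy | hxy | hxy
    · exact key x y hxy hne
    · subst hxy; simp
    · rw [SimpleGraph.adj_comm, SimpleGraph.adj_comm (gOf ω)]
      exact key y x hxy (by rw [Sym2.eq_swap]; exact hne)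
  rcases lt_or_gt_of_ne hab with h | h
  · exact main a b h hF
  · have h1 := main b a h (fun G G' hh => hF G G' fun x y hxy => hh x y (by
      rw [Sym2.eq_swap (a := b)]; exact hxy))
    have h2 : qe p a b = qe p b a := hp _ _
    rw [h2, ← h1]
    simp only [fun G : SimpleGraph (Fin N) => G.adj_comm a b]

/-- many independent edge factors -/
lemma gE_edges (hp : ∀ i j, p i j = p j i) (X Y : Finset (Fin N)) (hXY : Disjoint X Y)
    (F : SimpleGraph (Fin N) → ℝ)
    (hF : ∀ G G' : SimpleGraph (Fin N), (∀ x y, ¬ (x ∈ X ∧ y ∈ Y) → ¬ (y ∈ X ∧ x ∈ Y) →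
      (G.Adj x y ↔ G'.Adj x y)) → F G = F G') (c : ℝ) :
    gE p (fun G => F G * ∏ x ∈ X, ∏ y ∈ Y, (if G.Adj x y then c else 1)) =
      (∏ x ∈ X, ∏ y ∈ Y, (1 + (c - 1) * qe p x y)) * gE p F := by
  have main : ∀ E : Finset (Fin N × Fin N), (∀ e ∈ E, e.1 ∈ X ∧ e.2 ∈ Y) →
      gE p (fun G => F G * ∏ e ∈ E, (if G.Adj e.1 e.2 then c else 1)) =
      (∏ e ∈ E, (1 + (c - 1) * qe p e.1 e.2)) * gE p F := by
    intro E
    induction E using Finset.induction_on with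
    | empty => intro _; simp
    | insert e E he ih =>
      intro hE
      have ih' := ih fun e' he' => hE e' (Finset.mem_insert_of_mem he')
      have hme := hE e (Finset.mem_insert_self _ _)
      have hne : e.1 ≠ e.2 := fun h => Finset.disjoint_left.1 hXY hme.1 (h ▸ hme.2)
      have h1 := gE_edge p hp e.1 e.2 hne
        (fun G => F G * ∏ e ∈ E, (if G.Adj e.1 e.2 then c else 1)) (by
          intro G G' hh
          have h3 : F G = F G' := by
            apply hF
            intro x y h4 h5
            apply hh
            intro h6
            rw [Sym2.eq_iff] at h6
            rcases h6 with ⟨h7, h8⟩ | ⟨h7, h8⟩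
            · exact h4 ⟨h7 ▸ hme.1, h8 ▸ hme.2⟩
            · exact h5 ⟨h8 ▸ hme.1, h7 ▸ hme.2⟩
          rw [h3]
          congr 1
          refine Finset.prod_congr rfl fun e' he' => ?_
          have hm' := hE e' (Finset.mem_insert_of_mem he')
          have : G.Adj e'.1 e'.2 ↔ G'.Adj e'.1 e'.2 := by
            apply hh
            intro h6
            rw [Sym2.eq_iff] at h6
            rcases h6 with ⟨h7, h8⟩ | ⟨h7, h8⟩
            · exact he (by rw [← Prod.ext h7 h8]; exact he')
            · exact Finset.disjoint_left.1 hXY hm'.1 (h7 ▸ hme.2)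
          simp only [this]) c
      rw [Finset.prod_insert he, mul_assoc, ← ih', ← h1]
      congr 1
      funext G
      rw [Finset.prod_insert he]; ring
  have := main (X ×ˢ Y) (fun e he => Finset.mem_product.1 he)
  rw [Finset.prod_product] at this
  rw [← this]
  congr 1
  funext G
  rw [Finset.prod_product]

variable {p}

lemma graphWeight_nonneg (h0 : ∀ i j, 1 ≤ i → 1 ≤ j → 0 ≤ p i j)
    (h1 : ∀ i j, p i j ≤ 1) (G : SimpleGraph (Fin N)) : 0 ≤ graphWeight p N G := by
  unfold graphWeight
  refine Finset.prod_nonneg fun i _ => Finset.prod_nonneg fun j _ => ?_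
  split_ifs
  · exact h0 _ _ (by omega) (by omega)
  · linarith [h1 ((i:ℕ) + 1) ((j:ℕ) + 1)]
  · norm_num

lemma gE_mono (h0 : ∀ i j, 1 ≤ i → 1 ≤ j → 0 ≤ p i j)
    (h1 : ∀ i j, p i j ≤ 1) (F F' : SimpleGraph (Fin N) → ℝ) (h : ∀ G, F G ≤ F' G) :
    gE p F ≤ gE p F' :=
  Finset.sum_le_sum fun G _ => mul_le_mul_of_nonneg_right (h G) (graphWeight_nonneg h0 h1 G)

lemma gE_sum {ι : Type*} (s : Finset ι) (F : ι → SimpleGraph (Fin N) → ℝ) :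
    gE p (fun G => ∑ i ∈ s, F i G) = ∑ i ∈ s, gE p (F i) := by
  unfold gE
  simp only [Finset.sum_mul]
  rw [Finset.sum_comm]

lemma gE_add (F F' : SimpleGraph (Fin N) → ℝ) :
    gE p (fun G => F G + F' G) = gE p F + gE p F' := by
  unfold gE
  simp only [add_mul, Finset.sum_add_distrib]

lemma gE_smul (c : ℝ) (F : SimpleGraph (Fin N) → ℝ) :
    gE p (fun G => c * F G) = c * gE p F := by
  unfold gE
  simp only [mul_assoc, Finset.mul_sum]

lemma graphProb_eq (A : SimpleGraph (Fin N) → Prop) :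
    graphProb p N A = gE p (fun G => if A G then 1 else 0) := by
  unfold graphProb gE
  refine Finset.sum_congr rfl fun G _ => ?_
  by_cases h : A G <;> simp [h]

lemma graphProb_le_one (h0 : ∀ i j, 1 ≤ i → 1 ≤ j → 0 ≤ p i j)
    (h1 : ∀ i j, p i j ≤ 1) (A : SimpleGraph (Fin N) → Prop) : graphProb p N A ≤ 1 := by
  rw [graphProb_eq]
  refine le_trans (gE_mono h0 h1 _ (fun _ => 1) fun G => ?_) (gE_one (N := N) p).le
  split_ifs <;> norm_num

lemma graphProb_mono (h0 : ∀ i j, 1 ≤ i → 1 ≤ j → 0 ≤ p i j)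
    (h1 : ∀ i j, p i j ≤ 1) (A B : SimpleGraph (Fin N) → Prop) (h : ∀ G, A G → B G) :
    graphProb p N A ≤ graphProb p N B := by
  rw [graphProb_eq, graphProb_eq]
  refine gE_mono h0 h1 _ _ fun G => ?_
  by_cases hA : A G
  · simp [hA, h G hA]
  · rw [if_neg hA]; split_ifs <;> norm_num

/-- if the complement of `A` is dominated by `F`, then `A` has large probability -/
lemma graphProb_ge (h0 : ∀ i j, 1 ≤ i → 1 ≤ j → 0 ≤ p i j)
    (h1 : ∀ i j, p i j ≤ 1) (A : SimpleGraph (Fin N) → Prop) (F : SimpleGraph (Fin N) → ℝ)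
    (hF0 : ∀ G, 0 ≤ F G) (hF : ∀ G, ¬ A G → 1 ≤ F G) : 1 - gE p F ≤ graphProb p N A := by
  rw [graphProb_eq]
  have : gE p (fun _ : SimpleGraph (Fin N) => (1:ℝ)) ≤
      gE p (fun G => (if A G then 1 else 0) + F G) := by
    refine gE_mono h0 h1 _ _ fun G => ?_
    have := hF0 G
    split_ifs with h
    · linarith
    · linarith [hF G h]
  rw [gE_one, gE_add] at this
  linarith

end GraphProb

section Chernoff

variable {N : ℕ} {p : ℕ → ℕ → ℝ}

lemma prod_ad_exp (G : SimpleGraph (Fin N)) (X Y : Finset (Fin N)) (a : ℝ) :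
    ∏ x ∈ X, ∏ y ∈ Y, (if G.Adj x y then Real.exp a else 1) =
      Real.exp (a * ∑ x ∈ X, ∑ y ∈ Y, ad G x y) := by
  rw [Finset.mul_sum, Real.exp_sum]
  refine Finset.prod_congr rfl fun x _ => ?_
  rw [Finset.mul_sum, Real.exp_sum]
  refine Finset.prod_congr rfl fun y _ => ?_
  unfold ad
  split_ifs <;> simp

lemma qe_nonneg (h0 : ∀ i j, 1 ≤ i → 1 ≤ j → 0 ≤ p i j) (x y : Fin N) : 0 ≤ qe p x y :=
  h0 _ _ (by omega) (by omega)

lemma chern_up (hs : ∀ i j, p i j = p j i) (h0 : ∀ i j, 1 ≤ i → 1 ≤ j → 0 ≤ p i j)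
    (X Y : Finset (Fin N)) (hXY : Disjoint X Y) (t : ℝ) :
    gE p (fun G => Real.exp (∑ x ∈ X, ∑ y ∈ Y, ad G x y - t)) ≤
      Real.exp (2 * ∑ x ∈ X, ∑ y ∈ Y, qe p x y - t) := by
  have h1 := gE_edges p hs X Y hXY (fun _ => Real.exp (-t)) (fun _ _ _ => rfl) (Real.exp 1)
  have h2 : (fun G : SimpleGraph (Fin N) => Real.exp (-t) *
      ∏ x ∈ X, ∏ y ∈ Y, (if G.Adj x y then Real.exp 1 else 1)) =
      fun G => Real.exp (∑ x ∈ X, ∑ y ∈ Y, ad G x y - t) := by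
    funext G
    rw [prod_ad_exp, ← Real.exp_add]
    congr 1; ring
  rw [h2] at h1
  have h3 : gE p (fun _ : SimpleGraph (Fin N) => Real.exp (-t)) = Real.exp (-t) := by
    have := gE_smul (p := p) (Real.exp (-t)) (fun _ : SimpleGraph (Fin N) => 1)
    rw [gE_one] at this
    simpa using this
  have e : Real.exp (2 * ∑ x ∈ X, ∑ y ∈ Y, qe p x y - t) =
      Real.exp (2 * ∑ x ∈ X, ∑ y ∈ Y, qe p x y) * Real.exp (-t) := by
    rw [← Real.exp_add]; congr 1
  rw [h1, h3, e]
  refine mul_le_mul_of_nonneg_right ?_ (Real.exp_pos _).le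
  rw [Finset.mul_sum, Real.exp_sum]
  have he : 1 ≤ Real.exp 1 := Real.one_le_exp (by norm_num)
  have hterm : ∀ x y : Fin N, 0 ≤ 1 + (Real.exp 1 - 1) * qe p x y := fun x y => by
    have := qe_nonneg h0 x y
    nlinarith
  refine Finset.prod_le_prod (fun x _ => Finset.prod_nonneg fun y _ => hterm x y) fun x _ => ?_
  rw [Finset.mul_sum, Real.exp_sum]
  refine Finset.prod_le_prod (fun y _ => hterm x y) fun y _ => ?_
  have hq := qe_nonneg h0 x y
  have h4 := Real.add_one_le_exp (2 * qe p x y)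
  have h5 : Real.exp 1 < 2.7182818286 := Real.exp_one_lt_d9
  nlinarith

lemma chern_lo (hs : ∀ i j, p i j = p j i) (h0 : ∀ i j, 1 ≤ i → 1 ≤ j → 0 ≤ p i j)
    (h1' : ∀ i j, p i j ≤ 1)
    (X Y : Finset (Fin N)) (hXY : Disjoint X Y) (t : ℝ) :
    gE p (fun G => Real.exp (t - ∑ x ∈ X, ∑ y ∈ Y, ad G x y)) ≤
      Real.exp (t - 1 / 2 * ∑ x ∈ X, ∑ y ∈ Y, qe p x y) := by
  have h1 := gE_edges p hs X Y hXY (fun _ => Real.exp t) (fun _ _ _ => rfl) (Real.exp (-1))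
  have h2 : (fun G : SimpleGraph (Fin N) => Real.exp t *
      ∏ x ∈ X, ∏ y ∈ Y, (if G.Adj x y then Real.exp (-1) else 1)) =
      fun G => Real.exp (t - ∑ x ∈ X, ∑ y ∈ Y, ad G x y) := by
    funext G
    rw [prod_ad_exp, ← Real.exp_add]
    congr 1; ring
  rw [h2] at h1
  have h3 : gE p (fun _ : SimpleGraph (Fin N) => Real.exp t) = Real.exp t := by
    have := gE_smul (p := p) (Real.exp t) (fun _ : SimpleGraph (Fin N) => 1)
    rw [gE_one] at this
    simpa using this
  have e : Real.exp (t - 1 / 2 * ∑ x ∈ X, ∑ y ∈ Y, qe p x y) =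
      Real.exp (-(1 / 2 * ∑ x ∈ X, ∑ y ∈ Y, qe p x y)) * Real.exp t := by
    rw [← Real.exp_add]; congr 1; ring
  rw [h1, h3, e]
  refine mul_le_mul_of_nonneg_right ?_ (Real.exp_pos _).le
  have he : Real.exp (-1) ≤ 1 / 2 := by
    have : Real.exp (-1) < 0.3678794412 := Real.exp_neg_one_lt_d9
    linarith
  have he0 := Real.exp_pos (-1)
  have hterm : ∀ x y : Fin N, 0 ≤ 1 + (Real.exp (-1) - 1) * qe p x y := fun x y => by
    have := qe_nonneg h0 x y
    have h5 : qe p x y ≤ 1 := h1' _ _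
    nlinarith
  rw [← neg_mul, Finset.mul_sum, Real.exp_sum]
  refine Finset.prod_le_prod (fun x _ => Finset.prod_nonneg fun y _ => hterm x y) fun x _ => ?_
  rw [Finset.mul_sum, Real.exp_sum]
  refine Finset.prod_le_prod (fun y _ => hterm x y) fun y _ => ?_
  have hq := qe_nonneg h0 x y
  have h4 := Real.add_one_le_exp (-(1 / 2) * qe p x y)
  nlinarith

/-- the four good events -/
structure Ev (H A B : Finset (Fin N)) (t s : Fin N → ℝ) (Δ k : ℕ)
    (G : SimpleGraph (Fin N)) : Prop where
  e1 : ∀ x, (G.degree x : ℝ) ≤ t x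
  e2 : ∀ h ∈ H, s h ≤ ∑ a ∈ A, ad G h a
  e3 : Expands G A
  e4 : ∀ x ∈ B, part G B Δ k x ⊆ B → k ≤ (part G B Δ k x).card →
    ∃ b ∈ part G B Δ k x, ∃ a ∈ A, G.Adj b a

lemma degree_eq_sum (G : SimpleGraph (Fin N)) (x : Fin N) :
    (G.degree x : ℝ) = ∑ y ∈ Finset.univ.erase x, ad G x y := by
  have h1 : ∑ y, ad G x y = (G.degree x : ℝ) := by
    unfold ad
    rw [← Finset.sum_filter, ← SimpleGraph.neighborFinset_eq_filter]
    simp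
  rw [← h1, ← Finset.add_sum_erase _ _ (Finset.mem_univ x)]
  simp [ad]

lemma ev_prob (hs : ∀ i j, p i j = p j i) (h0 : ∀ i j, 1 ≤ i → 1 ≤ j → 0 ≤ p i j)
    (h1 : ∀ i j, p i j ≤ 1) (H A B : Finset (Fin N)) (hHA : Disjoint H A) (hBA : Disjoint B A)
    (t s : Fin N → ℝ) (Δ k : ℕ) (ε : ℝ) (hε : 0 ≤ ε)
    (b1 : ∀ x, Real.exp (2 * ∑ y ∈ Finset.univ.erase x, qe p x y - t x) ≤ ε)
    (b2 : ∀ h ∈ H, Real.exp (s h - 1 / 2 * ∑ a ∈ A, qe p h a) ≤ ε)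
    (b3 : ∀ S ⊆ A, S.Nonempty → 2 * S.card ≤ A.card →
      Real.exp (S.card - 1 / 2 * ∑ x ∈ S, ∑ y ∈ A \ S, qe p x y) ≤ ε ^ S.card)
    (b4 : ∀ S ⊆ B, k ≤ S.card → ∏ x ∈ S, ∏ y ∈ A, (1 - qe p x y) ≤ ε) :
    1 - (3 * (N * ε) + ((1 + ε) ^ A.card - 1)) ≤ graphProb p N (Ev H A B t s Δ k) := by
  set F1 : SimpleGraph (Fin N) → ℝ := fun G =>
    ∑ x, Real.exp (∑ x' ∈ {x}, ∑ y ∈ Finset.univ.erase x, ad G x' y - t x) with hF1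
  set F2 : SimpleGraph (Fin N) → ℝ := fun G =>
    ∑ h ∈ H, Real.exp (s h - ∑ x' ∈ {h}, ∑ y ∈ A, ad G x' y) with hF2
  set 𝒮 := A.powerset.filter fun S => S.Nonempty ∧ 2 * S.card ≤ A.card with h𝒮
  set F3 : SimpleGraph (Fin N) → ℝ := fun G =>
    ∑ S ∈ 𝒮, Real.exp ((S.card : ℝ) - ∑ x ∈ S, ∑ y ∈ A \ S, ad G x y) with hF3
  set 𝒯 := B.powerset.filter fun S => k ≤ S.card with h𝒯
  set F4 : SimpleGraph (Fin N) → ℝ := fun G =>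
    ∑ x ∈ B, ∑ S ∈ 𝒯, (if part G B Δ k x = S then (1:ℝ) else 0) *
      ∏ x ∈ S, ∏ y ∈ A, (if G.Adj x y then (0:ℝ) else 1) with hF4
  have p1 : ∀ G, 0 ≤ F1 G := fun G => Finset.sum_nonneg fun _ _ => (Real.exp_pos _).le
  have p2 : ∀ G, 0 ≤ F2 G := fun G => Finset.sum_nonneg fun _ _ => (Real.exp_pos _).le
  have p3 : ∀ G, 0 ≤ F3 G := fun G => Finset.sum_nonneg fun _ _ => (Real.exp_pos _).le
  have p4' : ∀ (G : SimpleGraph (Fin N)) x S, 0 ≤ (if part G B Δ k x = S then (1:ℝ) else 0) *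
      ∏ x ∈ S, ∏ y ∈ A, (if G.Adj x y then (0:ℝ) else 1) := by
    intro G x S
    refine mul_nonneg (by split_ifs <;> norm_num)
      (Finset.prod_nonneg fun _ _ => Finset.prod_nonneg fun _ _ => by split_ifs <;> norm_num)
  have p4 : ∀ G, 0 ≤ F4 G := fun G => Finset.sum_nonneg fun _ _ => Finset.sum_nonneg fun _ _ =>
    p4' G _ _
  have hcard : ∀ S : Finset (Fin N), (S.card : ℝ) ≤ N := fun S => by
    have := Finset.card_le_univ S
    rw [Fintype.card_fin] at this
    exact_mod_cast this
  have g1 : gE p F1 ≤ N * ε := by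
    rw [hF1, gE_sum]
    calc _ ≤ ∑ x : Fin N, ε := Finset.sum_le_sum fun x _ => by
          refine (chern_up hs h0 {x} (Finset.univ.erase x) (by simp) (t x)).trans ?_
          rw [Finset.sum_singleton]; exact b1 x
      _ = N * ε := by simp
  have g2 : gE p F2 ≤ N * ε := by
    rw [hF2, gE_sum]
    calc _ ≤ ∑ h ∈ H, ε := Finset.sum_le_sum fun h hh => by
          refine (chern_lo hs h0 h1 {h} A ?_ (s h)).trans ?_
          · rw [Finset.disjoint_singleton_left]; exact Finset.disjoint_left.1 hHA hh
          · rw [Finset.sum_singleton]; exact b2 h hh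
      _ = H.card * ε := by simp
      _ ≤ _ := mul_le_mul_of_nonneg_right (hcard H) hε
  have g3 : gE p F3 ≤ (1 + ε) ^ A.card - 1 := by
    rw [hF3, gE_sum]
    calc _ ≤ ∑ S ∈ 𝒮, ε ^ S.card := Finset.sum_le_sum fun S hS => by
          obtain ⟨h2, h3, h4⟩ := Finset.mem_filter.1 hS
          rw [Finset.mem_powerset] at h2
          exact (chern_lo hs h0 h1 S (A \ S) Finset.disjoint_sdiff _).trans (b3 S h2 h3 h4)
      _ ≤ ∑ S ∈ A.powerset.erase ∅, ε ^ S.card := by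
          refine Finset.sum_le_sum_of_subset_of_nonneg ?_ fun _ _ _ => by positivity
          intro S hS
          obtain ⟨h2, h3, h4⟩ := Finset.mem_filter.1 hS
          exact Finset.mem_erase.2 ⟨h3.ne_empty, h2⟩
      _ = _ := by
          have e1 := Finset.sum_pow_mul_eq_add_pow ε 1 A
          simp only [one_pow, mul_one] at e1
          have e2 := Finset.add_sum_erase A.powerset (fun S => ε ^ S.card)
            (Finset.empty_mem_powerset A)
          simp only [Finset.card_empty, pow_zero] at e2
          rw [add_comm 1 ε, ← e1, ← e2]; ring
  have g4 : gE p F4 ≤ N * ε := by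
    rw [hF4, gE_sum]
    calc _ ≤ ∑ x ∈ B, ε := Finset.sum_le_sum fun x hx => by
          rw [gE_sum]
          have step : ∀ S ∈ 𝒯, gE p (fun G => (if part G B Δ k x = S then (1:ℝ) else 0) *
              ∏ x ∈ S, ∏ y ∈ A, (if G.Adj x y then (0:ℝ) else 1)) ≤
              ε * gE p (fun G => if part G B Δ k x = S then (1:ℝ) else 0) := by
            intro S hS
            obtain ⟨h2, h3⟩ := Finset.mem_filter.1 hS
            rw [Finset.mem_powerset] at h2
            have hd : Disjoint S A := Finset.disjoint_of_subset_left h2 hBA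
            rw [gE_edges p hs S A hd (fun G => if part G B Δ k x = S then (1:ℝ) else 0) ?_ 0]
            · refine mul_le_mul_of_nonneg_right ?_ ?_
              · have := b4 S h2 h3
                refine le_trans (le_of_eq ?_) this
                refine Finset.prod_congr rfl fun _ _ => Finset.prod_congr rfl fun _ _ => ?_
                ring
              · have h5 := gE_mono h0 h1 (fun _ => 0)
                  (fun G : SimpleGraph (Fin N) => if part G B Δ k x = S then (1:ℝ) else 0)
                  (fun G => by split_ifs <;> norm_num)
                refine le_trans (le_of_eq ?_) h5
                simp [gE]
            · intro G G' hh
              have : part G B Δ k = part G' B Δ k := by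
                refine part_congr G G' Δ k B fun a ha b hb => hh a b ?_ ?_
                · exact fun h => Finset.disjoint_left.1 hBA hb h.2
                · exact fun h => Finset.disjoint_left.1 hBA ha h.2
              rw [this]
          refine (Finset.sum_le_sum step).trans ?_
          rw [← Finset.mul_sum, ← gE_sum]
          refine mul_le_of_le_one_right hε ?_
          refine le_trans (gE_mono h0 h1 _ (fun _ => 1) fun G => ?_) (gE_one (N := N) p).le
          rw [Finset.sum_ite_eq]
          split_ifs <;> norm_num
      _ = B.card * ε := by simp
      _ ≤ _ := mul_le_mul_of_nonneg_right (hcard B) hε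
  have hge := graphProb_ge h0 h1 (Ev H A B t s Δ k) (fun G => F1 G + (F2 G + (F3 G + F4 G)))
    (fun G => by have := p1 G; have := p2 G; have := p3 G; have := p4 G; positivity) ?_
  · rw [gE_add, gE_add, gE_add] at hge
    linarith
  intro G hG
  by_contra hcon
  push Not at hcon
  have q1 : F1 G < 1 := by linarith [p1 G, p2 G, p3 G, p4 G]
  have q2 : F2 G < 1 := by linarith [p1 G, p2 G, p3 G, p4 G]
  have q3 : F3 G < 1 := by linarith [p1 G, p2 G, p3 G, p4 G]
  have q4 : F4 G < 1 := by linarith [p1 G, p2 G, p3 G, p4 G]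
  apply hG
  have hexp : ∀ z : ℝ, Real.exp z < 1 → z ≤ 0 := fun z hz => (Real.exp_lt_one_iff.1 hz).le
  refine ⟨?_, ?_, ?_, ?_⟩
  · intro x
    have h2 := (Finset.single_le_sum (f := fun x =>
      Real.exp (∑ x' ∈ {x}, ∑ y ∈ Finset.univ.erase x, ad G x' y - t x))
      (fun x _ => (Real.exp_pos _).le) (Finset.mem_univ x)).trans_lt q1
    have h3 := hexp _ h2
    rw [Finset.sum_singleton, ← degree_eq_sum] at h3
    linarith
  · intro h hh
    have h2 := (Finset.single_le_sum (f := fun h =>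
      Real.exp (s h - ∑ x' ∈ {h}, ∑ y ∈ A, ad G x' y))
      (fun x _ => (Real.exp_pos _).le) hh).trans_lt q2
    have h3 := hexp _ h2
    rw [Finset.sum_singleton] at h3
    linarith
  · intro S hS hc
    rcases S.eq_empty_or_nonempty with rfl | hne
    · simp
    · have h2 := (Finset.single_le_sum (f := fun S : Finset (Fin N) =>
        Real.exp ((S.card : ℝ) - ∑ x ∈ S, ∑ y ∈ A \ S, ad G x y))
        (fun x _ => (Real.exp_pos _).le)
        (Finset.mem_filter.2 ⟨Finset.mem_powerset.2 hS, hne, hc⟩)).trans_lt q3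
      have h3 := hexp _ h2
      unfold ad at h3
      linarith
  · intro x hx hsub hk
    by_contra hno
    push Not at hno
    have hm : part G B Δ k x ∈ 𝒯 := Finset.mem_filter.2 ⟨Finset.mem_powerset.2 hsub, hk⟩
    have h2 : (1:ℝ) ≤ F4 G := by
      refine le_trans ?_ (Finset.single_le_sum (f := fun x => ∑ S ∈ 𝒯,
        (if part G B Δ k x = S then (1:ℝ) else 0) *
        ∏ x ∈ S, ∏ y ∈ A, (if G.Adj x y then (0:ℝ) else 1))
        (fun x _ => Finset.sum_nonneg fun S _ => p4' G x S) hx)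
      refine le_trans (le_of_eq ?_) (Finset.single_le_sum (f := fun S =>
        (if part G B Δ k x = S then (1:ℝ) else 0) *
        ∏ x ∈ S, ∏ y ∈ A, (if G.Adj x y then (0:ℝ) else 1))
        (fun S _ => p4' G x S) hm)
      simp only [if_true, one_mul]
      symm
      exact Finset.prod_eq_one fun b hb => Finset.prod_eq_one fun a ha => if_neg (hno b hb a ha)
    linarith

end Chernoff

section SNR

/-- largeness assumptions on `N`, together with the values of `ℓ = log N` and `L` -/
structure Par (β γ : ℝ) (N : ℕ) (l L : ℝ) : Prop where
  g1 : 1 / 2 < γ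
  g2 : γ < 1
  hβ : 2 ≤ β
  hl : l = Real.log N
  l40 : 40 ≤ l
  L1 : 1 ≤ L
  hL : L ^ (2 * γ - 1) = l ^ 2
  hNL : 32 * L ^ 2 ≤ N
  hw : β * (N : ℝ) ^ (γ - 1) * (2 * L) ^ γ ≤ 1

variable {β γ : ℝ} {N : ℕ} {l L : ℝ}

/-- vertex weight -/
def hh (γ : ℝ) {N : ℕ} (x : Fin N) : ℝ := ((N : ℝ) / ((x : ℕ) + 1 : ℝ)) ^ γ

/-- hubs -/
def HH (N : ℕ) (L : ℝ) : Finset (Fin N) :=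
  Finset.univ.filter fun x => ((x : ℕ) : ℝ) + 1 ≤ N / (2 * L)
/-- core -/
def AA (N : ℕ) (L : ℝ) : Finset (Fin N) :=
  Finset.univ.filter fun x => (N : ℝ) / (2 * L) < ((x : ℕ) : ℝ) + 1 ∧ ((x : ℕ) : ℝ) + 1 ≤ N / L
/-- rest -/
def BB (N : ℕ) (L : ℝ) : Finset (Fin N) :=
  Finset.univ.filter fun x => (N : ℝ) / L < ((x : ℕ) : ℝ) + 1

lemma snr_symm (i j : ℕ) : snrEdgeProb β γ N i j = snrEdgeProb β γ N j i := by
  unfold snrEdgeProb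
  congr 3; ring

lemma snr_le_one (i j : ℕ) : snrEdgeProb β γ N i j ≤ 1 := by
  unfold snrEdgeProb
  have := Real.exp_pos (-(β * (N : ℝ) ^ (2 * γ - 1) * (i : ℝ) ^ (-γ) * (j : ℝ) ^ (-γ)))
  linarith

lemma snr_nonneg (hβ : 0 ≤ β) (i j : ℕ) : 0 ≤ snrEdgeProb β γ N i j := by
  unfold snrEdgeProb
  have : Real.exp (-(β * (N : ℝ) ^ (2 * γ - 1) * (i : ℝ) ^ (-γ) * (j : ℝ) ^ (-γ))) ≤ 1 :=
    Real.exp_le_one_iff.2 (neg_nonpos.2 (by positivity))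
  linarith

lemma qe_eq (hN : 0 < N) (x y : Fin N) :
    qe (snrEdgeProb β γ N) x y = 1 - Real.exp (-(β / N * hh γ x * hh γ y)) := by
  unfold qe snrEdgeProb hh
  have hN' : (0:ℝ) < N := by exact_mod_cast hN
  have e : β * (N : ℝ) ^ (2 * γ - 1) * (((x : ℕ) + 1 : ℕ) : ℝ) ^ (-γ) *
      (((y : ℕ) + 1 : ℕ) : ℝ) ^ (-γ) = β / N * ((N : ℝ) / ((x : ℕ) + 1 : ℝ)) ^ γ *
      ((N : ℝ) / ((y : ℕ) + 1 : ℝ)) ^ γ := by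
    push_cast
    rw [Real.div_rpow hN'.le (by positivity), Real.div_rpow hN'.le (by positivity),
      Real.rpow_neg (by positivity), Real.rpow_neg (by positivity), Real.rpow_sub hN',
      two_mul, Real.rpow_add hN', Real.rpow_one]
    ring
  rw [e]

lemma sum_inv_le (N : ℕ) : ∑ x : Fin N, ((((x : ℕ) : ℝ) + 1))⁻¹ ≤ 1 + Real.log N := by
  have h1 := harmonic_le_one_add_log N
  refine le_trans (le_of_eq ?_) h1
  rw [Fin.sum_univ_eq_sum_range (fun i : ℕ => ((i : ℝ) + 1)⁻¹) N]
  unfold harmonic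
  push_cast
  rfl

namespace Par

lemma N32 (hp : Par β γ N l L) : (32:ℝ) ≤ N := by
  have := hp.hNL; have := hp.L1; nlinarith

lemma Npos (hp : Par β γ N l L) : (0:ℝ) < N := by linarith [hp.N32]

lemma hh_pos (hp : Par β γ N l L) (x : Fin N) : 0 < hh γ x := by
  unfold hh
  have := hp.Npos
  positivity

lemma hh_ge_one (hp : Par β γ N l L) (x : Fin N) : 1 ≤ hh γ x := by
  unfold hh
  refine Real.one_le_rpow ?_ (by linarith [hp.g1])
  rw [le_div_iff₀ (by positivity), one_mul]
  exact_mod_cast x.2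

lemma hh_le (hp : Par β γ N l L) (x : Fin N) : hh γ x ≤ N * (((x : ℕ) : ℝ) + 1)⁻¹ := by
  have h1 : (1:ℝ) ≤ (N : ℝ) / ((x : ℕ) + 1 : ℝ) := by
    rw [le_div_iff₀ (by positivity), one_mul]
    exact_mod_cast x.2
  unfold hh
  calc _ ≤ ((N : ℝ) / ((x : ℕ) + 1 : ℝ)) ^ (1:ℝ) :=
        Real.rpow_le_rpow_of_exponent_le h1 hp.g2.le
    _ = _ := by rw [Real.rpow_one, div_eq_mul_inv]

lemma hh_le_N (hp : Par β γ N l L) (x : Fin N) : hh γ x ≤ (N:ℝ) ^ γ := by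
  unfold hh
  have := hp.Npos
  refine Real.rpow_le_rpow (by positivity) ?_ (by linarith [hp.g1])
  refine div_le_self this.le ?_
  have : (0:ℝ) ≤ (x : ℕ) := by positivity
  linarith

lemma hh_lo (hp : Par β γ N l L) (x : Fin N) (hx : ((x : ℕ) : ℝ) + 1 ≤ N / L) : L ^ γ ≤ hh γ x := by
  unfold hh
  have hL := hp.L1
  refine Real.rpow_le_rpow (by positivity) ?_ (by linarith [hp.g1])
  rw [le_div_iff₀ (by positivity)] at hx ⊢
  linarith

lemma hh_up (hp : Par β γ N l L) (x : Fin N) (hx : x ∉ HH N L) : hh γ x ≤ (2 * L) ^ γ := by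
  unfold hh
  have hL := hp.L1
  have := hp.Npos
  simp only [HH, Finset.mem_filter, Finset.mem_univ, true_and, not_le] at hx
  refine Real.rpow_le_rpow (by positivity) ?_ (by linarith [hp.g1])
  rw [div_lt_iff₀ (by positivity)] at hx
  rw [div_le_iff₀ (by positivity)]
  linarith

lemma two_L (hp : Par β γ N l L) : (2 * L) ^ γ ≤ 2 * L := by
  have hL := hp.L1
  calc _ ≤ (2 * L) ^ (1:ℝ) := Real.rpow_le_rpow_of_exponent_le (by linarith) hp.g2.le
    _ = _ := Real.rpow_one _

lemma La (hp : Par β γ N l L) : L ^ γ = L ^ (γ - 1) * L := by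
  have hL := hp.L1
  rw [← Real.rpow_add_one (by positivity)]; congr 1; ring

lemma Lab (hp : Par β γ N l L) : L ^ γ * L ^ (γ - 1) = l ^ 2 := by
  have hL := hp.L1
  rw [← Real.rpow_add (by positivity), ← hp.hL]; congr 1; ring

lemma La1 (hp : Par β γ N l L) : 1 ≤ L ^ γ := Real.one_le_rpow hp.L1 (by linarith [hp.g1])

lemma Lb0 (hp : Par β γ N l L) : 0 < L ^ (γ - 1) := by
  have hL := hp.L1
  positivity

lemma not_HA (hp : Par β γ N l L) (x : Fin N) : x ∉ HH N L ∪ AA N L ↔ x ∈ BB N L := by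
  have hL := hp.L1
  have hN := hp.Npos
  have h : (N:ℝ) / (2 * L) ≤ N / L := by
    rw [div_le_div_iff₀ (by positivity) (by positivity)]
    nlinarith
  simp only [HH, AA, BB, Finset.mem_union, Finset.mem_filter, Finset.mem_univ, true_and, not_or,
    not_le, not_and]
  constructor
  · exact fun h => h.2 h.1
  · exact fun h' => ⟨by linarith, fun _ => h'⟩

lemma disjHA (_hp : Par β γ N l L) : Disjoint (HH N L) (AA N L) := by
  rw [Finset.disjoint_left]
  intro x hx hx'
  simp only [HH, AA, Finset.mem_filter, Finset.mem_univ, true_and] at hx hx'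
  linarith [hx'.1]

lemma disjBA (_hp : Par β γ N l L) : Disjoint (BB N L) (AA N L) := by
  rw [Finset.disjoint_left]
  intro x hx hx'
  simp only [BB, AA, Finset.mem_filter, Finset.mem_univ, true_and] at hx hx'
  linarith [hx'.2]

lemma cardA (hp : Par β γ N l L) : (N:ℝ) / (4 * L) ≤ (AA N L).card := by
  have hL := hp.L1
  have hN := hp.Npos
  have h1 : Finset.Ioc ⌊(N:ℝ) / (2 * L)⌋₊ ⌊(N:ℝ) / L⌋₊ ⊆
      (AA N L).image (fun x : Fin N => (x : ℕ) + 1) := by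
    intro i hi
    rw [Finset.mem_Ioc, Nat.floor_lt (by positivity), Nat.le_floor_iff (by positivity)] at hi
    have hi0 : 0 < i := by
      by_contra h
      have : i = 0 := by omega
      subst this
      have : (0:ℝ) ≤ (N:ℝ) / (2 * L) := by positivity
      have := hi.1
      push_cast at this
      linarith
    have hiN : i ≤ N := by
      have h3 : (i:ℝ) ≤ N := hi.2.trans (div_le_self hN.le hL)
      exact_mod_cast h3
    rw [Finset.mem_image]
    refine ⟨⟨i - 1, by omega⟩, ?_, by simp; omega⟩
    simp only [AA, Finset.mem_filter, Finset.mem_univ, true_and]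
    have e : ((i - 1 : ℕ) : ℝ) + 1 = i := by
      rw [Nat.cast_sub (by omega)]; push_cast; ring
    rw [e]
    exact hi
  have h2 := (Finset.card_le_card h1).trans Finset.card_image_le
  rw [Nat.card_Ioc] at h2
  have h3 : (⌊(N:ℝ) / L⌋₊ : ℝ) ≤ (AA N L).card + ⌊(N:ℝ) / (2 * L)⌋₊ := by
    have : ⌊(N:ℝ) / L⌋₊ ≤ (AA N L).card + ⌊(N:ℝ) / (2 * L)⌋₊ := by omega
    exact_mod_cast this
  have h4 := Nat.lt_floor_add_one ((N:ℝ) / L)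
  have h5 := Nat.floor_le (show 0 ≤ (N:ℝ) / (2 * L) by positivity)
  have e1 : (N:ℝ) / L = 4 * (N / (4 * L)) := by field_simp
  have e2 : (N:ℝ) / (2 * L) = 2 * (N / (4 * L)) := by field_simp; norm_num
  have h6 : 1 ≤ (N:ℝ) / (4 * L) := by
    rw [le_div_iff₀ (by positivity)]
    nlinarith [hp.hNL]
  linarith

lemma Nnat (hp : Par β γ N l L) : 0 < N := by exact_mod_cast hp.Npos

lemma qe_le (hp : Par β γ N l L) (x y : Fin N) : qe (snrEdgeProb β γ N) x y ≤ β / N * hh γ x * hh γ y := by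
  rw [qe_eq hp.Nnat]
  have := Real.add_one_le_exp (-(β / N * hh γ x * hh γ y))
  linarith

lemma qe_A (hp : Par β γ N l L) (x y : Fin N) (hy : y ∈ AA N L) :
    hh γ x * L ^ γ / N ≤ qe (snrEdgeProb β γ N) x y := by
  have hN := hp.Npos
  have hL := hp.L1
  have hβ := hp.hβ
  have hx0 := hp.hh_pos x
  have hy0 := hp.hh_pos y
  have hyH : y ∉ HH N L := fun h => Finset.disjoint_left.1 hp.disjHA h hy
  have hylo : L ^ γ ≤ hh γ y := by
    refine hp.hh_lo y ?_
    simp only [AA, Finset.mem_filter, Finset.mem_univ, true_and] at hy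
    exact hy.2
  set w := β / N * hh γ x * hh γ y with hw
  have hw0 : 0 ≤ w := by positivity
  have hw1 : w ≤ 1 := by
    refine le_trans ?_ hp.hw
    calc w ≤ β / N * (N:ℝ) ^ γ * (2 * L) ^ γ := by
          rw [hw]
          gcongr
          · exact hp.hh_le_N x
          · exact hp.hh_up y hyH
      _ = _ := by
          rw [Real.rpow_sub hN, Real.rpow_one]; ring
  have hq : w / 2 ≤ qe (snrEdgeProb β γ N) x y := by
    rw [qe_eq hp.Nnat, ← hw]
    have h1 : Real.exp (-w) * (1 + w) ≤ 1 := by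
      have := Real.add_one_le_exp w
      have h3 : Real.exp (-w) * Real.exp w = 1 := by rw [← Real.exp_add]; simp
      nlinarith [Real.exp_pos (-w)]
    nlinarith [Real.exp_pos (-w)]
  refine le_trans ?_ hq
  rw [hw]
  calc hh γ x * L ^ γ / N ≤ hh γ x * hh γ y / N := by gcongr
    _ = 2 / N * hh γ x * hh γ y / 2 := by ring
    _ ≤ _ := by gcongr

lemma sum_qe_A (hp : Par β γ N l L) (x : Fin N) : hh γ x * L ^ (γ - 1) / 4 ≤
    ∑ a ∈ AA N L, qe (snrEdgeProb β γ N) x a := by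
  have hN := hp.Npos
  have hL := hp.L1
  have hx0 := hp.hh_pos x
  have hb := hp.Lb0
  calc hh γ x * L ^ (γ - 1) / 4 = N / (4 * L) * (hh γ x * L ^ γ / N) := by
        rw [hp.La]; field_simp
    _ ≤ (AA N L).card * (hh γ x * L ^ γ / N) := by
        have := hp.cardA
        have := hp.La1
        gcongr
    _ = ∑ a ∈ AA N L, (hh γ x * L ^ γ / N) := by simp
    _ ≤ _ := Finset.sum_le_sum fun a ha => hp.qe_A x a ha

end Par

/-- degree constant -/
def DD (β l : ℝ) : ℝ := (4 * β + 2) * l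
def kk (l L : ℝ) : ℕ := ⌈8 * l * L⌉₊
def ΔΔ (β l L : ℝ) : ℕ := ⌊2 * DD β l * L⌋₊

/-- the good event for the graph -/
def SEv (β γ l L : ℝ) {N : ℕ} (G : SimpleGraph (Fin N)) : Prop :=
  Ev (HH N L) (AA N L) (BB N L) (fun x => DD β l * hh γ x)
    (fun x => hh γ x * L ^ (γ - 1) / 16) (ΔΔ β l L) (kk l L) G

lemma Par.ev (hp : Par β γ N l L) : 1 - 5 / (N:ℝ) ≤ snrProb β γ N (SEv β γ l L) := by
  have hN := hp.Npos
  have hL := hp.L1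
  have hβ := hp.hβ
  have hl := hp.l40
  have hb := hp.Lb0
  have ha := hp.La1
  have h := ev_prob (p := snrEdgeProb β γ N) snr_symm
    (fun i j _ _ => snr_nonneg (by linarith) i j)
    snr_le_one (HH N L) (AA N L) (BB N L) hp.disjHA hp.disjBA (fun x => DD β l * hh γ x)
    (fun x => hh γ x * L ^ (γ - 1) / 16) (ΔΔ β l L) (kk l L) (Real.exp (-(2 * l)))
    (Real.exp_pos _).le ?_ ?_ ?_ ?_
  · refine le_trans ?_ h
    have e1 : (N:ℝ) * Real.exp (-(2 * l)) = 1 / N := by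
      have : Real.exp l = N := by rw [hp.hl, Real.exp_log hN]
      rw [show -(2 * l) = -l + -l by ring, Real.exp_add, Real.exp_neg, this]
      field_simp
    have e2 : (1 + Real.exp (-(2 * l))) ^ (AA N L).card ≤ 1 + 2 / N := by
      calc (1 + Real.exp (-(2 * l))) ^ (AA N L).card
          ≤ (Real.exp (Real.exp (-(2 * l)))) ^ (AA N L).card := by
            gcongr
            have := Real.add_one_le_exp (Real.exp (-(2 * l)))
            linarith
        _ = Real.exp ((AA N L).card * Real.exp (-(2 * l))) := by rw [Real.exp_nat_mul]
        _ ≤ Real.exp (1 / N) := by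
            rw [← e1]
            gcongr
            have := Finset.card_le_univ (AA N L)
            rw [Fintype.card_fin] at this
            exact_mod_cast this
        _ ≤ _ := by
            have h3 : (1:ℝ) / N ≤ 1 / 2 := by
              have := hp.N32
              gcongr; linarith
            have h4 : Real.exp (-(1 / N)) * Real.exp (1 / N) = 1 := by
              rw [← Real.exp_add]; simp
            have h5 := Real.add_one_le_exp (-(1 / (N:ℝ)))
            have h6 := Real.exp_pos (1 / (N:ℝ))
            have h7 : (0:ℝ) < 1 / N := by positivity
            have h8 : (1 - 1 / (N:ℝ)) * Real.exp (1 / N) ≤ 1 := by nlinarith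
            rw [show (2:ℝ) / N = 2 * (1 / N) by ring]
            set z := (1:ℝ) / N
            have h9 : 1 ≤ (1 - z) * (1 + 2 * z) := by nlinarith
            by_contra hc
            push Not at hc
            have h10 : (1 - z) * (1 + 2 * z) < (1 - z) * Real.exp z :=
              mul_lt_mul_of_pos_left hc (by linarith)
            linarith
    rw [e1]
    have : (5:ℝ) / N = 3 * (1 / N) + 2 / N := by ring
    linarith
  · intro x
    rw [Real.exp_le_exp]
    have h1 := hp.hh_ge_one x
    have h2 : ∑ y ∈ Finset.univ.erase x, qe (snrEdgeProb β γ N) x y ≤ β * hh γ x * (1 + l) := by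
      calc _ ≤ ∑ y, qe (snrEdgeProb β γ N) x y :=
            Finset.sum_le_sum_of_subset_of_nonneg (Finset.erase_subset _ _) fun y _ _ =>
              snr_nonneg (by linarith) _ _
        _ ≤ ∑ y : Fin N, β * hh γ x * (((y : ℕ) : ℝ) + 1)⁻¹ := by
            refine Finset.sum_le_sum fun y _ => (hp.qe_le x y).trans ?_
            have := hp.hh_le y
            calc β / N * hh γ x * hh γ y ≤ β / N * hh γ x * (N * (((y : ℕ) : ℝ) + 1)⁻¹) := by
                  gcongr
              _ = _ := by field_simp
        _ = β * hh γ x * ∑ y : Fin N, (((y : ℕ) : ℝ) + 1)⁻¹ := by rw [Finset.mul_sum]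
        _ ≤ _ := by
            rw [hp.hl]
            have := sum_inv_le N
            gcongr
    have h3 : 2 * (β * hh γ x * (1 + l)) + 2 * l ≤ DD β l * hh γ x := by
      unfold DD
      have h4 : β * hh γ x * (1 + l) ≤ β * hh γ x * (2 * l) := by gcongr; linarith
      nlinarith
    linarith
  · intro x hx
    rw [Real.exp_le_exp]
    have h1 := hp.sum_qe_A x
    have h2 : L ^ γ ≤ hh γ x := by
      refine hp.hh_lo x ?_
      simp only [HH, Finset.mem_filter, Finset.mem_univ, true_and] at hx
      refine hx.trans ?_
      gcongr
      linarith
    have h3 : l ^ 2 ≤ hh γ x * L ^ (γ - 1) := by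
      rw [← hp.Lab]; gcongr
    nlinarith
  · intro S hS hne hc
    rw [← Real.exp_nat_mul, Real.exp_le_exp]
    have hxy : ∀ x ∈ S, l ^ 2 / 8 ≤ ∑ y ∈ AA N L \ S, qe (snrEdgeProb β γ N) x y := by
      intro x hx
      have hxA := hS hx
      have h2 : L ^ γ ≤ hh γ x := by
        refine hp.hh_lo x ?_
        simp only [AA, Finset.mem_filter, Finset.mem_univ, true_and] at hxA
        exact hxA.2
      have hcard : (N:ℝ) / (8 * L) ≤ (AA N L \ S).card := by
        have h3 := Finset.card_sdiff_add_card_eq_card hS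
        have h4 : ((AA N L).card : ℝ) ≤ 2 * (AA N L \ S).card := by
          have : (AA N L).card ≤ 2 * (AA N L \ S).card := by omega
          exact_mod_cast this
        have h5 := hp.cardA
        have e : (N:ℝ) / (8 * L) = N / (4 * L) / 2 := by field_simp; norm_num
        linarith
      calc l ^ 2 / 8 = N / (8 * L) * (L ^ γ * L ^ γ / N) := by
            rw [← hp.Lab]
            conv_rhs => rw [hp.La]
            rw [hp.La]
            field_simp
        _ ≤ (AA N L \ S).card * (L ^ γ * L ^ γ / N) := by gcongr
        _ = ∑ y ∈ AA N L \ S, (L ^ γ * L ^ γ / N) := by simp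
        _ ≤ _ := Finset.sum_le_sum fun y hy => by
            refine le_trans ?_ (hp.qe_A x y (Finset.mem_sdiff.1 hy).1)
            gcongr
    have h2 := Finset.sum_le_sum hxy
    rw [Finset.sum_const, nsmul_eq_mul] at h2
    have h3 : (0:ℝ) ≤ S.card := by positivity
    have h4 : 1 - l ^ 2 / 16 ≤ -(2 * l) := by nlinarith
    nlinarith
  · intro S hS hk
    have h1 : ∀ x ∈ S, ∏ y ∈ AA N L, (1 - qe (snrEdgeProb β γ N) x y) ≤
        Real.exp (-(L ^ (γ - 1) / 4)) := by
      intro x hx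
      calc _ ≤ ∏ y ∈ AA N L, Real.exp (-qe (snrEdgeProb β γ N) x y) := by
            refine Finset.prod_le_prod (fun y _ => ?_) fun y _ => ?_
            · have : qe (snrEdgeProb β γ N) x y ≤ 1 := snr_le_one _ _
              linarith
            · have := Real.add_one_le_exp (-qe (snrEdgeProb β γ N) x y)
              linarith
        _ = Real.exp (-∑ y ∈ AA N L, qe (snrEdgeProb β γ N) x y) := by
            rw [← Real.exp_sum, Finset.sum_neg_distrib]
        _ ≤ _ := by
            rw [Real.exp_le_exp]
            have := hp.sum_qe_A x
            have := hp.hh_ge_one x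
            nlinarith
    calc _ ≤ ∏ x ∈ S, Real.exp (-(L ^ (γ - 1) / 4)) := by
          refine Finset.prod_le_prod (fun x _ => Finset.prod_nonneg fun y _ => ?_) h1
          have : qe (snrEdgeProb β γ N) x y ≤ 1 := snr_le_one _ _
          linarith
      _ = Real.exp (S.card * -(L ^ (γ - 1) / 4)) := by
          rw [Finset.prod_const, Real.exp_nat_mul]
      _ ≤ _ := by
          rw [Real.exp_le_exp]
          have h2 : 8 * l * L ≤ S.card := by
            refine (Nat.le_ceil _).trans ?_
            exact_mod_cast hk
          have h3 : 1 ≤ L ^ (γ - 1) * L := by rw [← hp.La]; exact ha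
          have h4 : 8 * l * L * L ^ (γ - 1) ≤ S.card * L ^ (γ - 1) := by gcongr
          nlinarith

end SNR

section SNR2

variable {β γ : ℝ} {N : ℕ} {l L : ℝ}

/-- the polylog constants -/
def KK (β l L : ℝ) : ℝ := (19 * DD β l * L ^ 2 * l) ^ 2
def WW (β l L θ : ℝ) : ℝ := 2 * KK β l L ^ |θ - 1|

lemma rpow_lo (d K s : ℝ) (h1 : 1 ≤ d) (hK : d ≤ K) : 1 ≤ K ^ |s| * d ^ s := by
  have hd : 0 < d := by linarith
  calc (1:ℝ) = d ^ (-s) * d ^ s := by rw [← Real.rpow_add hd]; simp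
    _ ≤ d ^ |s| * d ^ s := by
        gcongr
        exact neg_le_abs s
    _ ≤ _ := by gcongr

lemma Par.DD1 (hp : Par β γ N l L) : 1 ≤ DD β l := by
  have := hp.l40; have := hp.hβ
  unfold DD; nlinarith

lemma Par.kk_le (hp : Par β γ N l L) : (kk l L : ℝ) ≤ 9 * l * L := by
  have := hp.l40; have := hp.L1
  have h := Nat.ceil_lt_add_one (show 0 ≤ 8 * l * L by positivity)
  unfold kk
  nlinarith

lemma Par.ΔΔ_le (hp : Par β γ N l L) : (ΔΔ β l L : ℝ) ≤ 2 * DD β l * L := by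
  have := hp.DD1; have := hp.L1
  exact Nat.floor_le (by positivity)

lemma Par.base (hp : Par β γ N l L) : 19 * DD β l * L ≤ 19 * DD β l * L ^ 2 * l ∧
    1 ≤ 19 * DD β l * L ∧ 1 + 18 * (DD β l * L ^ 2 * l) ≤ 19 * DD β l * L ^ 2 * l := by
  have h1 := hp.DD1; have h2 := hp.L1; have h3 := hp.l40
  have h4 : 1 ≤ DD β l * L := by nlinarith
  have h5 : 1 ≤ L * l := by nlinarith
  have h6 : DD β l * L * 1 ≤ DD β l * L * (L * l) := by gcongr
  refine ⟨by nlinarith, by nlinarith, by nlinarith⟩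

lemma Par.KK_ge (hp : Par β γ N l L) : 19 * DD β l * L ≤ KK β l L ∧ 1 ≤ KK β l L := by
  obtain ⟨h1, h2, h3⟩ := hp.base
  unfold KK
  constructor <;> nlinarith

lemma Par.WW_ge (hp : Par β γ N l L) (θ : ℝ) : 1 ≤ WW β l L θ := by
  have h := hp.KK_ge.2
  have : 1 ≤ KK β l L ^ |θ - 1| := Real.one_le_rpow h (abs_nonneg _)
  unfold WW; linarith

lemma Par.nonhub_deg (hp : Par β γ N l L) {G : SimpleGraph (Fin N)} (hE : SEv β γ l L G)
    (x : Fin N) (hx : x ∉ HH N L) : (G.degree x : ℝ) ≤ 2 * DD β l * L := by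
  have h1 := hE.e1 x
  have h2 := hp.hh_up x hx
  have h3 := hp.two_L
  have h4 := hp.DD1
  calc (G.degree x : ℝ) ≤ DD β l * hh γ x := h1
    _ ≤ DD β l * (2 * L) := by gcongr; linarith
    _ = _ := by ring

lemma Par.hub_s (hp : Par β γ N l L) (x : Fin N) (hx : x ∈ HH N L) :
    l ^ 2 ≤ hh γ x * L ^ (γ - 1) := by
  have hb := hp.Lb0
  have hL := hp.L1
  have hN := hp.Npos
  have h2 : L ^ γ ≤ hh γ x := by
    refine hp.hh_lo x ?_
    simp only [HH, Finset.mem_filter, Finset.mem_univ, true_and] at hx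
    refine hx.trans ?_
    gcongr
    linarith
  rw [← hp.Lab]; gcongr

lemma Par.good (hp : Par β γ N l L) {G : SimpleGraph (Fin N)} (hE : SEv β γ l L G) (θ : ℝ) :
    Good G θ (HH N L) (AA N L) (part G (BB N L) (ΔΔ β l L) (kk l L)) (KK β l L) (WW β l L θ) := by
  obtain ⟨hK1, hK2⟩ := hp.KK_ge
  have hD := hp.DD1
  have hL := hp.L1
  have hl := hp.l40
  have hN := hp.Npos
  have hBdeg : ∀ x ∈ BB N L, G.degree x ≤ ΔΔ β l L := by
    intro x hx
    refine Nat.le_floor (hp.nonhub_deg hE x ?_)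
    have := (hp.not_HA x).2 hx
    exact fun h => this (Finset.mem_union_left _ h)
  have hps := part_spec G (ΔΔ β l L) (kk l L) (BB N L) hBdeg
  have hdegK : ∀ x ∉ HH N L, (G.degree x : ℝ) ≤ KK β l L := by
    intro x hx
    refine (hp.nonhub_deg hE x hx).trans (le_trans ?_ hK1)
    gcongr; norm_num
  refine ⟨hK2, hp.WW_ge θ, ?_, hp.disjHA, hdegK, ?_, ?_, hE.e3, ?_, ?_, ?_, ?_, ?_, ?_, ?_⟩
  · rw [← Finset.card_pos]
    have h1 := hp.cardA
    have h2 : (0:ℝ) < N / (4 * L) := by positivity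
    exact_mod_cast h2.trans_le h1
  · intro h hh'
    have h1 := hE.e1 h
    have h2 := hE.e2 h hh'
    have h3 := hp.hh_pos h
    have h4 : 1 ≤ L ^ (γ - 1) * L := by rw [← hp.La]; exact hp.La1
    have hb := hp.Lb0
    calc (G.degree h : ℝ) ≤ DD β l * hh γ h := h1
      _ = DD β l * hh γ h * 1 := by ring
      _ ≤ DD β l * hh γ h * (L ^ (γ - 1) * L) := by gcongr
      _ ≤ 19 * DD β l * L * (hh γ h * L ^ (γ - 1) / 16) := by
          have : 0 ≤ DD β l * hh γ h * (L ^ (γ - 1) * L) := by positivity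
          nlinarith
      _ ≤ KK β l L * (hh γ h * L ^ (γ - 1) / 16) := by gcongr
      _ ≤ _ := by gcongr
  · intro h hh'
    have h2 := hE.e2 h hh'
    have h3 := hp.hub_s h hh'
    refine le_trans ?_ h2
    nlinarith
  · intro x hx
    exact (hps x ((hp.not_HA x).1 hx)).1
  · intro x hx y hy
    exact (hp.not_HA y).2 ((hps x ((hp.not_HA x).1 hx)).2.1 hy)
  · intro x hx
    exact (hps x ((hp.not_HA x).1 hx)).2.2.1
  · intro x hx
    have h1 := (hps x ((hp.not_HA x).1 hx)).2.2.2.2.1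
    have h2 : ((part G (BB N L) (ΔΔ β l L) (kk l L) x).card : ℝ) ≤
        (1 + ΔΔ β l L * kk l L) ^ 2 := by
      have : (part G (BB N L) (ΔΔ β l L) (kk l L) x).card ≤ (1 + ΔΔ β l L * kk l L) ^ 2 := by
        refine h1.trans (le_of_eq ?_); ring
      exact_mod_cast this
    refine h2.trans ?_
    unfold KK
    obtain ⟨_, _, h3⟩ := hp.base
    have h4 : (ΔΔ β l L : ℝ) * kk l L ≤ (2 * DD β l * L) * (9 * l * L) := by
      have := hp.kk_le
      have := hp.ΔΔ_le
      gcongr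
    have h5 : (1:ℝ) + ΔΔ β l L * kk l L ≤ 19 * DD β l * L ^ 2 * l := by nlinarith
    gcongr
  · intro x hx
    exact (hps x ((hp.not_HA x).1 hx)).2.2.2.1
  · intro x hx
    have hxB := (hp.not_HA x).1 hx
    have h1 := hps x hxB
    by_cases hc : ∃ b ∈ part G (BB N L) (ΔΔ β l L) (kk l L) x, ∃ q ∈ HH N L ∪ AA N L, G.Adj b q
    · exact Or.inl hc
    · right
      rcases h1.2.2.2.2.2 with h2 | h2
      · exfalso
        obtain ⟨b, hb, a, ha, hab⟩ := hE.e4 x hxB h1.2.1 h2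
        exact hc ⟨b, hb, a, Finset.mem_union_right _ ha, hab⟩
      · intro b hb y hby
        refine h2 b hb y ?_ hby
        rw [← hp.not_HA]
        exact fun hy => hc ⟨b, hb, y, hy, hby⟩
  · intro x z hx hadj
    have hd1 : (1:ℝ) ≤ G.degree x := by
      have : 0 < G.degree x := (G.degree_pos_iff_exists_adj x).2 ⟨z, hadj⟩
      exact_mod_cast this
    have h1 := rpow_lo (G.degree x : ℝ) (KK β l L) (θ - 1) hd1 (hdegK x hx)
    have h2 := rt_nonneg G θ z
    have h3 : rt G θ x = (G.degree x : ℝ) ^ (θ - 1) := by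
      unfold rt
      rw [Real.rpow_sub_one (by linarith)]; rfl
    unfold WW cw
    rw [if_pos hadj, h3]
    have h4 : 0 ≤ KK β l L ^ |θ - 1| := by positivity
    nlinarith

/-- sum of the rates -/
lemma Par.sum_rt (hp : Par β γ N l L) {G : SimpleGraph (Fin N)} (hE : SEv β γ l L G) (θ M : ℝ)
    (hM0 : 0 < M) (hM : ∀ x : Fin N, 1 ≤ M * (((x : ℕ) : ℝ) + 1)⁻¹ ∧
      (0 < θ → hh γ x ^ θ ≤ M * (((x : ℕ) : ℝ) + 1)⁻¹)) :
    ∑ x, (G.degree x : ℝ) * rt G θ x ≤ DD β l ^ |θ| * M * (1 + l) := by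
  have hD := hp.DD1
  have hD1 : 1 ≤ DD β l ^ |θ| := Real.one_le_rpow hD (abs_nonneg _)
  calc ∑ x, (G.degree x : ℝ) * rt G θ x
      ≤ ∑ x : Fin N, DD β l ^ |θ| * M * (((x : ℕ) : ℝ) + 1)⁻¹ := by
        refine Finset.sum_le_sum fun x _ => ?_
        obtain ⟨hM1, hM2⟩ := hM x
        rcases Nat.eq_zero_or_pos (G.degree x) with h0 | h0
        · rw [h0]; simp; positivity
        have hd : (1:ℝ) ≤ G.degree x := by exact_mod_cast h0
        have e : (G.degree x : ℝ) * rt G θ x = (G.degree x : ℝ) ^ θ := by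
          unfold rt; field_simp
        rw [e, mul_assoc]
        rcases le_or_gt θ 0 with hθ | hθ
        · calc (G.degree x : ℝ) ^ θ ≤ 1 := Real.rpow_le_one_of_one_le_of_nonpos hd hθ
            _ ≤ _ := by nlinarith
        · have h1 : (G.degree x : ℝ) ≤ DD β l * hh γ x := hE.e1 x
          calc (G.degree x : ℝ) ^ θ ≤ (DD β l * hh γ x) ^ θ := by gcongr
            _ = DD β l ^ |θ| * hh γ x ^ θ := by
                rw [Real.mul_rpow (by linarith) (hp.hh_pos x).le, abs_of_pos hθ]
            _ ≤ _ := by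
                have := hM2 hθ
                gcongr
    _ = DD β l ^ |θ| * M * ∑ x : Fin N, (((x : ℕ) : ℝ) + 1)⁻¹ := by rw [Finset.mul_sum]
    _ ≤ _ := by
        rw [hp.hl]
        have := sum_inv_le N
        rw [← hp.hl] at this ⊢
        gcongr

lemma Par.lower (hp : Par β γ N l L) {G : SimpleGraph (Fin N)} (hE : SEv β γ l L G) (θ u M : ℝ)
    (hu : u ∈ Set.Ioo (0 : ℝ) 1)
    (hintg : MeasureTheory.IntegrableOn (nu G θ u) (Set.Ioi 0))
    (hM0 : 0 < M) (hM : ∀ x : Fin N, 1 ≤ M * (((x : ℕ) : ℝ) + 1)⁻¹ ∧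
      (0 < θ → hh γ x ^ θ ≤ M * (((x : ℕ) : ℝ) + 1)⁻¹)) :
    (N:ℝ) ^ 2 / M * (128 * ((u * (1 - u)) ^ 2)⁻¹ * L ^ 2 * DD β l ^ |θ| * (1 + l))⁻¹ ≤
      expectedConsensusTime G θ u := by
  have hD := hp.DD1
  have hL := hp.L1
  have hl := hp.l40
  have hN := hp.Npos
  have hg := hp.good hE θ
  have hDp : 0 < DD β l ^ |θ| := by positivity
  have hu1 : 0 < u * (1 - u) := mul_pos hu.1 (by linarith [hu.2])
  have hR : ((N:ℝ) / (4 * L)) ^ 2 ≤ reachPairs G := by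
    refine le_trans ?_ hg.reachPairs
    have := hp.cardA
    gcongr
  have hR2 : 2 * (N:ℝ) ≤ reachPairs G := by
    refine le_trans ?_ hR
    rw [div_pow, le_div_iff₀ (by positivity)]
    have := hp.hNL
    nlinarith
  have h := lower_bound G θ u hu hintg (DD β l ^ |θ| * M * (1 + l)) (by positivity)
    (hp.sum_rt hE θ M hM0 hM) hR2 hp.Nnat
  refine le_trans ?_ h
  calc _ = (u * (1 - u)) ^ 2 * ((N:ℝ) / (4 * L)) ^ 2 / (8 * (DD β l ^ |θ| * M * (1 + l))) := by
        field_simp; ring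
    _ ≤ _ := by gcongr

lemma Par.upper1 (hp : Par β γ N l L) {G : SimpleGraph (Fin N)} (hE : SEv β γ l L G) (θ u : ℝ)
    (hu : u ∈ Set.Ioo (0 : ℝ) 1) :
    MeasureTheory.IntegrableOn (nu G θ u) (Set.Ioi 0) ∧
    expectedConsensusTime G θ u ≤
      (N:ℝ) * (440 * KK β l L ^ 4 * WW β l L θ * (2 * l + 1)) := by
  have hg := hp.good hE θ
  have hN := hp.Npos
  have hK := hg.K1
  have hW := hg.W1
  have h := upper_bound G θ u hu (4 * N * (110 * KK β l L ^ 4 * WW β l L θ)) (by positivity)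
    hp.Nnat (fun P h0 _ hr => hg.FI1 hp.Nnat P h0 hr)
  refine ⟨h.1, h.2.trans (le_of_eq ?_)⟩
  rw [← hp.hl]; ring

lemma Par.upper2 (hp : Par β γ N l L) {G : SimpleGraph (Fin N)} (hE : SEv β γ l L G) (θ u : ℝ)
    (hu : u ∈ Set.Ioo (0 : ℝ) 1) (hθ0 : 0 ≤ θ) (hθ : θ ≤ 2) :
    expectedConsensusTime G θ u ≤
      (N:ℝ) ^ (2 - γ * θ) * (17380 * (16 * L) ^ θ * KK β l L ^ 4 * WW β l L θ * (2 * l + 1)) := by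
  have hg := hp.good hE θ
  have hN := hp.Npos
  have hL := hp.L1
  have hl := hp.l40
  have hK := hg.K1
  have hW := hg.W1
  set v : Fin N := ⟨0, hp.Nnat⟩ with hv
  have hvH : v ∈ HH N L := by
    simp only [HH, Finset.mem_filter, Finset.mem_univ, true_and, hv, Nat.cast_zero, zero_add]
    rw [le_div_iff₀ (by positivity)]
    nlinarith [hp.hNL]
  have hdv : (N:ℝ) ^ γ / (16 * L) ≤ G.degree v := by
    have h1 := hE.e2 v hvH
    have h2 := sum_ad_le G (AA N L) v
    have h3 : hh γ v = (N:ℝ) ^ γ := by simp [hh, hv]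
    rw [h3] at h1
    have h4 : 1 ≤ L ^ (γ - 1) * L := by rw [← hp.La]; exact hp.La1
    refine le_trans ?_ (h1.trans h2)
    rw [div_le_div_iff₀ (by positivity) (by positivity)]
    have : 0 < (N:ℝ) ^ γ := by positivity
    nlinarith
  have hNg : 0 < (N:ℝ) ^ γ := by positivity
  have hd0 : (0:ℝ) < G.degree v := lt_of_lt_of_le (by positivity) hdv
  have h := (upper_bound G θ u hu
    (158 * (110 * KK β l L ^ 4 * WW β l L θ) * N ^ 2 / (G.degree v : ℝ) ^ θ) (by positivity)
    hp.Nnat (fun P h0 hs hr => hg.FI2 hp.Nnat hθ v hvH P h0 hs hr)).2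
  refine h.trans ?_
  rw [← hp.hl]
  have h5 : ((N:ℝ) ^ γ / (16 * L)) ^ θ ≤ (G.degree v : ℝ) ^ θ := by gcongr
  calc _ ≤ 158 * (110 * KK β l L ^ 4 * WW β l L θ) * N ^ 2 / ((N:ℝ) ^ γ / (16 * L)) ^ θ *
        (2 * l + 1) := by gcongr
    _ = _ := by
        rw [Real.div_rpow hNg.le (by positivity), ← Real.rpow_mul hN.le, Real.rpow_sub hN]
        have : 0 < (N:ℝ) ^ (γ * θ) := by positivity
        have : 0 < (16 * L) ^ θ := by positivity
        rw [Real.rpow_two]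
        field_simp
        ring

lemma Par.M1 (hp : Par β γ N l L) (θ : ℝ) (hθ : θ ≤ 1 / γ) (x : Fin N) :
    1 ≤ (N:ℝ) * (((x : ℕ) : ℝ) + 1)⁻¹ ∧
      (0 < θ → hh γ x ^ θ ≤ (N:ℝ) * (((x : ℕ) : ℝ) + 1)⁻¹) := by
  have hN := hp.Npos
  have h1 : (1:ℝ) ≤ (N : ℝ) / ((x : ℕ) + 1 : ℝ) := by
    rw [le_div_iff₀ (by positivity), one_mul]
    exact_mod_cast x.2
  have hg : 0 < γ := by linarith [hp.g1]
  rw [← div_eq_mul_inv]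
  refine ⟨h1, fun _ => ?_⟩
  unfold hh
  rw [← Real.rpow_mul (by linarith)]
  calc _ ≤ ((N : ℝ) / ((x : ℕ) + 1 : ℝ)) ^ (1:ℝ) := by
        refine Real.rpow_le_rpow_of_exponent_le h1 ?_
        rw [le_div_iff₀ hg] at hθ
        linarith
    _ = _ := Real.rpow_one _

lemma Par.M2 (hp : Par β γ N l L) (θ : ℝ) (hθ : 1 / γ < θ) (x : Fin N) :
    1 ≤ (N:ℝ) ^ (γ * θ) * (((x : ℕ) : ℝ) + 1)⁻¹ ∧
      (0 < θ → hh γ x ^ θ ≤ (N:ℝ) ^ (γ * θ) * (((x : ℕ) : ℝ) + 1)⁻¹) := by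
  have hN := hp.N32
  have h1 : (1:ℝ) ≤ (N : ℝ) / ((x : ℕ) + 1 : ℝ) := by
    rw [le_div_iff₀ (by positivity), one_mul]
    exact_mod_cast x.2
  have hg : 0 < γ := by linarith [hp.g1]
  have hgt : 1 ≤ γ * θ := by
    rw [div_lt_iff₀ hg] at hθ
    linarith
  have hx1 : (1:ℝ) ≤ (x : ℕ) + 1 := by
    have : (0:ℝ) ≤ (x : ℕ) := by positivity
    linarith
  constructor
  · refine h1.trans ?_
    rw [← div_eq_mul_inv]
    gcongr
    calc (N:ℝ) = (N:ℝ) ^ (1:ℝ) := (Real.rpow_one _).symm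
      _ ≤ _ := Real.rpow_le_rpow_of_exponent_le (by linarith) hgt
  · intro _
    unfold hh
    rw [← Real.rpow_mul (by linarith), Real.div_rpow (by linarith) (by linarith), div_eq_mul_inv]
    gcongr
    calc ((x : ℕ) + 1 : ℝ) = ((x : ℕ) + 1 : ℝ) ^ (1:ℝ) := (Real.rpow_one _).symm
      _ ≤ _ := Real.rpow_le_rpow_of_exponent_le hx1 hgt

end SNR2

section Asymp

/-- eventually positive and polylogarithmic (as a function of `log N`) -/
def PL (f : ℝ → ℝ) : Prop := ∃ C : ℝ, ∀ᶠ l in atTop, 0 < f l ∧ f l ≤ l ^ C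

lemma PL.const (c : ℝ) (hc : 0 < c) : PL fun _ => c := by
  refine ⟨1, ?_⟩
  filter_upwards [eventually_ge_atTop c] with l hl
  rw [Real.rpow_one]
  exact ⟨hc, hl⟩

lemma PL.pow_id (κ : ℝ) : PL fun l => l ^ κ := by
  refine ⟨κ, ?_⟩
  filter_upwards [eventually_gt_atTop 0] with l hl
  exact ⟨by positivity, le_rfl⟩

lemma PL.id : PL fun l => l := by
  have := PL.pow_id 1
  simpa only [Real.rpow_one] using this

lemma PL.mul {f g : ℝ → ℝ} (hf : PL f) (hg : PL g) : PL fun l => f l * g l := by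
  obtain ⟨C, hC⟩ := hf
  obtain ⟨D, hD⟩ := hg
  refine ⟨C + D, ?_⟩
  filter_upwards [hC, hD, eventually_gt_atTop 0] with l h1 h2 hl
  refine ⟨mul_pos h1.1 h2.1, ?_⟩
  rw [Real.rpow_add hl]
  exact mul_le_mul h1.2 h2.2 h2.1.le (by positivity)

lemma PL.add {f g : ℝ → ℝ} (hf : PL f) (hg : PL g) : PL fun l => f l + g l := by
  obtain ⟨C, hC⟩ := hf
  obtain ⟨D, hD⟩ := hg
  refine ⟨max C D + 1, ?_⟩
  filter_upwards [hC, hD, eventually_ge_atTop 2] with l h1 h2 hl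
  refine ⟨add_pos h1.1 h2.1, ?_⟩
  rw [Real.rpow_add_one (by positivity)]
  have h3 : l ^ C ≤ l ^ max C D :=
    Real.rpow_le_rpow_of_exponent_le (by linarith) (le_max_left _ _)
  have h4 : l ^ D ≤ l ^ max C D :=
    Real.rpow_le_rpow_of_exponent_le (by linarith) (le_max_right _ _)
  have h5 : 0 ≤ l ^ max C D := by positivity
  nlinarith

lemma PL.rpow {f : ℝ → ℝ} (hf : PL f) (s : ℝ) (hs : 0 ≤ s) : PL fun l => f l ^ s := by
  obtain ⟨C, hC⟩ := hf
  refine ⟨C * s, ?_⟩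
  filter_upwards [hC, eventually_gt_atTop 0] with l h1 hl
  refine ⟨Real.rpow_pos_of_pos h1.1 _, ?_⟩
  rw [Real.rpow_mul hl.le]
  exact Real.rpow_le_rpow h1.1.le h1.2 hs

lemma PL.npow {f : ℝ → ℝ} (hf : PL f) (n : ℕ) : PL fun l => f l ^ n := by
  have := hf.rpow n (by positivity)
  simpa only [Real.rpow_natCast] using this

lemma PL.DD (β : ℝ) (hβ : 2 ≤ β) : PL fun l => DD β l :=
  (PL.const (4 * β + 2) (by linarith)).mul PL.id

lemma PL.KK (β κ : ℝ) (hβ : 2 ≤ β) : PL fun l => KK β l (l ^ κ) :=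
  ((((PL.const 19 (by norm_num)).mul (PL.DD β hβ)).mul ((PL.pow_id κ).npow 2)).mul PL.id).npow 2

lemma PL.WW (β κ θ : ℝ) (hβ : 2 ≤ β) : PL fun l => WW β l (l ^ κ) θ :=
  (PL.const 2 (by norm_num)).mul ((PL.KK β κ hβ).rpow _ (abs_nonneg _))

lemma par_eventually (β γ : ℝ) (hγ : γ ∈ Set.Ioo (1 / 2 : ℝ) 1) (hβ : 2 ≤ β) :
    ∀ᶠ N : ℕ in atTop, Par β γ N (Real.log N) (Real.log N ^ (2 / (2 * γ - 1))) := by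
  have hg : 0 < 2 * γ - 1 := by linarith [hγ.1]
  set κ := 2 / (2 * γ - 1) with hκ
  have hκ0 : 0 < κ := by positivity
  have hlog : Tendsto (fun N : ℕ => Real.log N) atTop atTop :=
    Real.tendsto_log_atTop.comp tendsto_natCast_atTop_atTop
  have o1 := ((isLittleO_log_rpow_rpow_atTop (κ * 2) (show (0:ℝ) < 1 by norm_num)).bound
    (show (0:ℝ) < 1 / 32 by norm_num))
  have o2 := ((isLittleO_log_rpow_rpow_atTop (κ * γ) (show (0:ℝ) < 1 - γ by linarith [hγ.2])).bound
    (show (0:ℝ) < 1 / (β * 2 ^ γ) by positivity))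
  have o1' := tendsto_natCast_atTop_atTop.eventually o1
  have o2' := tendsto_natCast_atTop_atTop.eventually o2
  filter_upwards [o1', o2', hlog.eventually_ge_atTop 40, eventually_gt_atTop 0]
    with N h1 h2 h40 hN
  have hN' : (0:ℝ) < N := by exact_mod_cast hN
  have hl0 : (0:ℝ) < Real.log N := by linarith
  rw [Real.norm_of_nonneg (by positivity), Real.norm_of_nonneg (by positivity)] at h1 h2
  refine ⟨hγ.1, hγ.2, hβ, rfl, h40, Real.one_le_rpow (by linarith) hκ0.le, ?_, ?_, ?_⟩
  · rw [← Real.rpow_mul hl0.le, hκ, div_mul_cancel₀ _ hg.ne', Real.rpow_two]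
  · rw [← Real.rpow_natCast, ← Real.rpow_mul hl0.le]
    rw [Real.rpow_one] at h1
    push_cast
    linarith
  · rw [Real.mul_rpow (by norm_num) (by positivity), ← Real.rpow_mul hl0.le]
    have h3 : (N:ℝ) ^ (γ - 1) * (N:ℝ) ^ (1 - γ) = 1 := by
      rw [← Real.rpow_add hN']; simp
    have h4 : 0 < (N:ℝ) ^ (γ - 1) := by positivity
    have h5 : (0:ℝ) < β * 2 ^ γ := by positivity
    calc β * (N:ℝ) ^ (γ - 1) * (2 ^ γ * Real.log N ^ (κ * γ))
        ≤ β * (N:ℝ) ^ (γ - 1) * (2 ^ γ * (1 / (β * 2 ^ γ) * (N:ℝ) ^ (1 - γ))) := by gcongr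
      _ = ((N:ℝ) ^ (γ - 1) * (N:ℝ) ^ (1 - γ)) * ((β * 2 ^ γ) * (1 / (β * 2 ^ γ))) := by ring
      _ = 1 := by rw [h3, mul_one_div_cancel h5.ne']; norm_num
      _ ≤ 1 := le_rfl

lemma finish (γ u β θ e : ℝ) (hγ : γ ∈ Set.Ioo (1 / 2 : ℝ) 1) (hβ : 2 ≤ β)
    (R U : ℝ → ℝ) (hR : PL R) (hU : PL U)
    (key : ∀ (N : ℕ) (l : ℝ), Par β γ N l (l ^ (2 / (2 * γ - 1))) →
      ∀ G : SimpleGraph (Fin N), SEv β γ l (l ^ (2 / (2 * γ - 1))) G →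
        (N:ℝ) ^ e * (R l)⁻¹ ≤ expectedConsensusTime G θ u ∧
          expectedConsensusTime G θ u ≤ (N:ℝ) ^ e * U l) :
    ∃ C > (0 : ℝ),
        Tendsto
          (fun N : ℕ =>
            snrProb β γ N (fun G =>
              (N : ℝ) ^ e * Real.log N ^ (-C) ≤ expectedConsensusTime G θ u ∧
                expectedConsensusTime G θ u ≤ (N : ℝ) ^ e * Real.log N ^ C))
          atTop (nhds 1) := by
  obtain ⟨C1, h1⟩ := hR
  obtain ⟨C2, h2⟩ := hU
  have hlog : Tendsto (fun N : ℕ => Real.log N) atTop atTop :=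
    Real.tendsto_log_atTop.comp tendsto_natCast_atTop_atTop
  refine ⟨max 1 (max C1 C2), lt_of_lt_of_le one_pos (le_max_left _ _), ?_⟩
  set C := max 1 (max C1 C2) with hC
  have hC1 : C1 ≤ C := (le_max_left _ _).trans (le_max_right _ _)
  have hC2 : C2 ≤ C := (le_max_right _ _).trans (le_max_right _ _)
  have hn0 : ∀ (N i j : ℕ), 1 ≤ i → 1 ≤ j → 0 ≤ snrEdgeProb β γ N i j :=
    fun N i j _ _ => snr_nonneg (by linarith) i j
  have hlim : Tendsto (fun N : ℕ => 1 - 5 / (N:ℝ)) atTop (nhds 1) := by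
    have := (tendsto_const_div_atTop_nhds_zero_nat (5:ℝ)).const_sub 1
    simpa using this
  refine tendsto_of_tendsto_of_tendsto_of_le_of_le' hlim tendsto_const_nhds ?_ ?_
  · filter_upwards [par_eventually β γ hγ hβ, hlog.eventually h1, hlog.eventually h2,
      hlog.eventually_ge_atTop 1] with N hp hr hu hl
    refine hp.ev.trans ?_
    refine graphProb_mono (hn0 N) snr_le_one _ _ fun G hG => ?_
    obtain ⟨k1, k2⟩ := key N _ hp G hG
    have hN := hp.Npos
    constructor
    · refine le_trans ?_ k1
      rw [Real.rpow_neg (by linarith)]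
      have h3 : R (Real.log N) ≤ Real.log N ^ C :=
        hr.2.trans (Real.rpow_le_rpow_of_exponent_le hl hC1)
      have h4 := hr.1
      gcongr
    · refine k2.trans ?_
      have h3 : U (Real.log N) ≤ Real.log N ^ C :=
        hu.2.trans (Real.rpow_le_rpow_of_exponent_le hl hC2)
      gcongr
  · exact Eventually.of_forall fun N => graphProb_le_one (hn0 N) snr_le_one _

end Asymp

/-- For `γ ∈ (1/2,1)`, `u ∈ (0,1)`, `β ≥ 2`, the discursive voter model with
temperature `θ` on the Simplified Norros–Reittu graph `G_N`, started from `μ_u`, satisfies: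
(i) for `θ ∈ (−∞, 1/γ]`, `E^θ_{μ_u}(τ_cons | G_N) = Θ_P^{log N}(N)`;
(ii) for `θ ∈ (1/γ, 2]`, `E^θ_{μ_u}(τ_cons | G_N) = Θ_P^{log N}(N^{2−γθ})`. -/
theorem discursive_consensus_ultrasmall_world
    (γ u β θ : ℝ) (hγ : γ ∈ Set.Ioo (1 / 2 : ℝ) 1) (hu : u ∈ Set.Ioo (0 : ℝ) 1)
    (hβ : 2 ≤ β) :
    (θ ≤ 1 / γ →
      ∃ C > (0 : ℝ),
        Tendsto
          (fun N : ℕ =>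
            snrProb β γ N (fun G =>
              (N : ℝ) * Real.log N ^ (-C) ≤ expectedConsensusTime G θ u ∧
                expectedConsensusTime G θ u ≤ (N : ℝ) * Real.log N ^ C))
          atTop (nhds 1)) ∧
    (1 / γ < θ → θ ≤ 2 →
      ∃ C > (0 : ℝ),
        Tendsto
          (fun N : ℕ =>
            snrProb β γ N (fun G =>
              (N : ℝ) ^ (2 - γ * θ) * Real.log N ^ (-C) ≤ expectedConsensusTime G θ u ∧
                expectedConsensusTime G θ u ≤ (N : ℝ) ^ (2 - γ * θ) * Real.log N ^ C))
          atTop (nhds 1)) := by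
  set κ := 2 / (2 * γ - 1) with hκ
  have hu1 : 0 < u * (1 - u) := mul_pos hu.1 (by linarith [hu.2])
  have hg0 : 0 < γ := by linarith [hγ.1]
  have hR : PL fun l => 128 * ((u * (1 - u)) ^ 2)⁻¹ * (l ^ κ) ^ 2 * DD β l ^ |θ| * (1 + l) :=
    ((((PL.const 128 (by norm_num)).mul (PL.const (((u * (1 - u)) ^ 2)⁻¹) (by positivity))).mul
      ((PL.pow_id κ).npow 2)).mul ((PL.DD β hβ).rpow _ (abs_nonneg _))).mul
      ((PL.const 1 (by norm_num)).add PL.id)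
  have hlin : PL fun l => 2 * l + 1 :=
    ((PL.const 2 (by norm_num)).mul PL.id).add (PL.const 1 (by norm_num))
  constructor
  · intro hθ
    have h := finish γ u β θ 1 hγ hβ _
      (fun l => 440 * KK β l (l ^ κ) ^ 4 * WW β l (l ^ κ) θ * (2 * l + 1)) hR
      ((((PL.const 440 (by norm_num)).mul ((PL.KK β κ hβ).npow 4)).mul (PL.WW β κ θ hβ)).mul hlin)
      ?_
    · simpa only [Real.rpow_one] using h
    · intro N l hp G hG
      have hN := hp.Npos
      obtain ⟨h1, h2⟩ := hp.upper1 hG θ u hu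
      rw [Real.rpow_one]
      refine ⟨?_, h2⟩
      have h3 := hp.lower hG θ u N hu h1 hN (hp.M1 θ hθ)
      have e : (N:ℝ) ^ 2 / N = N := by field_simp
      rwa [e] at h3
  · intro hθ hθ2
    have hθ0 : 0 ≤ θ := le_trans (by positivity) hθ.le
    refine finish γ u β θ (2 - γ * θ) hγ hβ _
      (fun l => 17380 * (16 * l ^ κ) ^ θ * KK β l (l ^ κ) ^ 4 * WW β l (l ^ κ) θ * (2 * l + 1)) hR
      (((((PL.const 17380 (by norm_num)).mul
        (((PL.const 16 (by norm_num)).mul (PL.pow_id κ)).rpow θ hθ0)).mul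
        ((PL.KK β κ hβ).npow 4)).mul (PL.WW β κ θ hβ)).mul hlin) ?_
    intro N l hp G hG
    have hN := hp.Npos
    obtain ⟨h1, _⟩ := hp.upper1 hG θ u hu
    refine ⟨?_, hp.upper2 hG θ u hu hθ0 hθ2⟩
    have h3 := hp.lower hG θ u ((N:ℝ) ^ (γ * θ)) hu h1 (by positivity) (hp.M2 θ hθ)
    have e : (N:ℝ) ^ 2 / (N:ℝ) ^ (γ * θ) = (N:ℝ) ^ (2 - γ * θ) := by
      rw [Real.rpow_sub hN, Real.rpow_two]
    rwa [e] at h3
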